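/- Let K be a field, A, B nonnegative integers, Λ ⊆ {0,...,A} × {0,...,B} a ladder with associated (two-sided) ladder region L, and M = [u_1,...,u_n | v_1,...,v_n] a bivector of positive integers with u_1 < ... < u_n ≤ A+1 and v_1 < ... < v_n ≤ B+1. Set A^{(i)} = (0, u_{n−i+1} − 1) and E^{(i)} = (B − v_{n−i+1} + 1, A), i = 1, ..., n, assume all points A^{(i)} and E^{(i)} lie in L, and assume that there exists at least one family (P_1, ..., P_n) of non-intersecting lattice paths with P_i running from A^{(i)} to E^{(i)} and entirely contained in L. Let C_k = (x_k, y_k), k = 1, ..., p, be the inwards corners of the upper boundary of L, and D_k = (z_k, w_k), k = 1, ..., q, the inwards corners of the lower boundary of L. For i = 1, ..., n, let t_i be the maximum, over all lattice paths Q from A^{(i)} to E^{(i)} which stay weakly south-east of every point of {(i−j, u_{n−j+1} − 1 − i + j) : 1 ≤ j ≤ i−1} ∪ {(B − v_{n−j+1} + 1 + i − j, A − i + j) : 1 ≤ j ≤ i−1} ∪ {C_k + (i−1, −i+1) : 1 ≤ k ≤ p} and weakly north-west of every point of {D_k + (−n+i, n−i) : 1 ≤ k ≤ q}, of the number of NE-turns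 of Q not equal to any point D_k + (−n+i, n−i). Then there is a polynomial H ∈ ℤ[z] with H(1) ≠ 0 such that (Σ_{ℓ≥0} dim_K R_M(Y)_ℓ · z^ℓ) · (1 − z)^d = H, where d = (A + B + 3)n − Σ_{i=1}^n (u_i + v_i), and deg(H) − d = Σ_{i=1}^n (t_i + u_i + v_i) − (A + B + 3)n; that is, the a-invariant of R_M(Y) equals Σ_{i=1}^n (t_i + u_i + v_i) − (A + B + 3)n. -/

import Mathlib

/-!
# The a-invariant of two-sided ladder determinantal rings

Standard monomials. Call a monomial standard if its support contains no main diagonal of a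
generating minor. Modulo the ideal, the standard monomials form a basis of the ring. They span by
straightening: replacing a main diagonal by the other terms of its minor lowers a weight, by the
rearrangement inequality (`spanning`). For independence it suffices to treat the full matrix, since
a standard monomial of the ladder is standard there. The generic matrix is mapped to a product of
two generic matrices with prescribed zeros, which kills the ideal (`Phi_ideal`). The growth diagram
of the exponent matrix under the local rule of the Burge correspondence assigns to each standard
monomial a pair of tableaux, hence a product of minors of the same degree (`exists_bitableau`).
The growth diagram is determined by its boundary (`G_inj`), so the images of these products have
distinct leading monomials. They are as numerous as the standard monomials, whose images span a
space containing them, and independence follows (`indep_univ`, `quotDim_eq`).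

Hilbert series. Consequently the Hilbert series is that of a simplicial complex (`hilbert_faces`).
Its faces are partitioned into intervals, one for each family of non-intersecting lattice paths in
the region: the interval consists of the sets between the NE-turns of the family, without those at
shifted lower corners, and the set of all its points. The family of a face is found by light and
shadow, taking the outermost path first (`canon_spec`, `canon_unique`). All families have the same
number `d` of points, so the series times `(1 - z) ^ d` is the sum of `z` to the number of counted
turns over all families (`sum_faces`). As its coefficients are nonnegative, its value at `1` is not
zero, and its degree is the maximal total number of counted turns.

Maximal turns. Each path of a family satisfies the conditions in the definition of the maxima `t`,
so the degree is at most their sum (`allturns_le`). Conversely the maxima are attained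
simultaneously (`exists_max`): beginning with the outermost path, a maximal chain of turns for the
next path can be modified, without losing turns, so that its path does not meet the one already
chosen (`exchange`).

A path is encoded by the function that maps the value `s` of `x + y` to the abscissa of its point on
that antidiagonal. Paths are numbered from the south-east, so that the path `j` corresponds to the
index `n - j + 1` of the theorem.
-/

/-- A lattice path from `A` to `B`: a list of points of `ℤ × ℤ` whose consecutive
differences are the unit steps `(1,0)` or `(0,1)`, starting at `A` and ending at `B`. -/
def IsLatticePathFrom (P : List (ℤ × ℤ)) (A B : ℤ × ℤ) : Prop :=
  P.Chain' (fun p q => q = (p.1 + 1, p.2) ∨ q = (p.1, p.2 + 1)) ∧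
    P.head? = some A ∧ P.getLast? = some B

/-- The list of NE-turns of a lattice path: the points of the path that are the end
point of a vertical step and at the same time the starting point of a horizontal step. -/
def NETurns : List (ℤ × ℤ) → List (ℤ × ℤ)
  | p :: q :: r :: rest =>
      (if q = (p.1, p.2 + 1) ∧ r = (q.1 + 1, q.2) then [q] else []) ++ NETurns (q :: r :: rest)
  | _ => []

/-- `(x,y)` lies weakly south-east of `S` if `x ≥ S.1` or `y ≤ S.2`. -/
def WeaklySE (p S : ℤ × ℤ) : Prop := S.1 ≤ p.1 ∨ p.2 ≤ S.2

/-- `(x,y)` lies weakly north-west of `T` if `x ≤ T.1` or `y ≥ T.2`. -/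
def WeaklyNW (p T : ℤ × ℤ) : Prop := p.1 ≤ T.1 ∨ T.2 ≤ p.2

/-- A path stays weakly south-east of `S` if every point on it does. -/
def StaysSE (P : List (ℤ × ℤ)) (S : ℤ × ℤ) : Prop := ∀ p ∈ P, WeaklySE p S

/-- A path stays weakly north-west of `T` if every point on it does. -/
def StaysNW (P : List (ℤ × ℤ)) (T : ℤ × ℤ) : Prop := ∀ p ∈ P, WeaklyNW p T

/-- A family of lattice paths is non-intersecting if no two of its members share a point. -/
def NonIntersecting {n : ℕ} (F : Fin n → List (ℤ × ℤ)) : Prop :=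
  ∀ i j, i ≠ j → ∀ p, p ∈ F i → p ∉ F j

/-- `Λ` is a ladder: together with any two positions `(i,j) ≤ (i',j')` it contains the
whole interval between them. -/
def IsLadder {A B : ℕ} (Λ : Set (Fin (A + 1) × Fin (B + 1))) : Prop :=
  ∀ p ∈ Λ, ∀ p' ∈ Λ, p.1 ≤ p'.1 → p.2 ≤ p'.2 →
    ∀ (s : Fin (A + 1)) (t : Fin (B + 1)),
      p.1 ≤ s → s ≤ p'.1 → p.2 ≤ t → t ≤ p'.2 → (s, t) ∈ Λ

/-- The ladder region associated with a ladder `Λ`: the set of points `(j, A−i)` for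
`(i,j) ∈ Λ`. -/
def ladderRegion {A B : ℕ} (Λ : Set (Fin (A + 1) × Fin (B + 1))) : Set (ℤ × ℤ) :=
  {p | ∃ q ∈ Λ, p = (((q.2 : ℕ) : ℤ), (A : ℤ) - ((q.1 : ℕ) : ℤ))}

open Classical in
/-- The matrix `Y` associated with a ladder `Λ`: the entry at a position of `Λ` is the
corresponding variable of the polynomial ring `K[Y]`, all other entries are `0`. -/
noncomputable def ladderMatrix (K : Type*) [Field K] {A B : ℕ}
    (Λ : Set (Fin (A + 1) × Fin (B + 1))) :
    Matrix (Fin (A + 1)) (Fin (B + 1)) (MvPolynomial {q // q ∈ Λ} K) :=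
  fun i j => if h : (i, j) ∈ Λ then MvPolynomial.X ⟨(i, j), h⟩ else 0

/-- The ladder determinantal ideal cogenerated by the bivector
`M = [u 1,...,u n | v 1,...,v n]` (with the conventions `u (n+1) = A+2`, `v (n+1) = B+2`
imposed as hypotheses in the theorems): it is generated, for `1 ≤ t ≤ n+1`, by the `t×t`
minors of `Y` all of whose positions lie in `Λ` and whose rows all lie among the last
`u t − 1` rows, or whose columns all lie among the last `v t − 1` columns. -/
noncomputable def ladderIdeal (K : Type*) [Field K] {A B : ℕ}
    (Λ : Set (Fin (A + 1) × Fin (B + 1))) (n : ℕ) (u v : ℕ → ℕ) :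
    Ideal (MvPolynomial {q // q ∈ Λ} K) :=
  Ideal.span {f | ∃ t : ℕ, 1 ≤ t ∧ t ≤ n + 1 ∧
    ∃ (r : Fin t → Fin (A + 1)) (c : Fin t → Fin (B + 1)),
      StrictMono r ∧ StrictMono c ∧ (∀ k l, (r k, c l) ∈ Λ) ∧
      ((∀ k, A + 2 ≤ (r k : ℕ) + u t) ∨ (∀ l, B + 2 ≤ (c l : ℕ) + v t)) ∧
      f = (((ladderMatrix K Λ).submatrix r c).det)}

/-- The dimension of the degree-`ℓ` homogeneous component of the quotient of a polynomial
ring by a (homogeneous) ideal `I`: the image of the space of homogeneous polynomials of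
degree `ℓ` in the quotient. -/
noncomputable def quotDim (K : Type*) [Field K] {σ : Type*}
    (I : Ideal (MvPolynomial σ K)) (ℓ : ℕ) : ℕ :=
  Module.finrank K
    (Submodule.map (Ideal.Quotient.mkₐ K I).toLinearMap
      (MvPolynomial.homogeneousSubmodule σ K ℓ))

/-- The Hilbert series `Σ_ℓ dim_K (R_M(Y))_ℓ zˡ`, as a power series over `ℤ`. -/
noncomputable def hilbertSeries (K : Type*) [Field K] {σ : Type*}
    (I : Ideal (MvPolynomial σ K)) : PowerSeries ℤ :=
  PowerSeries.mk fun ℓ => (quotDim K I ℓ : ℤ)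

/-- The recursively defined regions `L⁽ⁱ⁾` of Theorem 5, counted downwards from
`L⁽ⁿ⁺¹⁾ = L`; `Lseq L E1 A2 j` is `L⁽ⁿ⁺¹⁻ʲ⁾`, where `E1 j` resp. `A2 j` are the first
coordinate of `E⁽ⁿ⁻ʲ⁾` resp. the second coordinate of `A⁽ⁿ⁻ʲ⁾`. -/
def Lseq (L : Set (ℤ × ℤ)) (E1 A2 : ℕ → ℤ) : ℕ → Set (ℤ × ℤ)
  | 0 => L
  | j + 1 => {P ∈ Lseq L E1 A2 j |
      P.1 ≤ E1 j ∧ A2 j ≤ P.2 ∧ (P.1 + 1, P.2 - 1) ∈ Lseq L E1 A2 j}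

/-! ### Paths and regions -/

namespace LadderCor

/-- `SEs p q`: the point `q` lies strictly south-east of `p`. -/
def SEs (p q : ℤ × ℤ) : Prop := p.1 < q.1 ∧ q.2 < p.2

/-- The first coordinate at which the boundary of the south-east quadrant of `g` meets the
antidiagonal `x + y = s`. -/
def phi (g : ℤ × ℤ) (s : ℤ) : ℤ := max g.1 (s - g.2)

/-- A lattice path from `(0, c)` to `(b, A)`, encoded by the function sending `s` to the first
coordinate of its point on the antidiagonal `x + y = s`. Outside `[c, b + A]` the path is
prolonged vertically downwards and horizontally to the right. -/
structure IsPath (A c b : ℤ) (f : ℤ → ℤ) : Prop where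
  mono : ∀ s, f s ≤ f (s + 1)
  lip : ∀ s, f (s + 1) ≤ f s + 1
  left : ∀ s, s ≤ c → f s = 0
  right : ∀ s, b + A ≤ s → f s = s - A

theorem IsPath.mono_lip {A c b : ℤ} {f : ℤ → ℤ} (h : IsPath A c b f) {s t : ℤ} (hst : s ≤ t) :
    f s ≤ f t ∧ f t ≤ f s + (t - s) := by
  induction t, hst using Int.le_induction with
  | base => simp
  | succ t _ ih => have := h.mono t; have := h.lip t; omega

theorem IsPath.le_phi {A c b : ℤ} {f : ℤ → ℤ} (h : IsPath A c b f) {g : ℤ × ℤ}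
    (hg : f (g.1 + g.2) ≤ g.1) (s : ℤ) : f s ≤ phi g s := by
  unfold phi
  rcases le_total s (g.1 + g.2) with hs | hs
  · have := h.mono_lip hs; omega
  · have := h.mono_lip hs; omega

theorem IsPath.nonneg {A c b : ℤ} {f : ℤ → ℤ} (h : IsPath A c b f) (s : ℤ) : 0 ≤ f s := by
  rcases le_total s c with hs | hs
  · rw [h.left s hs]
  · have := h.mono_lip hs; rw [h.left c le_rfl] at this; omega

theorem IsPath.le_right {A c b : ℤ} {f : ℤ → ℤ} (h : IsPath A c b f) (s : ℤ) : s - A ≤ f s := by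
  rcases le_total s (b + A) with hs | hs
  · have := h.mono_lip hs; rw [h.right _ le_rfl] at this; omega
  · rw [h.right s hs]

theorem IsPath.le_b {A c b : ℤ} {f : ℤ → ℤ} (h : IsPath A c b f) {s : ℤ} (hs : s ≤ b + A) :
    f s ≤ b := by
  have := h.mono_lip hs; rw [h.right _ le_rfl] at this; omega

theorem IsPath.le_c {A c b : ℤ} {f : ℤ → ℤ} (h : IsPath A c b f) {s : ℤ} (hs : c ≤ s) :
    f s ≤ s - c := by
  have := h.mono_lip hs; rw [h.left _ le_rfl] at this; omega

/-- The lowest (most south-eastern) path from `(0, c)` to `(b, A)` which stays weakly north-west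
of all points of `G`. -/
noncomputable def lowest (A c b : ℤ) (G : Finset (ℤ × ℤ)) (s : ℤ) : ℤ :=
  max (max 0 (s - A)) ((insert (0, c) (insert (b, A) G)).inf' (by simp) (fun g => phi g s))

theorem lowest_isPath {A c b : ℤ} (hc : c ≤ A) (hb : 0 ≤ b) (G : Finset (ℤ × ℤ)) :
    IsPath A c b (lowest A c b G) := by
  constructor
  · intro s
    unfold lowest
    refine max_le_max (max_le_max le_rfl (by omega)) ?_
    refine Finset.le_inf' _ _ fun g hg => (Finset.inf'_le _ hg).trans ?_
    unfold phi; omega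
  · intro s
    unfold lowest
    obtain ⟨g, hg, he⟩ := Finset.exists_mem_eq_inf' (s := insert (0, c) (insert (b, A) G))
      (by simp) (fun g => phi g s)
    have h1 : (insert (0, c) (insert (b, A) G)).inf' (by simp) (fun g => phi g (s + 1)) ≤
      phi g (s + 1) := Finset.inf'_le _ hg
    rw [he]
    unfold phi at *
    omega
  · intro s hs
    unfold lowest
    have h1 : (insert (0, c) (insert (b, A) G)).inf' (by simp) (fun g => phi g s) ≤
      phi (0, c) s := Finset.inf'_le _ (by simp)
    unfold phi at *
    simp only at h1
    omega
  · intro s hs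
    unfold lowest
    have h1 : (insert (0, c) (insert (b, A) G)).inf' (by simp) (fun g => phi g s) ≤
      phi (b, A) s := Finset.inf'_le _ (by simp)
    unfold phi at *
    simp only at h1
    omega

theorem lowest_le {A c b : ℤ} {G : Finset (ℤ × ℤ)} {g : ℤ × ℤ} (hg : g ∈ G) {s : ℤ}
    (h : max 0 (s - A) ≤ phi g s) : lowest A c b G s ≤ phi g s := by
  unfold lowest
  exact max_le h (Finset.inf'_le _ (by simp [hg]))

/-- The bound that defines the lowest path is attained at one of the end points or generators. -/
theorem exists_phi_le_lowest {A c b : ℤ} (G : Finset (ℤ × ℤ)) (s : ℤ) :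
    ∃ g, (g = (0, c) ∨ g = (b, A) ∨ g ∈ G) ∧ phi g s ≤ lowest A c b G s := by
  unfold lowest
  obtain ⟨g, hg, he⟩ := Finset.exists_mem_eq_inf' (s := insert (0, c) (insert (b, A) G))
      (by simp) (fun g => phi g s)
  refine ⟨g, by simpa using hg, ?_⟩
  rw [he]; exact le_max_right _ _

/-- A finite region `L` which contains with any two points, the second weakly south-east of the
first, the rectangle spanned by them, together with prescribed starting points `(0, c j)` and end
points `(b j, A)` for `1 ≤ j ≤ n`. -/
structure Region where
  A : ℤ
  n : ℕ
  L : Finset (ℤ × ℤ)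
  c : ℕ → ℤ
  b : ℕ → ℤ
  conv : ∀ p ∈ L, ∀ q ∈ L, ∀ r : ℤ × ℤ,
    p.1 ≤ r.1 → r.1 ≤ q.1 → q.2 ≤ r.2 → r.2 ≤ p.2 → r ∈ L
  box : ∀ p ∈ L, 0 ≤ p.1 ∧ p.2 ≤ A
  c_lt : ∀ j, 1 ≤ j → j < n → c j < c (j + 1)
  b_lt : ∀ j, 1 ≤ j → j < n → b (j + 1) < b j
  c_le : ∀ j, 1 ≤ j → j ≤ n → c j ≤ A
  b_nonneg : ∀ j, 1 ≤ j → j ≤ n → 0 ≤ b j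

namespace Region
variable (S : Region)

/-- Inwards corners of the upper boundary. -/
def CU : Finset (ℤ × ℤ) := S.L.filter fun p =>
  (p.1 - 1, p.2) ∈ S.L ∧ (p.1, p.2 + 1) ∈ S.L ∧ (p.1 - 1, p.2 + 1) ∉ S.L

/-- Inwards corners of the lower boundary. -/
def DL : Finset (ℤ × ℤ) := S.L.filter fun p =>
  (p.1 + 1, p.2) ∈ S.L ∧ (p.1, p.2 - 1) ∈ S.L ∧ (p.1 + 1, p.2 - 1) ∉ S.L

/-- The lower corners, shifted as is relevant for the `j`-th path from the south-east. -/
def D (j : ℕ) : Finset (ℤ × ℤ) := S.DL.image fun d => (d.1 + 1 - j, d.2 + j - 1)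

/-- A point of `[0, ∞) × (-∞, A]` outside the region and north-west of a path in the region is
strictly north-west of some upper corner: move from it towards the path for as long as possible
without entering the region. -/
theorem upper_fill {c b : ℤ} {f : ℤ → ℤ} (hf : IsPath S.A c b f)
    (hL : ∀ s, c ≤ s → s ≤ b + S.A → (f s, s - f s) ∈ S.L) (p : ℤ × ℤ)
    (h1 : 0 ≤ p.1) (h2 : p.2 ≤ S.A) (h3 : p.1 < f (p.1 + p.2)) (hp : p ∉ S.L) :
    ∃ C ∈ S.CU, p.1 < C.1 ∧ C.2 < p.2 := by
  obtain ⟨N, hN⟩ : ∃ N : ℕ, b - p.1 + p.2 - c ≤ N := ⟨(b - p.1 + p.2 - c).toNat, by omega⟩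
  induction N using Nat.strong_induction_on generalizing p with
  | _ N ih =>
  obtain ⟨x, y⟩ := p
  simp only at *
  have hs1 : c < x + y := by
    by_contra h; have := hf.left (x + y) (by omega); omega
  have hs2 : x + y < b + S.A := by
    by_contra h; have := hf.right (x + y) (by omega); omega
  have e1 := hf.mono (x + y)
  have e2 := hf.lip (x + y - 1)
  have e3 := hf.le_b hs2.le
  have e4 := hf.le_c hs1.le
  have e5 := hf.nonneg (x + y - 1)
  simp only [sub_add_cancel] at e2
  by_cases hr : (x + 1, y) ∈ S.L
  · by_cases hd : (x, y - 1) ∈ S.L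
    · refine ⟨(x + 1, y - 1), ?_, by simp, by simp⟩
      have hm := hL (x + y) hs1.le hs2.le
      simp only [CU, Finset.mem_filter, add_sub_cancel_right, sub_add_cancel]
      exact ⟨S.conv _ hr _ hm _ (by simp) (by simp; omega) (by simp; omega) (by simp), hd, hr, hp⟩
    · have hlt : x < f (x + y - 1) := by
        rcases lt_or_ge x (f (x + y - 1)) with h | h
        · exact h
        · exfalso
          have hx : f (x + y - 1) = x := by omega
          have := hL (x + y - 1) (by omega) (by omega)
          rw [hx] at this
          apply hd; convert this using 2; ring
      obtain ⟨C, hC, h4, h5⟩ := ih (N - 1) (by omega) (x, y - 1) h1 (by simp; omega)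
        (by simpa [add_sub_assoc] using hlt) hd (by simp; omega)
      exact ⟨C, hC, h4, by simp at h5; omega⟩
  · have hlt : x + 1 < f (x + y + 1) := by
      rcases lt_or_ge (x + 1) (f (x + y + 1)) with h | h
      · exact h
      · exfalso
        have hx : f (x + y + 1) = x + 1 := by omega
        have := hL (x + y + 1) (by omega) (by omega)
        rw [hx] at this
        apply hr; convert this using 2; ring
    obtain ⟨C, hC, h4, h5⟩ := ih (N - 1) (by omega) (x + 1, y) (by simp; omega) h2
      (by simpa [add_right_comm] using hlt) hr (by simp; omega)
    exact ⟨C, hC, by simp at h4; omega, h5⟩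

/-- The mirror image of `upper_fill` at the lower boundary. -/
theorem lower_fill {c b : ℤ} {f : ℤ → ℤ} (hf : IsPath S.A c b f)
    (hL : ∀ s, c ≤ s → s ≤ b + S.A → (f s, s - f s) ∈ S.L) (p : ℤ × ℤ)
    (h1 : p.1 ≤ b) (h2 : c ≤ p.2) (h3 : f (p.1 + p.2) < p.1) (hp : p ∉ S.L) :
    ∃ C ∈ S.DL, C.1 < p.1 ∧ p.2 < C.2 := by
  obtain ⟨N, hN⟩ : ∃ N : ℕ, p.1 + S.A - p.2 ≤ N := ⟨(p.1 + S.A - p.2).toNat, by omega⟩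
  induction N using Nat.strong_induction_on generalizing p with
  | _ N ih =>
  obtain ⟨x, y⟩ := p
  simp only at *
  have e0 := hf.nonneg (x + y)
  have hs1 : c < x + y := by omega
  have hs2 : x + y < b + S.A := by
    by_contra h; have := hf.right (x + y) (by omega); omega
  have e1 := hf.mono (x + y - 1)
  have e2 := hf.lip (x + y)
  have e3 := hf.le_right (x + y)
  simp only [sub_add_cancel] at e1
  by_cases hr : (x - 1, y) ∈ S.L
  · by_cases hd : (x, y + 1) ∈ S.L
    · refine ⟨(x - 1, y + 1), ?_, by simp, by simp⟩
      have hm := hL (x + y) hs1.le hs2.le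
      simp only [DL, Finset.mem_filter, add_sub_cancel_right, sub_add_cancel]
      exact ⟨S.conv _ hm _ hd _ (by simp; omega) (by simp) (by simp) (by simp; omega), hd, hr, hp⟩
    · have hlt : f (x + y + 1) < x := by
        rcases lt_or_ge (f (x + y + 1)) x with h | h
        · exact h
        · exfalso
          have hx : f (x + y + 1) = x := by omega
          have := hL (x + y + 1) (by omega) (by omega)
          rw [hx] at this
          apply hd; convert this using 2; ring
      obtain ⟨C, hC, h4, h5⟩ := ih (N - 1) (by omega) (x, y + 1) h1 (by simp; omega)
        (by simpa [add_assoc] using hlt) hd (by simp; omega)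
      exact ⟨C, hC, h4, by simp at h5; omega⟩
  · have hlt : f (x + y - 1) < x - 1 := by
      rcases lt_or_ge (f (x + y - 1)) (x - 1) with h | h
      · exact h
      · exfalso
        have hx : f (x + y - 1) = x - 1 := by omega
        have := hL (x + y - 1) (by omega) (by omega)
        rw [hx] at this
        apply hr; convert this using 2; ring
    obtain ⟨C, hC, h4, h5⟩ := ih (N - 1) (by omega) (x - 1, y) (by simp; omega) h2
      (by simp only; rwa [show x - 1 + y = x + y - 1 by ring]) hr (by simp; omega)
    exact ⟨C, hC, by simp at h4; omega, h5⟩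

end Region
end LadderCor

/-! ### The family of paths of a face -/

namespace LadderCor
namespace Region
variable (S : Region)

/-- The points of the path encoded by `g` from the start to the end of the `j`-th path. -/
noncomputable def pts (j : ℕ) (g : ℤ → ℤ) : Finset (ℤ × ℤ) :=
  (Finset.Icc (S.c j) (S.b j + S.A)).image fun s => (g s, s - g s)

/-- The NE-turns of the `j`-th path which are not shifted lower corners. -/
noncomputable def turns (j : ℕ) (g : ℤ → ℤ) : Finset (ℤ × ℤ) :=
  ((Finset.Ioo (S.c j) (S.b j + S.A)).filter fun s =>
    g (s - 1) = g s ∧ g (s + 1) = g s + 1 ∧ (g s, s - g s) ∉ S.D j).image fun s => (g s, s - g s)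

/-- The points on the first `m` paths of a family. -/
noncomputable def allpts (m : ℕ) (f : ℕ → ℤ → ℤ) : Finset (ℤ × ℤ) :=
  (Finset.Icc 1 m).biUnion fun j => S.pts j (f j)

/-- The NE-turns counted on the first `m` paths of a family. -/
noncomputable def allturns (m : ℕ) (f : ℕ → ℤ → ℤ) : Finset (ℤ × ℤ) :=
  (Finset.Icc 1 m).biUnion fun j => S.turns j (f j)

theorem mem_pts {j : ℕ} {g : ℤ → ℤ} {p : ℤ × ℤ} : p ∈ S.pts j g ↔
    S.c j ≤ p.1 + p.2 ∧ p.1 + p.2 ≤ S.b j + S.A ∧ g (p.1 + p.2) = p.1 := by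
  unfold pts
  simp only [Finset.mem_image, Finset.mem_Icc]
  constructor
  · rintro ⟨s, ⟨h1, h2⟩, rfl⟩
    simp [h1, h2]
  · rintro ⟨h1, h2, h3⟩
    refine ⟨_, ⟨h1, h2⟩, ?_⟩
    rw [h3]; ext <;> simp

theorem mem_turns {j : ℕ} {g : ℤ → ℤ} {p : ℤ × ℤ} : p ∈ S.turns j g ↔
    S.c j < p.1 + p.2 ∧ p.1 + p.2 < S.b j + S.A ∧ g (p.1 + p.2) = p.1 ∧
    g (p.1 + p.2 - 1) = p.1 ∧ g (p.1 + p.2 + 1) = p.1 + 1 ∧ p ∉ S.D j := by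
  unfold turns
  simp only [Finset.mem_image, Finset.mem_Ioo, Finset.mem_filter]
  constructor
  · rintro ⟨s, ⟨⟨h1, h2⟩, h3, h4, h5⟩, rfl⟩
    simp [h1, h2, h3, h4, h5]
  · rintro ⟨h1, h2, h3, h4, h5, h6⟩
    have e : (g (p.1 + p.2), p.1 + p.2 - g (p.1 + p.2)) = p := by
      rw [h3]; ext <;> simp
    refine ⟨_, ⟨⟨h1, h2⟩, by rw [h3, h4], by rw [h3, h5], by rwa [e]⟩, e⟩

theorem turns_subset (j : ℕ) (g : ℤ → ℤ) : S.turns j g ⊆ S.pts j g := by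
  intro p hp
  rw [mem_turns] at hp
  rw [mem_pts]
  exact ⟨hp.1.le, hp.2.1.le, hp.2.2.1⟩

theorem mem_D {j : ℕ} {p : ℤ × ℤ} : p ∈ S.D j ↔ (p.1 + j - 1, p.2 + 1 - j) ∈ S.DL := by
  unfold D
  simp only [Finset.mem_image]
  constructor
  · rintro ⟨d, hd, rfl⟩
    simpa using hd
  · intro h
    exact ⟨_, h, by ext <;> simp⟩

theorem D_succ {j : ℕ} {p : ℤ × ℤ} : p ∈ S.D (j + 1) ↔ (p.1 + 1, p.2 - 1) ∈ S.D j := by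
  rw [mem_D, mem_D]
  push_cast
  rw [show p.1 + (j + 1 : ℤ) - 1 = p.1 + 1 + j - 1 by ring,
    show p.2 + 1 - (j + 1 : ℤ) = p.2 - 1 + 1 - j by ring]

/-- No point of the region lies strictly south-east of an inwards corner of the lower boundary. -/
theorem DL_not {d p : ℤ × ℤ} (hd : d ∈ S.DL) (hp : p ∈ S.L) : ¬ (d.1 < p.1 ∧ p.2 < d.2) := by
  rintro ⟨h1, h2⟩
  simp only [DL, Finset.mem_filter] at hd
  exact hd.2.2.2 (S.conv _ hd.1 _ hp _ (by simp) (by simp; omega) (by simp; omega) (by simp))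

/-- Monotonicity of the end points, with the growth of at least one per step. -/
theorem cb_mono {j k : ℕ} (h1 : 1 ≤ j) (h2 : j ≤ k) (h3 : k ≤ S.n) :
    S.c j + (k - j) ≤ S.c k ∧ S.b k + (k - j) ≤ S.b j := by
  induction k, h2 using Nat.le_induction with
  | base => simp
  | succ k hk ih =>
    have := ih (by omega)
    have := S.c_lt k (by omega) (by omega)
    have := S.b_lt k (by omega) (by omega)
    push_cast; omega

/-- A family of `m` non-intersecting paths in the region, numbered from the south-east. -/
structure Fam (m : ℕ) (f : ℕ → ℤ → ℤ) : Prop where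
  path : ∀ j, 1 ≤ j → j ≤ m → IsPath S.A (S.c j) (S.b j) (f j)
  mem : ∀ j, 1 ≤ j → j ≤ m → ∀ s, S.c j ≤ s → s ≤ S.b j + S.A → (f j s, s - f j s) ∈ S.L
  lt : ∀ j, 1 ≤ j → j < m → ∀ s, S.c (j + 1) ≤ s → s ≤ S.b (j + 1) + S.A →
    f (j + 1) s < f j s
  zero : ∀ j, ¬ (1 ≤ j ∧ j ≤ m) → f j = 0

variable {S}

theorem Fam.anti {m : ℕ} {f : ℕ → ℤ → ℤ} (h : S.Fam m f) {j k : ℕ} (h1 : 1 ≤ j) (h2 : j ≤ k)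
    (h3 : k ≤ m) (s : ℤ) : f k s ≤ f j s := by
  induction k, h2 using Nat.le_induction with
  | base => simp
  | succ k hk ih =>
    refine le_trans ?_ (ih (by omega))
    rcases lt_or_ge s (S.c (k + 1)) with hs | hs
    · rw [(h.path (k + 1) (by omega) h3).left s hs.le]
      exact (h.path k (by omega) (by omega)).nonneg s
    rcases lt_or_ge (S.b (k + 1) + S.A) s with hs' | hs'
    · rw [(h.path (k + 1) (by omega) h3).right s hs'.le]
      exact (h.path k (by omega) (by omega)).le_right s
    · have h3 := h.lt k (by omega) (by omega) s hs hs'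
      exact h3.le

/-- The `j`-th path of a family stays weakly north-west of the lower corners shifted by `j - 1`
steps, since the `j - 1` paths before it lie between it and the boundary. -/
theorem Fam.le_D {m : ℕ} {f : ℕ → ℤ → ℤ} (hm : m ≤ S.n) (h : S.Fam m f) {j : ℕ} (h1 : 1 ≤ j)
    (h2 : j ≤ m) {g : ℤ × ℤ} (hg : g ∈ S.D j) {s : ℤ} (hs : S.c j ≤ s) (hs' : s ≤ S.b j + S.A) :
    f j s ≤ phi g s := by
  induction j, h1 using Nat.le_induction generalizing g with
  | base =>
    rw [mem_D] at hg
    have := S.DL_not hg (h.mem 1 le_rfl h2 s hs hs')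
    simp at this
    unfold phi; omega
  | succ j hj ih =>
    rw [D_succ] at hg
    have h3 := S.c_lt j hj (by omega)
    have h4 := S.b_lt j hj (by omega)
    have h5 := ih (by omega) hg (by omega) (by omega)
    have h6 := h.lt j hj (by omega) s hs hs'
    unfold phi at *
    simp only at h5
    omega

/-- The faces for the first `m` of the paths: sets of points in the region whose strict south-east
chains obey the restrictions that the main diagonals of the generating minors impose. -/
def Face (S : Region) (m : ℕ) (F : Finset (ℤ × ℤ)) : Prop :=
  F ⊆ S.L ∧ ∀ l : List (ℤ × ℤ), l.Pairwise SEs → (∀ p ∈ l, p ∈ F) →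
    l.length ≠ m + 1 ∧ (1 ≤ l.length → l.length ≤ m →
      (∃ p ∈ l, S.c l.length ≤ p.2) ∧ ∃ p ∈ l, p.1 ≤ S.b l.length)

/-- The outermost path that a face determines. -/
noncomputable def outer (S : Region) (m : ℕ) (F : Finset (ℤ × ℤ)) : ℤ → ℤ :=
  lowest S.A (S.c m) (S.b m) (F ∪ S.D m)

/-- The family of `m` paths determined by a face: the outermost (north-western) path is the lowest
one above the face and the shifted corners; its points are removed from the face, and the remaining
paths are found recursively. Positions beyond `m` carry the junk value `0`. -/
noncomputable def canon (S : Region) : ℕ → Finset (ℤ × ℤ) → ℕ → ℤ → ℤ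
  | 0, _ => 0
  | m + 1, F =>
    Function.update (canon S m (F \ S.pts (m + 1) (S.outer (m + 1) F))) (m + 1)
      (S.outer (m + 1) F)

section
set_option linter.unusedSectionVars false
variable {f0 : ℕ → ℤ → ℤ} (h0 : S.Fam S.n f0) {m : ℕ} (hm1 : 1 ≤ m) (hmn : m ≤ S.n)
  {F : Finset (ℤ × ℤ)} (hF : F ⊆ S.L)
include h0 hm1 hmn hF

theorem gen_nonneg {g : ℤ × ℤ} (hg : g ∈ F ∪ S.D m) {s : ℤ} (hs : S.c m ≤ s)
    (hs' : s ≤ S.b m + S.A) : max 0 (s - S.A) ≤ phi g s := by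
  rcases Finset.mem_union.1 hg with hg | hg
  · have := S.box _ (hF hg)
    unfold phi; omega
  · have h1 := h0.le_D le_rfl hm1 hmn hg hs hs'
    have h2 := (h0.path m hm1 hmn).nonneg s
    have h3 := (h0.path m hm1 hmn).le_right s
    omega

theorem outer_isPath : IsPath S.A (S.c m) (S.b m) (S.outer m F) :=
  lowest_isPath (S.c_le m hm1 hmn) (S.b_nonneg m hm1 hmn) _

theorem outer_le {g : ℤ × ℤ} (hg : g ∈ F ∪ S.D m) {s : ℤ} (hs : S.c m ≤ s)
    (hs' : s ≤ S.b m + S.A) : S.outer m F s ≤ phi g s :=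
  have h1 := gen_nonneg h0 hm1 hmn hF hg hs hs'
  lowest_le hg h1

/-- A point of the face off the outermost path is below the starting point, to the right of the end
point, or strictly south-east of another point of the face or of a shifted corner. -/
theorem outer_interior {p : ℤ × ℤ} (hp : p ∈ F) (hp' : p ∉ S.pts m (S.outer m F)) :
    p.2 < S.c m ∨ S.b m < p.1 ∨ ∃ q ∈ F ∪ S.D m, q.1 < p.1 ∧ p.2 < q.2 := by
  by_contra! hcon
  obtain ⟨h1, h2, h3⟩ := hcon
  have hb := S.box _ (hF hp)
  have h4 := outer_le h0 hm1 hmn hF (Finset.mem_union_left _ hp) (s := p.1 + p.2) (by omega)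
    (by omega)
  rw [mem_pts] at hp'
  have h5 : S.outer m F (p.1 + p.2) < p.1 := by unfold phi at h4; omega
  obtain ⟨q, hq, hq'⟩ := exists_phi_le_lowest (A := S.A) (c := S.c m) (b := S.b m) (F ∪ S.D m)
    (p.1 + p.2)
  change phi q _ ≤ S.outer m F _ at hq'
  unfold phi at hq'
  rcases hq with rfl | rfl | hq
  · simp at hq'; omega
  · simp at hq'; omega
  · have := h3 q hq; omega

/-- A point of the face off the outermost path still bounds that path after moving it by one step to
the south-east, which leaves room for a further path through the point. -/
theorem outer_le_sub {p : ℤ × ℤ} (hp : p ∈ F) (hp' : p ∉ S.pts m (S.outer m F)) {s : ℤ}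
    (hs : S.c m ≤ s) (hs' : s ≤ S.b m + S.A) : S.outer m F s ≤ phi p s - 1 := by
  have hP := outer_isPath h0 hm1 hmn hF
  rcases outer_interior h0 hm1 hmn hF hp hp' with h | h | ⟨q, hq, h, h'⟩
  · have := hP.le_c hs; unfold phi; omega
  · have := hP.le_b hs'; unfold phi; omega
  · have := outer_le h0 hm1 hmn hF hq hs hs'
    unfold phi at *; omega

/-- The outermost path stays in the region: the reference family `f0` is bounded by the same
corners, so that the path cannot leave the region on either side. -/
theorem outer_mem {s : ℤ} (hs : S.c m ≤ s) (hs' : s ≤ S.b m + S.A) :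
    (S.outer m F s, s - S.outer m F s) ∈ S.L := by
  have hP := outer_isPath h0 hm1 hmn hF
  have hcb := S.cb_mono le_rfl hm1 hmn
  have hn1 : 1 ≤ S.n := by omega
  have hcA := S.c_le m hm1 hmn
  have hb0 := S.b_nonneg m hm1 hmn
  have hfm := h0.path m hm1 hmn
  obtain ⟨a, ha, ha1, ha2⟩ : ∃ a ∈ S.L, a.1 ≤ S.outer m F s ∧ s - S.outer m F s ≤ a.2 := by
    obtain ⟨q, hq, hq'⟩ := exists_phi_le_lowest (A := S.A) (c := S.c m) (b := S.b m) (F ∪ S.D m) s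
    change phi q _ ≤ S.outer m F _ at hq'
    rcases hq with rfl | rfl | hq
    · refine ⟨(0, S.c m), ?_, ?_, ?_⟩
      · have := h0.mem m hm1 hmn (S.c m) le_rfl (by omega)
        rw [hfm.left _ le_rfl] at this
        simpa using this
      all_goals unfold phi at hq'; simp at *; omega
    · refine ⟨(S.b m, S.A), ?_, ?_, ?_⟩
      · have := h0.mem m hm1 hmn (S.b m + S.A) (by omega) le_rfl
        rw [hfm.right _ le_rfl] at this
        simpa using this
      all_goals unfold phi at hq'; simp at *; omega
    · rcases Finset.mem_union.1 hq with hq | hq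
      · refine ⟨q, hF hq, ?_, ?_⟩ <;> unfold phi at hq' <;> omega
      · have h1 := h0.le_D le_rfl hm1 hmn hq hs hs'
        exact ⟨_, h0.mem m hm1 hmn s hs hs', by simp; omega, by simp; omega⟩
  obtain ⟨e, he, he1, he2⟩ : ∃ e ∈ S.L, S.outer m F s ≤ e.1 ∧ e.2 ≤ s - S.outer m F s := by
    rcases le_or_gt (S.outer m F s + (m - 1)) (f0 1 s) with h | h
    · exact ⟨_, h0.mem 1 le_rfl hn1 s (by omega) (by omega), by simp; omega, by simp; omega⟩
    · refine ⟨(S.outer m F s + (m - 1), s - S.outer m F s - (m - 1)), ?_, by simp; omega,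
        by simp; omega⟩
      by_contra hcon
      have h1 := hP.le_b hs'
      have h2 := hP.le_c hs
      obtain ⟨C, hC, hC1, hC2⟩ := S.lower_fill (h0.path 1 le_rfl hn1) (h0.mem 1 le_rfl hn1) _
        (by simp; omega) (by simp; omega) (by ring_nf at *; omega) hcon
      simp only at hC1 hC2
      have h3 := outer_le h0 hm1 hmn hF (g := (C.1 + 1 - m, C.2 + m - 1))
        (Finset.mem_union_right _ (by rw [mem_D]; simpa using hC)) hs hs'
      unfold phi at h3
      simp only at h3
      omega
  exact S.conv _ ha _ he _ ha1 he1 he2 ha2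

/-- Each NE-turn of the outermost path is a point of the face or a shifted corner. -/
theorem outer_turn {s : ℤ} (hs : S.c m < s) (hs' : s < S.b m + S.A)
    (h1 : S.outer m F (s - 1) = S.outer m F s) (h2 : S.outer m F (s + 1) = S.outer m F s + 1) :
    (S.outer m F s, s - S.outer m F s) ∈ F ∪ S.D m := by
  have hP := outer_isPath h0 hm1 hmn hF
  obtain ⟨q, hq, hq'⟩ := exists_phi_le_lowest (A := S.A) (c := S.c m) (b := S.b m) (F ∪ S.D m) s
  change phi q _ ≤ S.outer m F _ at hq'
  have key : ∀ s', S.c m ≤ s' → s' ≤ S.b m + S.A → S.outer m F s' ≤ phi q s' := by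
    intro s' e1 e2
    rcases hq with rfl | rfl | hq
    · have := hP.le_c e1; unfold phi; simp; omega
    · have := hP.le_b e2; unfold phi; simp; omega
    · exact outer_le h0 hm1 hmn hF hq e1 e2
  have h3 := key (s - 1) (by omega) (by omega)
  have h4 := key (s + 1) (by omega) (by omega)
  have h5 : q = (S.outer m F s, s - S.outer m F s) := by
    unfold phi at *
    ext
    · simp only; omega
    · simp only; omega
  rw [← h5]
  rcases hq with rfl | rfl | hq
  · simp at h5; omega
  · simp at h5; omega
  · exact hq

end

/-- A strict south-east chain moves by at least one in both coordinates in each step. -/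
theorem chain_len : ∀ (l : List (ℤ × ℤ)) (p : ℤ × ℤ), (p :: l).Pairwise SEs →
    ∃ q ∈ p :: l, p.1 + l.length ≤ q.1 ∧ q.2 ≤ p.2 - l.length
  | [], p, _ => ⟨p, by simp⟩
  | q :: l, p, h => by
    rw [List.pairwise_cons] at h
    obtain ⟨r, hr, h1, h2⟩ := chain_len l q h.2
    have := h.1 q (by simp)
    unfold SEs at this
    refine ⟨r, List.mem_cons_of_mem _ hr, ?_, ?_⟩ <;> simp <;> omega

/-- Removing the points of the outermost path from a face for `m + 1` paths leaves a face for `m`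
paths: a forbidden chain of length `m + 1` could be extended by `outer_interior`. -/
theorem Face.step {f0 : ℕ → ℤ → ℤ} (h0 : S.Fam S.n f0) {m : ℕ} (hmn : m + 1 ≤ S.n)
    {F : Finset (ℤ × ℤ)} (hF : S.Face (m + 1) F) :
    S.Face m (F \ S.pts (m + 1) (S.outer (m + 1) F)) := by
  refine ⟨Finset.sdiff_subset.trans hF.1, fun l hl hlF => ?_⟩
  have hlF' : ∀ p ∈ l, p ∈ F := fun p hp => (Finset.mem_sdiff.1 (hlF p hp)).1
  have hl2 := hF.2 l hl hlF'
  refine ⟨fun hlen => ?_, fun h1 h2 => hl2.2 h1 (by omega)⟩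
  obtain ⟨ha, hb⟩ := hl2.2 (by omega) (by omega)
  rw [hlen] at ha hb
  match l, hl, hlF, hlF', hlen, ha, hb with
  | p :: l, hl, hlF, hlF', hlen, ha, hb =>
  have hl' := List.pairwise_cons.1 hl
  have hp := Finset.mem_sdiff.1 (hlF p (by simp))
  rcases outer_interior h0 (by omega) hmn hF.1 hp.1 hp.2 with h | h | ⟨q, hq, hq1, hq2⟩
  · obtain ⟨r, hr, hr'⟩ := ha
    rcases List.mem_cons.1 hr with rfl | hr
    · omega
    · have := hl'.1 r hr; unfold SEs at this; omega
  · obtain ⟨r, hr, hr'⟩ := hb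
    rcases List.mem_cons.1 hr with rfl | hr
    · omega
    · have := hl'.1 r hr; unfold SEs at this; omega
  · rcases Finset.mem_union.1 hq with hq | hq
    · refine (hF.2 (q :: p :: l) ?_ ?_).1 (by simp at *; omega)
      · refine List.pairwise_cons.2 ⟨fun r hr => ?_, hl⟩
        rcases List.mem_cons.1 hr with rfl | hr
        · exact ⟨hq1, hq2⟩
        · have := hl'.1 r hr; unfold SEs at *; omega
      · intro r hr
        rcases List.mem_cons.1 hr with rfl | hr
        · exact hq
        · exact hlF' r hr
    · obtain ⟨r, hr, hr1, hr2⟩ := chain_len l p hl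
      rw [mem_D] at hq
      refine S.DL_not hq (hF.1 (hlF' r hr)) ⟨?_, ?_⟩ <;> simp at * <;> omega

theorem Fam.restrict {m : ℕ} {f : ℕ → ℤ → ℤ} (h : S.Fam (m + 1) f) :
    S.Fam m (Function.update f (m + 1) 0) where
  path j h1 h2 := by rw [Function.update_of_ne (by omega)]; exact h.path j h1 (by omega)
  mem j h1 h2 := by rw [Function.update_of_ne (by omega)]; exact h.mem j h1 (by omega)
  lt j h1 h2 := by
    rw [Function.update_of_ne (by omega), Function.update_of_ne (by omega)]
    exact h.lt j h1 (by omega)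
  zero j hj := by
    by_cases h1 : j = m + 1
    · rw [h1]; simp
    · rw [Function.update_of_ne h1]; exact h.zero j (by omega)

theorem allpts_update (m : ℕ) (f : ℕ → ℤ → ℤ) (g : ℤ → ℤ) :
    S.allpts m (Function.update f (m + 1) g) = S.allpts m f := by
  unfold allpts
  refine Finset.biUnion_congr rfl fun j hj => ?_
  rw [Function.update_of_ne]
  simp at hj; omega

theorem allturns_update (m : ℕ) (f : ℕ → ℤ → ℤ) (g : ℤ → ℤ) :
    S.allturns m (Function.update f (m + 1) g) = S.allturns m f := by
  unfold allturns
  refine Finset.biUnion_congr rfl fun j hj => ?_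
  rw [Function.update_of_ne]
  simp at hj; omega

theorem allpts_succ (m : ℕ) (f : ℕ → ℤ → ℤ) :
    S.allpts (m + 1) f = S.allpts m f ∪ S.pts (m + 1) (f (m + 1)) := by
  unfold allpts
  rw [← Finset.insert_Icc_right_eq_Icc_add_one (by omega), Finset.biUnion_insert, Finset.union_comm]

theorem allturns_succ (m : ℕ) (f : ℕ → ℤ → ℤ) :
    S.allturns (m + 1) f = S.allturns m f ∪ S.turns (m + 1) (f (m + 1)) := by
  unfold allturns
  rw [← Finset.insert_Icc_right_eq_Icc_add_one (by omega), Finset.biUnion_insert, Finset.union_comm]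

/-- A face lies between the counted turns and the points of its canonical family. -/
theorem canon_spec {f0 : ℕ → ℤ → ℤ} (h0 : S.Fam S.n f0) {m : ℕ} (hmn : m ≤ S.n)
    {F : Finset (ℤ × ℤ)} (hF : S.Face m F) :
    S.Fam m (S.canon m F) ∧ F ⊆ S.allpts m (S.canon m F) ∧
      S.allturns m (S.canon m F) ⊆ F := by
  induction m generalizing F with
  | zero =>
    refine ⟨⟨fun j => by omega, fun j => by omega, fun j => by omega, fun j _ => rfl⟩, ?_, ?_⟩
    · intro p hp
      exact absurd rfl (hF.2 [p] (by simp) (by simpa)).1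
    · simp [allturns]
  | succ m ih =>
    obtain ⟨h1, h2, h3⟩ := ih (by omega) (hF.step h0 hmn)
    have hm1 : 1 ≤ m + 1 := by omega
    set g := S.outer (m + 1) F with hg
    have hc : S.canon (m + 1) F =
      Function.update (S.canon m (F \ S.pts (m + 1) g)) (m + 1) g := rfl
    rw [hc]
    refine ⟨⟨fun j j1 j2 => ?_, fun j j1 j2 s s1 s2 => ?_, fun j j1 j2 s s1 s2 => ?_,
      fun j hj => ?_⟩, ?_, ?_⟩
    · by_cases hj : j = m + 1
      · subst hj; rw [Function.update_self]; exact outer_isPath h0 hm1 hmn hF.1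
      · rw [Function.update_of_ne hj]; exact h1.path j j1 (by omega)
    · by_cases hj : j = m + 1
      · subst hj; rw [Function.update_self]; exact outer_mem h0 hm1 hmn hF.1 s1 s2
      · rw [Function.update_of_ne hj]; exact h1.mem j j1 (by omega) s s1 s2
    · by_cases hj : j = m
      · subst hj
        rw [Function.update_self, Function.update_of_ne (by omega)]
        obtain ⟨k, rfl⟩ : ∃ k, j = k + 1 := ⟨j - 1, by omega⟩
        change g s < Function.update (S.canon k _) (k + 1) _ (k + 1) s
        rw [Function.update_self]
        have hgP : IsPath S.A (S.c (k + 1 + 1)) (S.b (k + 1 + 1)) g :=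
          outer_isPath h0 hm1 hmn hF.1
        have e1 := S.c_lt (k + 1) j1 (by omega)
        have e2 := S.b_lt (k + 1) j1 (by omega)
        obtain ⟨q, hq, hq'⟩ := exists_phi_le_lowest (A := S.A) (c := S.c (k + 1))
          (b := S.b (k + 1)) (F \ S.pts (k + 1 + 1) g ∪ S.D (k + 1)) s
        change phi q _ ≤ S.outer (k + 1) (F \ S.pts (k + 1 + 1) g) _ at hq'
        refine lt_of_lt_of_le ?_ hq'
        rcases hq with rfl | rfl | hq
        · have := hgP.le_c s1; unfold phi; simp; omega
        · have := hgP.le_b s2; unfold phi; simp; omega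
        · rcases Finset.mem_union.1 hq with hq | hq
          · rw [Finset.mem_sdiff] at hq
            have := outer_le_sub h0 hm1 hmn hF.1 hq.1 hq.2 s1 s2
            change g s ≤ _ at this
            omega
          · have := outer_le h0 hm1 hmn hF.1 (g := (q.1 - 1, q.2 + 1))
              (Finset.mem_union_right _ (by rw [D_succ]; simpa using hq)) s1 s2
            rw [← hg] at this
            unfold phi at *; simp only at this; omega
      · rw [Function.update_of_ne (by omega), Function.update_of_ne (by omega)]
        exact h1.lt j j1 (by omega) s s1 s2
    · rw [Function.update_of_ne (by omega)]; exact h1.zero j (by omega)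
    · rw [allpts_succ, allpts_update, Function.update_self]
      intro p hp
      by_cases hp' : p ∈ S.pts (m + 1) g
      · exact Finset.mem_union_right _ hp'
      · exact Finset.mem_union_left _ (h2 (Finset.mem_sdiff.2 ⟨hp, hp'⟩))
    · rw [allturns_succ, allturns_update, Function.update_self]
      refine Finset.union_subset (h3.trans Finset.sdiff_subset) fun p hp => ?_
      rw [mem_turns] at hp
      obtain ⟨p1, p2, p3, p4, p5, p6⟩ := hp
      have := outer_turn h0 hm1 hmn hF.1 p1 p2 (by rw [← hg]; omega) (by rw [← hg]; omega)
      rw [← hg, p3, Finset.mem_union] at this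
      simp only [add_sub_cancel_left, Prod.mk.eta] at this
      exact this.resolve_right p6

end Region
end LadderCor

/-! ### Partition of the faces into intervals -/

namespace LadderCor

theorem IsPath.fwd {A c b : ℤ} {f : ℤ → ℤ} (h : IsPath A c b f) {s : ℤ} (hs : s ≤ b + A) :
    ∃ s', s ≤ s' ∧ s' ≤ b + A ∧ f s' = f s ∧ (s' = b + A ∨ f (s' + 1) = f s' + 1) := by
  obtain ⟨N, hN⟩ : ∃ N : ℕ, b + A - s ≤ N := ⟨(b + A - s).toNat, by omega⟩
  induction N generalizing s with
  | zero => exact ⟨s, le_rfl, hs, rfl, Or.inl (by omega)⟩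
  | succ N ih =>
    have h1 := h.mono s
    have h2 := h.lip s
    by_cases h3 : s = b + A ∨ f (s + 1) = f s + 1
    · exact ⟨s, le_rfl, hs, rfl, h3⟩
    · obtain ⟨s', i1, i2, i3, i4⟩ := ih (s := s + 1) (by omega) (by omega)
      exact ⟨s', by omega, i2, by omega, i4⟩

theorem IsPath.bwd {A c b : ℤ} {f : ℤ → ℤ} (h : IsPath A c b f) {s : ℤ} (hs : c ≤ s) :
    ∃ s', s' ≤ s ∧ c ≤ s' ∧ f s - f s' = s - s' ∧ (s' = c ∨ f (s' - 1) = f s') := by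
  obtain ⟨N, hN⟩ : ∃ N : ℕ, s - c ≤ N := ⟨(s - c).toNat, by omega⟩
  induction N generalizing s with
  | zero => exact ⟨s, le_rfl, hs, by omega, Or.inl (by omega)⟩
  | succ N ih =>
    have h1 := h.mono (s - 1)
    have h2 := h.lip (s - 1)
    rw [sub_add_cancel] at h1 h2
    by_cases h3 : s = c ∨ f (s - 1) = f s
    · exact ⟨s, le_rfl, hs, by omega, h3⟩
    · obtain ⟨s', i1, i2, i3, i4⟩ := ih (s := s - 1) (by omega) (by omega)
      exact ⟨s', by omega, i2, by omega, i4⟩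

/-- A path is determined by its end points and its NE-turns. -/
theorem IsPath.cover {A c b : ℤ} {f : ℤ → ℤ} (h : IsPath A c b f) {s : ℤ}
    (hs : c ≤ s) (hs' : s ≤ b + A) :
    ∃ q : ℤ × ℤ, (q = (0, c) ∨ q = (b, A) ∨ (c < q.1 + q.2 ∧ q.1 + q.2 < b + A ∧
      f (q.1 + q.2) = q.1 ∧ f (q.1 + q.2 - 1) = q.1 ∧ f (q.1 + q.2 + 1) = q.1 + 1)) ∧
      phi q s ≤ f s := by
  obtain ⟨s', i1, i2, i3, i4⟩ := h.fwd hs'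
  have h1 := h.mono (s' - 1)
  have h2 := h.lip (s' - 1)
  rw [sub_add_cancel] at h1 h2
  by_cases hE : s' = b + A
  · refine ⟨(b, A), by simp, ?_⟩
    have := h.right s' (by omega)
    have := h.le_right s
    unfold phi; simp only; omega
  by_cases hA : s' = c
  · refine ⟨(0, c), by simp, ?_⟩
    have := h.nonneg s
    unfold phi; simp only; omega
  by_cases hv : f (s' - 1) = f s'
  · refine ⟨(f s', s' - f s'), Or.inr (Or.inr ?_), ?_⟩
    · simp only [add_sub_cancel]
      exact ⟨by omega, by omega, trivial, hv, by omega⟩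
    · unfold phi; simp only; omega
  · have hss : s' = s := by
      by_contra hne
      have := (h.mono_lip (s := s) (t := s' - 1) (by omega)).1
      omega
    subst hss
    obtain ⟨t, j1, j2, j3, j4⟩ := h.bwd hs
    have h3 := h.mono t
    have h4 := h.lip t
    by_cases hc : t = c
    · refine ⟨(0, c), by simp, ?_⟩
      have := h.left t (by omega)
      have := h.nonneg s'
      unfold phi; simp only; omega
    · refine ⟨(f t, t - f t), Or.inr (Or.inr ?_), ?_⟩
      · simp only [add_sub_cancel]
        have hne : t ≠ s' := by rintro rfl; omega
        have := (h.mono_lip (s := t + 1) (t := s') (by omega)).2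
        exact ⟨by omega, by omega, trivial, by omega, by omega⟩
      · unfold phi; simp only; omega

namespace Region
variable {S : Region}

/-- The last path has no point in common with the others. -/
theorem Fam.disj {m : ℕ} {f : ℕ → ℤ → ℤ} (h : S.Fam (m + 1) f) {p : ℤ × ℤ}
    (hp : p ∈ S.allpts m f) : p ∉ S.pts (m + 1) (f (m + 1)) := by
  intro hp'
  unfold allpts at hp
  rw [Finset.mem_biUnion] at hp
  obtain ⟨j, hj, hpj⟩ := hp
  rw [Finset.mem_Icc] at hj
  rw [mem_pts] at hp' hpj
  have h1 := h.lt m (by omega) (by omega) _ hp'.1 hp'.2.1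
  have h2 := h.anti hj.1 hj.2 (by omega) (p.1 + p.2)
  omega

/-- The canonical family is the only one whose counted turns are contained in `F` and whose points
contain `F`. -/
theorem canon_unique {m : ℕ} (hmn : m ≤ S.n) {f : ℕ → ℤ → ℤ} (h : S.Fam m f)
    {F : Finset (ℤ × ℤ)} (hR : S.allturns m f ⊆ F) (hP : F ⊆ S.allpts m f) :
    S.canon m F = f := by
  induction m generalizing f F with
  | zero => ext1 j; rw [h.zero j (by omega)]; rfl
  | succ m ih =>
    have hm1 : 1 ≤ m + 1 := by omega
    have hpath := h.path (m + 1) hm1 le_rfl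
    have hout : S.outer (m + 1) F = f (m + 1) := by
      have hPo : IsPath S.A (S.c (m + 1)) (S.b (m + 1)) (S.outer (m + 1) F) :=
        lowest_isPath (S.c_le _ hm1 hmn) (S.b_nonneg _ hm1 hmn) _
      ext1 s
      rcases lt_or_ge s (S.c (m + 1)) with hs | hs
      · rw [hPo.left s hs.le, hpath.left s hs.le]
      rcases lt_or_ge (S.b (m + 1) + S.A) s with hs' | hs'
      · rw [hPo.right s hs'.le, hpath.right s hs'.le]
      have key : ∀ g ∈ F ∪ S.D (m + 1), f (m + 1) s ≤ phi g s := by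
        intro g hg
        rcases Finset.mem_union.1 hg with hg | hg
        · have := hP hg
          unfold allpts at this
          rw [Finset.mem_biUnion] at this
          obtain ⟨j, hj, hpj⟩ := this
          rw [Finset.mem_Icc] at hj
          rw [mem_pts] at hpj
          refine hpath.le_phi ?_ s
          have := h.anti hj.1 hj.2 (by omega) (g.1 + g.2)
          omega
        · exact h.le_D hmn hm1 le_rfl hg hs hs'
      refine le_antisymm ?_ ?_
      · obtain ⟨q, hq, hq'⟩ := hpath.cover hs hs'
        refine le_trans ?_ hq'
        rcases hq with rfl | rfl | hq
        · have := hPo.le_c hs; unfold phi; simp; omega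
        · have := hPo.le_b hs'; unfold phi; simp; omega
        · have hqm : q ∈ F ∪ S.D (m + 1) := by
            by_cases hD : q ∈ S.D (m + 1)
            · exact Finset.mem_union_right _ hD
            · refine Finset.mem_union_left _ (hR ?_)
              rw [allturns_succ, Finset.mem_union, mem_turns]
              tauto
          refine lowest_le hqm ?_
          have := key q hqm
          have := hpath.nonneg s
          have := hpath.le_right s
          omega
      · obtain ⟨q, hq, hq'⟩ := exists_phi_le_lowest (A := S.A) (c := S.c (m + 1))
          (b := S.b (m + 1)) (F ∪ S.D (m + 1)) s
        refine le_trans ?_ hq'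
        rcases hq with rfl | rfl | hq
        · have := hpath.le_c hs; unfold phi; simp; omega
        · have := hpath.le_b hs'; unfold phi; simp; omega
        · exact key q hq
    change Function.update (S.canon m (F \ S.pts (m + 1) (S.outer (m + 1) F))) (m + 1)
      (S.outer (m + 1) F) = f
    rw [hout, ih (by omega) h.restrict]
    · simp
    · rw [allturns_update]
      intro p hp
      refine Finset.mem_sdiff.2 ⟨hR (by rw [allturns_succ]; exact Finset.mem_union_left _ hp),
        h.disj ?_⟩
      unfold allturns at hp; unfold allpts
      rw [Finset.mem_biUnion] at *
      obtain ⟨j, hj, hpj⟩ := hp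
      exact ⟨j, hj, S.turns_subset _ _ hpj⟩
    · rw [allpts_update]
      intro p hp
      rw [Finset.mem_sdiff] at hp
      have := hP hp.1
      rw [allpts_succ, Finset.mem_union] at this
      exact this.resolve_right hp.2

/-- A strict south-east chain meets each path at most once, and in the order of the paths. -/
theorem Fam.chain_le {m : ℕ} {f : ℕ → ℤ → ℤ} (h : S.Fam m f) (l : List (ℤ × ℤ))
    (hl : l.Pairwise SEs) (K : ℕ) (hK : K ≤ m)
    (hlK : ∀ p ∈ l, ∃ j, 1 ≤ j ∧ j ≤ K ∧ p ∈ S.pts j (f j)) : l.length ≤ K := by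
  induction l generalizing K with
  | nil => simp
  | cons p l ih =>
    rw [List.pairwise_cons] at hl
    obtain ⟨j, j1, j2, hj⟩ := hlK p (by simp)
    have := ih hl.2 (j - 1) (by omega) (fun q hq => by
      obtain ⟨k, k1, k2, hk⟩ := hlK q (List.mem_cons_of_mem _ hq)
      refine ⟨k, k1, ?_, hk⟩
      by_contra hcon
      have h1 := h.anti j1 (show j ≤ k by omega) (by omega) (q.1 + q.2)
      have h2 := hl.1 q hq
      unfold SEs at h2
      rw [mem_pts] at hj hk
      have hP := h.path j j1 (by omega)
      rcases le_total (p.1 + p.2) (q.1 + q.2) with h3 | h3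
      · have := hP.mono_lip h3; omega
      · have := hP.mono_lip h3; omega)
    simp; omega

/-- Each set of points on the paths of a family is a face. -/
theorem Fam.face {m : ℕ} (hmn : m ≤ S.n) {f : ℕ → ℤ → ℤ} (h : S.Fam m f) {F : Finset (ℤ × ℤ)}
    (hP : F ⊆ S.allpts m f) : S.Face m F := by
  have hF : ∀ p ∈ F, ∃ j, 1 ≤ j ∧ j ≤ m ∧ p ∈ S.pts j (f j) := by
    intro p hp
    have := hP hp
    unfold allpts at this
    rw [Finset.mem_biUnion] at this
    obtain ⟨j, hj, hpj⟩ := this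
    rw [Finset.mem_Icc] at hj
    exact ⟨j, hj.1, hj.2, hpj⟩
  refine ⟨fun p hp => ?_, fun l hl hlF => ⟨fun hlen => ?_, fun h1 h2 => ⟨?_, ?_⟩⟩⟩
  · obtain ⟨j, j1, j2, hj⟩ := hF p hp
    rw [mem_pts] at hj
    have := h.mem j j1 j2 _ hj.1 hj.2.1
    rw [hj.2.2] at this
    simpa using this
  · have := h.chain_le l hl m le_rfl (fun p hp => hF p (hlF p hp))
    omega
  · by_contra! hcon
    have := h.chain_le l hl (l.length - 1) (by omega) (fun p hp => by
      obtain ⟨j, j1, j2, hj⟩ := hF p (hlF p hp)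
      refine ⟨j, j1, ?_, hj⟩
      by_contra hjl
      have h3 := S.cb_mono h1 (show l.length ≤ j by omega) (by omega)
      have h4 := hcon p hp
      rw [mem_pts] at hj
      have := (h.path j j1 j2).le_c hj.1
      omega)
    omega
  · by_contra! hcon
    have := h.chain_le l hl (l.length - 1) (by omega) (fun p hp => by
      obtain ⟨j, j1, j2, hj⟩ := hF p (hlF p hp)
      refine ⟨j, j1, ?_, hj⟩
      by_contra hjl
      have h3 := S.cb_mono h1 (show l.length ≤ j by omega) (by omega)
      have h4 := hcon p hp
      rw [mem_pts] at hj
      have := (h.path j j1 j2).le_b hj.2.1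
      omega)
    omega

theorem card_pts (j : ℕ) (g : ℤ → ℤ) :
    (S.pts j g).card = (S.b j + S.A + 1 - S.c j).toNat := by
  unfold pts
  rw [Finset.card_image_of_injective, Int.card_Icc]
  intro s t hst
  simp only [Prod.mk.injEq] at hst
  omega

theorem Fam.card_allpts {m : ℕ} {f : ℕ → ℤ → ℤ} (h : S.Fam m f) :
    (S.allpts m f).card = ∑ j ∈ Finset.Icc 1 m, (S.b j + S.A + 1 - S.c j).toNat := by
  induction m generalizing f with
  | zero => simp [allpts]
  | succ m ih =>
    rw [allpts_succ, Finset.card_union_of_disjoint, card_pts,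
      ← Finset.insert_Icc_right_eq_Icc_add_one (by omega), Finset.sum_insert (by simp), add_comm,
      ← ih h.restrict, allpts_update]
    rw [Finset.disjoint_left]
    exact fun p hp => h.disj hp

theorem Fam.card_allturns {m : ℕ} {f : ℕ → ℤ → ℤ} (h : S.Fam m f) :
    (S.allturns m f).card = ∑ j ∈ Finset.Icc 1 m, (S.turns j (f j)).card := by
  induction m generalizing f with
  | zero => simp [allturns]
  | succ m ih =>
    rw [allturns_succ, Finset.card_union_of_disjoint,
      ← Finset.insert_Icc_right_eq_Icc_add_one (by omega), Finset.sum_insert (by simp), add_comm,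
      ← allturns_update m f 0, ih h.restrict]
    · congr 1
      refine Finset.sum_congr rfl fun j hj => ?_
      rw [Function.update_of_ne]
      simp at hj; omega
    · rw [Finset.disjoint_left]
      intro p hp hp'
      refine h.disj ?_ (S.turns_subset _ _ hp')
      unfold allturns at hp; unfold allpts
      rw [Finset.mem_biUnion] at *
      obtain ⟨j, hj, hpj⟩ := hp
      exact ⟨j, hj, S.turns_subset _ _ hpj⟩

theorem allturns_subset (m : ℕ) (f : ℕ → ℤ → ℤ) : S.allturns m f ⊆ S.allpts m f := by
  intro p hp
  unfold allturns at hp; unfold allpts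
  rw [Finset.mem_biUnion] at *
  obtain ⟨j, hj, hpj⟩ := hp
  exact ⟨j, hj, S.turns_subset _ _ hpj⟩

open Classical in
/-- The faces for all `n` paths. -/
noncomputable def faces (S : Region) : Finset (Finset (ℤ × ℤ)) :=
  S.L.powerset.filter fun F => S.Face S.n F

theorem mem_faces {F : Finset (ℤ × ℤ)} : F ∈ S.faces ↔ S.Face S.n F := by
  classical
  unfold faces
  rw [Finset.mem_filter, Finset.mem_powerset]
  exact ⟨fun h => h.2, fun h => ⟨h.1, h⟩⟩

open Classical in
/-- All families of non-intersecting paths in the region. -/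
noncomputable def fams (S : Region) : Finset (ℕ → ℤ → ℤ) := S.faces.image (S.canon S.n)

theorem mem_fams {f0 : ℕ → ℤ → ℤ} (h0 : S.Fam S.n f0) {f : ℕ → ℤ → ℤ} :
    f ∈ S.fams ↔ S.Fam S.n f := by
  classical
  unfold fams
  rw [Finset.mem_image]
  constructor
  · rintro ⟨F, hF, rfl⟩
    exact (canon_spec h0 le_rfl (mem_faces.1 hF)).1
  · intro h
    exact ⟨S.allpts S.n f, mem_faces.2 (h.face le_rfl subset_rfl),
      canon_unique le_rfl h (S.allturns_subset _ _) subset_rfl⟩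

/-- The number of points on a family, which does not depend on the family. -/
def dim (S : Region) : ℕ := ∑ j ∈ Finset.Icc 1 S.n, (S.b j + S.A + 1 - S.c j).toNat

theorem card_le_dim {f0 : ℕ → ℤ → ℤ} (h0 : S.Fam S.n f0) {F : Finset (ℤ × ℤ)}
    (hF : F ∈ S.faces) : F.card ≤ S.dim := by
  have := canon_spec h0 le_rfl (mem_faces.1 hF)
  rw [dim, ← this.1.card_allpts]
  exact Finset.card_le_card this.2.1

/-- The faces form a disjoint union of the intervals between the turns and the points of a
family of paths. -/
theorem sum_faces {f0 : ℕ → ℤ → ℤ} (h0 : S.Fam S.n f0) {R : Type*} [CommRing R] (x : R) :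
    ∑ F ∈ S.faces, x ^ F.card * (1 - x) ^ (S.dim - F.card) =
      ∑ f ∈ S.fams, x ^ (S.allturns S.n f).card := by
  classical
  rw [← Finset.sum_fiberwise_of_maps_to (s := S.faces) (t := S.fams) (g := S.canon S.n)
    (fun F hF => Finset.mem_image_of_mem _ hF)]
  refine Finset.sum_congr rfl fun f hf => ?_
  rw [mem_fams h0] at hf
  have hsub := S.allturns_subset S.n f
  have hfib : (S.faces.filter fun F => S.canon S.n F = f) =
      (S.allpts S.n f \ S.allturns S.n f).powerset.image (S.allturns S.n f ∪ ·) := by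
    ext F
    rw [Finset.mem_filter, mem_faces, Finset.mem_image]
    constructor
    · rintro ⟨hF, rfl⟩
      have := canon_spec h0 le_rfl hF
      refine ⟨F \ S.allturns S.n (S.canon S.n F), ?_, ?_⟩
      · rw [Finset.mem_powerset]; exact Finset.sdiff_subset_sdiff this.2.1 subset_rfl
      · exact Finset.union_sdiff_of_subset this.2.2
    · rintro ⟨G, hG, rfl⟩
      rw [Finset.mem_powerset] at hG
      have : S.allturns S.n f ∪ G ⊆ S.allpts S.n f :=
        Finset.union_subset hsub (hG.trans Finset.sdiff_subset)
      exact ⟨hf.face le_rfl this, canon_unique le_rfl hf Finset.subset_union_left this⟩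
  rw [hfib, Finset.sum_image]
  · have hc := Finset.card_sdiff_add_card_eq_card hsub
    rw [hf.card_allpts] at hc
    change _ = S.dim at hc
    have : ∀ G ∈ (S.allpts S.n f \ S.allturns S.n f).powerset,
        x ^ (S.allturns S.n f ∪ G).card * (1 - x) ^ (S.dim - (S.allturns S.n f ∪ G).card) =
        x ^ (S.allturns S.n f).card * (x ^ G.card *
          (1 - x) ^ ((S.allpts S.n f \ S.allturns S.n f).card - G.card)) := by
      intro G hG
      rw [Finset.mem_powerset] at hG
      rw [Finset.card_union_of_disjoint (Finset.disjoint_of_subset_right hG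
        Finset.disjoint_sdiff), pow_add, mul_assoc]
      congr 3
      omega
    rw [Finset.sum_congr rfl this, ← Finset.mul_sum, Finset.sum_pow_mul_eq_add_pow]
    simp
  · intro G hG G' hG' h
    simp only [Finset.coe_powerset, Set.mem_preimage, Set.mem_powerset_iff,
      Finset.coe_subset] at hG hG'
    have e : ∀ G ⊆ S.allpts S.n f \ S.allturns S.n f,
        (S.allturns S.n f ∪ G) \ S.allturns S.n f = G := fun G hG =>
      Finset.union_sdiff_cancel_left (Finset.disjoint_of_subset_right hG Finset.disjoint_sdiff)
    rw [← e G hG, ← e G' hG']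
    exact congrArg (· \ S.allturns S.n f) h

end Region
end LadderCor

/-! ### Maximal numbers of turns -/

namespace LadderCor
namespace Region
variable (S : Region)

/-- The points which the `j`-th path is required to be weakly south-east of. -/
def U (j : ℕ) : Set (ℤ × ℤ) := {p | (p.1 - (S.n - j), p.2 + (S.n - j)) ∈ S.CU ∨
  ∃ k : ℕ, j < k ∧ k ≤ S.n ∧
    (p = ((k : ℤ) - j, S.c k - (k - j)) ∨ p = (S.b k + (k - j), S.A - (k - j)))}

/-- The paths counted in the definition of the maximal number of turns. -/
structure Adm (j : ℕ) (g : ℤ → ℤ) : Prop where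
  path : IsPath S.A (S.c j) (S.b j) g
  upper : ∀ p ∈ S.U j, ∀ s, S.c j ≤ s → s ≤ S.b j + S.A → min p.1 (s - p.2) ≤ g s
  lower : ∀ p ∈ S.D j, ∀ s, S.c j ≤ s → s ≤ S.b j + S.A → g s ≤ phi p s

/-- The points which occur as counted NE-turns of an admissible path. -/
structure T (j : ℕ) (p : ℤ × ℤ) : Prop where
  x0 : 0 ≤ p.1
  xb : p.1 < S.b j
  yc : S.c j < p.2
  yA : p.2 ≤ S.A
  upper : ∀ P ∈ S.U j, P.1 ≤ p.1 ∨ p.2 ≤ P.2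
  lower : ∀ d ∈ S.D j, ¬ (d.1 ≤ p.1 ∧ p.2 ≤ d.2)

/-- Chains (for the strict order in both coordinates) of possible turns. -/
def Ch (j : ℕ) (R : Finset (ℤ × ℤ)) : Prop :=
  (∀ p ∈ R, ∀ q ∈ R, p = q ∨ (p.1 < q.1 ∧ p.2 < q.2) ∨ (q.1 < p.1 ∧ q.2 < p.2)) ∧
    ∀ p ∈ R, S.T j p

variable {S}

/-- Moving by one step to the south-east turns the upper constraints for the path `j + 1`, together
with its end points, into those for the path `j`. -/
theorem U_succ {j : ℕ} (hj : j < S.n) {p : ℤ × ℤ} : p ∈ S.U j ↔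
    (p.1 - 1, p.2 + 1) ∈ S.U (j + 1) ∨ (p.1 - 1, p.2 + 1) = (0, S.c (j + 1)) ∨
      (p.1 - 1, p.2 + 1) = (S.b (j + 1), S.A) := by
  simp only [U, Set.mem_ofPred_eq]
  have e : (p.1 - 1 - ((S.n : ℤ) - ((j + 1 : ℕ) : ℤ)), p.2 + 1 + ((S.n : ℤ) - ((j + 1 : ℕ) : ℤ))) =
    (p.1 - ((S.n : ℤ) - j), p.2 + ((S.n : ℤ) - j)) := by
    push_cast; ext <;> simp only <;> ring
  rw [e]
  obtain ⟨a, b⟩ := p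
  simp only [Prod.mk.injEq]
  constructor
  · rintro (h | ⟨k, h1, h2, h3⟩)
    · exact Or.inl (Or.inl h)
    · by_cases hk : k = j + 1
      · right; subst hk; push_cast at h3
        rcases h3 with h3 | h3
        · left; omega
        · right; omega
      · left; right; refine ⟨k, by omega, h2, ?_⟩
        push_cast
        rcases h3 with h3 | h3
        · left; omega
        · right; omega
  · rintro ((h | ⟨k, h1, h2, h3⟩) | h | h)
    · exact Or.inl h
    · right
      refine ⟨k, by omega, h2, ?_⟩
      push_cast at h3
      rcases h3 with h3 | h3
      · left; omega
      · right; omega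
    · right; exact ⟨j + 1, by omega, by omega, Or.inl (by push_cast; omega)⟩
    · right; exact ⟨j + 1, by omega, by omega, Or.inr (by push_cast; omega)⟩

theorem U_n {p : ℤ × ℤ} : p ∈ S.U S.n ↔ p ∈ S.CU := by
  simp only [U, Set.mem_ofPred_eq]
  constructor
  · rintro (h | ⟨k, h1, h2, -⟩)
    · simpa using h
    · omega
  · intro h; left; simpa using h

theorem CU_not {d p : ℤ × ℤ} (hd : d ∈ S.CU) (hp : p ∈ S.L) : ¬ (p.1 < d.1 ∧ d.2 < p.2) := by
  rintro ⟨h1, h2⟩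
  simp only [CU, Finset.mem_filter] at hd
  exact hd.2.2.2 (S.conv _ hp _ hd.1 _ (by simp; omega) (by simp) (by simp) (by simp; omega))

section
set_option linter.unusedSectionVars false
variable {f0 : ℕ → ℤ → ℤ} (h0 : S.Fam S.n f0)
include h0

theorem start_mem {j : ℕ} (h1 : 1 ≤ j) (h2 : j ≤ S.n) : ((0 : ℤ), S.c j) ∈ S.L := by
  have hc := S.c_le j h1 h2
  have hb := S.b_nonneg j h1 h2
  have := h0.mem j h1 h2 (S.c j) le_rfl (by omega)
  rw [(h0.path j h1 h2).left _ le_rfl] at this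
  simpa using this

theorem end_mem {j : ℕ} (h1 : 1 ≤ j) (h2 : j ≤ S.n) : (S.b j, S.A) ∈ S.L := by
  have hc := S.c_le j h1 h2
  have hb := S.b_nonneg j h1 h2
  have := h0.mem j h1 h2 (S.b j + S.A) (by omega) le_rfl
  rw [(h0.path j h1 h2).right _ le_rfl] at this
  simpa using this

theorem U_bound {j : ℕ} (h1 : 1 ≤ j) (h2 : j ≤ S.n) {p : ℤ × ℤ} (hp : p ∈ S.U j) :
    p.1 ≤ S.b j ∧ S.c j ≤ p.2 := by
  induction h2 using Nat.decreasingInduction generalizing p with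
  | self =>
    rw [U_n] at hp
    have hs := start_mem h0 h1 le_rfl
    have he := end_mem h0 h1 le_rfl
    simp only [CU, Finset.mem_filter] at hp
    obtain ⟨p1, p2, p3, p4⟩ := hp
    have b1 := S.box _ p2
    have b2 := S.box _ p3
    simp only at b1 b2
    constructor
    · by_contra hcon
      exact p4 (S.conv _ he _ p1 _ (by simp; omega) (by simp) (by simp) (by simp; omega))
    · by_contra hcon
      exact p4 (S.conv _ hs _ p1 _ (by simp; omega) (by simp) (by simp) (by simp; omega))
  | of_succ j hj ih =>
    have e1 := S.c_lt j h1 (by omega)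
    have e2 := S.b_lt j h1 (by omega)
    have e3 := S.b_nonneg (j + 1) (by omega) (by omega)
    have e4 := S.c_le (j + 1) (by omega) (by omega)
    rw [U_succ (by omega)] at hp
    rcases hp with hp | hp | hp
    · have := ih (by omega) hp; simp only at this; omega
    · simp only [Prod.mk.injEq] at hp; omega
    · simp only [Prod.mk.injEq] at hp; omega

/-- The members of a family of non-intersecting paths in the region are admissible. -/
theorem Fam.adm {f : ℕ → ℤ → ℤ} (h : S.Fam S.n f) {j : ℕ} (h1 : 1 ≤ j) (h2 : j ≤ S.n) :
    S.Adm j (f j) := by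
  refine ⟨h.path j h1 h2, ?_, fun p hp s s1 s2 => h.le_D le_rfl h1 h2 hp s1 s2⟩
  induction h2 using Nat.decreasingInduction with
  | self =>
    intro p hp s s1 s2
    rw [U_n] at hp
    have := CU_not hp (h.mem S.n h1 le_rfl s s1 s2)
    simp only at this; omega
  | of_succ j hj ih =>
    intro p hp s s1 s2
    have hP := h.path j h1 (by omega)
    have hP' := h.path (j + 1) (by omega) (by omega)
    have key : (p.1 - 1 ≤ S.b (j + 1) ∧ S.c (j + 1) ≤ p.2 + 1) ∧
        ∀ s, S.c (j + 1) ≤ s → s ≤ S.b (j + 1) + S.A →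
          min (p.1 - 1) (s - (p.2 + 1)) ≤ f (j + 1) s := by
      have e3 := S.b_nonneg (j + 1) (by omega) (by omega)
      have e4 := S.c_le (j + 1) (by omega) (by omega)
      rw [U_succ (by omega)] at hp
      rcases hp with hp | hp | hp
      · exact ⟨U_bound h0 (by omega) (by omega) hp, ih (by omega) _ hp⟩
      · simp only [Prod.mk.injEq] at hp
        refine ⟨by omega, fun s _ _ => ?_⟩
        have := hP'.nonneg s; omega
      · simp only [Prod.mk.injEq] at hp
        refine ⟨by omega, fun s _ _ => ?_⟩
        have := hP'.le_right s; omega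
    have k0 := hP.nonneg s
    have k1 := hP.le_right s
    rcases lt_or_ge s (S.c (j + 1)) with hs | hs
    · omega
    rcases lt_or_ge (S.b (j + 1) + S.A) s with hs' | hs'
    · omega
    · have k2 := h.lt j h1 (by omega) s hs hs'
      have k3 := key.2 s hs hs'
      omega

/-- The counted turns of an admissible path form a chain of possible turns. -/
theorem Adm.turns_ch {j : ℕ} {g : ℤ → ℤ} (h : S.Adm j g) : S.Ch j (S.turns j g) := by
  constructor
  · intro p hp q hq
    rw [mem_turns] at hp hq
    rcases lt_trichotomy (p.1 + p.2) (q.1 + q.2) with hs | hs | hs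
    · have := h.path.mono_lip (show p.1 + p.2 + 1 ≤ q.1 + q.2 by omega)
      have := h.path.mono_lip (show p.1 + p.2 ≤ q.1 + q.2 - 1 by omega)
      right; left; omega
    · left; rw [hs] at hp; ext <;> omega
    · have := h.path.mono_lip (show q.1 + q.2 + 1 ≤ p.1 + p.2 by omega)
      have := h.path.mono_lip (show q.1 + q.2 ≤ p.1 + p.2 - 1 by omega)
      right; right; omega
  · intro p hp
    rw [mem_turns] at hp
    obtain ⟨p1, p2, p3, p4, p5, p6⟩ := hp
    have a1 := h.path.nonneg (p.1 + p.2)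
    have a2 := h.path.le_b (s := p.1 + p.2 + 1) (by omega)
    have a3 := h.path.le_c (s := p.1 + p.2 - 1) (by omega)
    have a4 := h.path.le_right (p.1 + p.2)
    refine ⟨by omega, by omega, by omega, by omega, fun P hP => ?_, fun d hd => ?_⟩
    · have := h.upper P hP _ p1.le p2.le
      omega
    · rintro ⟨d1, d2⟩
      have b1 := h.lower d hd _ p1.le p2.le
      have b2 := h.lower d hd (p.1 + p.2 - 1) (by omega) (by omega)
      have b3 := h.lower d hd (p.1 + p.2 + 1) (by omega) (by omega)
      apply p6
      have : d = p := by
        unfold phi at *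
        ext <;> omega
      rwa [← this]

/-- The lowest path above a chain of possible turns respects the points of the chain and the shifted
corners. -/
theorem T_gen_nonneg {j : ℕ} (h1 : 1 ≤ j) (h2 : j ≤ S.n) {R : Finset (ℤ × ℤ)}
    (hR : S.Ch j R) {g : ℤ × ℤ} (hg : g ∈ R ∪ S.D j) {s : ℤ} (hs : S.c j ≤ s)
    (hs' : s ≤ S.b j + S.A) : S.outer j R s ≤ phi g s := by
  refine lowest_le hg ?_
  rcases Finset.mem_union.1 hg with hg | hg
  · have hT := hR.2 g hg
    have := hT.x0
    have := hT.yA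
    unfold phi; omega
  · have h1' := h0.le_D le_rfl h1 h2 hg hs hs'
    have h2' := (h0.path j h1 h2).nonneg s
    have h3 := (h0.path j h1 h2).le_right s
    omega

/-- Conversely to `Adm.turns_ch`, the lowest path above a chain of possible turns is admissible. -/
theorem Ch.adm {j : ℕ} (h1 : 1 ≤ j) (h2 : j ≤ S.n) {R : Finset (ℤ × ℤ)}
    (hR : S.Ch j R) : S.Adm j (S.outer j R) := by
  refine ⟨lowest_isPath (S.c_le j h1 h2) (S.b_nonneg j h1 h2) _, fun p hp s s1 s2 => ?_,
    fun p hp s s1 s2 => T_gen_nonneg h0 h1 h2 hR (Finset.mem_union_right _ hp) s1 s2⟩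
  obtain ⟨q, hq, hq'⟩ := exists_phi_le_lowest (A := S.A) (c := S.c j) (b := S.b j) (R ∪ S.D j) s
  refine le_trans ?_ hq'
  have hb := U_bound h0 h1 h2 hp
  rcases hq with rfl | rfl | hq
  · unfold phi; simp only; omega
  · unfold phi; simp only; omega
  rcases Finset.mem_union.1 hq with hq | hq
  · have := (hR.2 q hq).upper p hp
    unfold phi; omega
  · have k1 := h0.le_D le_rfl h1 h2 hq s1 s2
    have k2 := (h0.adm h0 h1 h2).upper p hp s s1 s2
    omega

/-- All points of a chain of possible turns are counted turns of the lowest path above it. -/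
theorem Ch.subset_turns {j : ℕ} (h1 : 1 ≤ j) (h2 : j ≤ S.n) {R : Finset (ℤ × ℤ)}
    (hR : S.Ch j R) : R ⊆ S.turns j (S.outer j R) := by
  intro p hp
  obtain ⟨t1, t2, t3, t4, t5, t6⟩ := hR.2 p hp
  have hP := (hR.adm h0 h1 h2).path
  have k1 := T_gen_nonneg h0 h1 h2 hR (Finset.mem_union_left _ hp) (s := p.1 + p.2)
    (by omega) (by omega)
  have low : p.1 ≤ S.outer j R (p.1 + p.2 - 1) ∧ p.1 + 1 ≤ S.outer j R (p.1 + p.2 + 1) := by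
    have aux : ∀ g, (g = (0, S.c j) ∨ g = (S.b j, S.A) ∨ g ∈ R ∪ S.D j) →
        p.1 ≤ phi g (p.1 + p.2 - 1) ∧ p.1 + 1 ≤ phi g (p.1 + p.2 + 1) := by
      rintro g (rfl | rfl | hg)
      · unfold phi; simp only; omega
      · unfold phi; simp only; omega
      rcases Finset.mem_union.1 hg with hg | hg
      · unfold phi
        rcases hR.1 p hp g hg with rfl | h | h <;> omega
      · have := t6 g hg
        unfold phi; omega
    constructor
    · obtain ⟨q, hq, hq'⟩ := exists_phi_le_lowest (A := S.A) (c := S.c j) (b := S.b j)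
        (R ∪ S.D j) (p.1 + p.2 - 1)
      exact (aux q hq).1.trans hq'
    · obtain ⟨q, hq, hq'⟩ := exists_phi_le_lowest (A := S.A) (c := S.c j) (b := S.b j)
        (R ∪ S.D j) (p.1 + p.2 + 1)
      exact (aux q hq).2.trans hq'
  have e1 := hP.mono (p.1 + p.2 - 1)
  have e2 := hP.lip (p.1 + p.2)
  rw [sub_add_cancel] at e1
  rw [mem_turns]
  unfold phi at k1
  refine ⟨by omega, by omega, by omega, by omega, by omega, fun hD => t6 p hD (by simp)⟩

/-- Let `Q` be a chain of maximal size for the path `j + 1`. The points of a chain `R` for the path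
`j` that conflict with the path of `Q` can be replaced by shifted turns of `Q`. This does not
decrease the number of points: the opposite replacement in `Q` yields a chain too, and `Q` is
maximal. -/
theorem exchange {j : ℕ} (h1 : 1 ≤ j) (h2 : j < S.n) {R Q : Finset (ℤ × ℤ)}
    (hR : S.Ch j R) (hQ : S.Ch (j + 1) Q) (hmax : ∀ Q', S.Ch (j + 1) Q' → Q'.card ≤ Q.card) :
    ∃ R', S.Ch j R' ∧ R.card ≤ R'.card ∧ ∀ s, S.c (j + 1) ≤ s → s ≤ S.b (j + 1) + S.A →
      S.outer (j + 1) Q s < S.outer j R' s := by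
  classical
  have h2' : j + 1 ≤ S.n := h2
  set f := S.outer (j + 1) Q with hf
  have e1 := S.c_lt j h1 h2
  have e2 := S.b_lt j h1 h2
  have hfA := hQ.adm h0 (by omega) h2'
  rw [← hf] at hfA
  have hfP := hfA.path
  have hgen : ∀ κ ∈ Q, ∀ s, S.c (j + 1) ≤ s → s ≤ S.b (j + 1) + S.A → f s ≤ phi κ s :=
    fun κ hκ s s1 s2 => T_gen_nonneg h0 (by omega) h2' hQ (Finset.mem_union_left _ hκ) s1 s2
  -- the points of `R` whose shift is not respected by the path of `Q`
  set V := R.filter fun ρ => ∃ s, S.c (j + 1) ≤ s ∧ s ≤ S.b (j + 1) + S.A ∧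
    phi (ρ.1 - 1, ρ.2 + 1) s < f s with hV
  -- the turns of `Q` which are weakly south-east of a shifted point of `V`
  set K := Q.filter fun κ => ∃ ρ ∈ V, ρ.1 - 1 ≤ κ.1 ∧ κ.2 ≤ ρ.2 + 1 with hK
  have hsh : Function.Injective fun ρ : ℤ × ℤ => (ρ.1 - 1, ρ.2 + 1) := by
    intro a b hab; simp only [Prod.mk.injEq] at hab; ext <;> omega
  have hsh' : Function.Injective fun ρ : ℤ × ℤ => (ρ.1 + 1, ρ.2 - 1) := by
    intro a b hab; simp only [Prod.mk.injEq] at hab; ext <;> omega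
  -- comparing the unremoved turns of `Q` with the shifted violators
  have hcmp : ∀ κ ∈ Q \ K, ∀ ρ ∈ V, (κ.1 < ρ.1 - 1 ∧ κ.2 < ρ.2 + 1) ∨
      (ρ.1 - 1 < κ.1 ∧ ρ.2 + 1 < κ.2) := by
    intro κ hκ ρ hρ
    rw [Finset.mem_sdiff, hK, Finset.mem_filter] at hκ
    have hn : ¬ (ρ.1 - 1 ≤ κ.1 ∧ κ.2 ≤ ρ.2 + 1) := fun h => hκ.2 ⟨hκ.1, ρ, hρ, h⟩
    rw [hV, Finset.mem_filter] at hρ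
    obtain ⟨-, s, s1, s2, s3⟩ := hρ
    have := hgen κ hκ.1 s s1 s2
    unfold phi at *
    simp only at s3
    omega
  have hTV : ∀ ρ ∈ V, S.T (j + 1) (ρ.1 - 1, ρ.2 + 1) := by
    intro ρ hρ
    rw [hV, Finset.mem_filter] at hρ
    obtain ⟨hρR, s, s1, s2, s3⟩ := hρ
    obtain ⟨t1, t2, t3, t4, t5, t6⟩ := hR.2 ρ hρR
    have u1 := t5 (1, S.c (j + 1) - 1) (by rw [U_succ h2]; right; left; simp)
    have u2 := t5 (S.b (j + 1) + 1, S.A - 1) (by rw [U_succ h2]; right; right; simp)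
    have v1 := hfP.le_b s2
    have v2 := hfP.le_c s1
    unfold phi at s3
    simp only at s3 u1 u2
    refine ⟨by simp only; omega, by simp only; omega, by simp only; omega, by simp only; omega,
      fun P hP => ?_, fun d hd => ?_⟩
    · have := t5 (P.1 + 1, P.2 - 1) (by rw [U_succ h2]; left; simpa using hP)
      simp only at *; omega
    · have := t6 (d.1 + 1, d.2 - 1) (by rw [D_succ] at hd; exact hd)
      simp only at *; omega
  -- replacing `K` in `Q` by the shifted `V` gives a chain, to which maximality applies
  have hcardVK : V.card ≤ K.card := by
    have hch : S.Ch (j + 1) ((Q \ K) ∪ V.image fun ρ => (ρ.1 - 1, ρ.2 + 1)) := by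
      constructor
      · intro p hp q hq
        rw [Finset.mem_union, Finset.mem_image] at hp hq
        rcases hp with hp | ⟨ρ, hρ, rfl⟩ <;> rcases hq with hq | ⟨σ, hσ, rfl⟩
        · exact hQ.1 p (Finset.mem_sdiff.1 hp).1 q (Finset.mem_sdiff.1 hq).1
        · have := hcmp p hp σ hσ; right; exact this
        · have := hcmp q hq ρ hρ; right; exact this.symm
        · rw [hV, Finset.mem_filter] at hρ hσ
          rcases hR.1 ρ hρ.1 σ hσ.1 with h | h | h
          · left; rw [h]
          · right; left; simp only; omega
          · right; right; simp only; omega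
      · intro p hp
        rw [Finset.mem_union, Finset.mem_image] at hp
        rcases hp with hp | ⟨ρ, hρ, rfl⟩
        · exact hQ.2 p (Finset.mem_sdiff.1 hp).1
        · exact hTV ρ hρ
    have hc := hmax _ hch
    rw [Finset.card_union_of_disjoint, Finset.card_image_of_injective _ hsh] at hc
    · have := Finset.card_sdiff_add_card_eq_card (show K ⊆ Q from Finset.filter_subset _ _)
      omega
    · rw [Finset.disjoint_left]
      intro p hp hp'
      rw [Finset.mem_image] at hp'
      obtain ⟨ρ, hρ, rfl⟩ := hp'
      have := hcmp _ hp ρ hρ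
      simp only at this; omega
  have hcmp' : ∀ τ ∈ R \ V, ∀ κ ∈ K, (κ.1 + 1 < τ.1 ∧ κ.2 - 1 < τ.2) ∨
      (τ.1 < κ.1 + 1 ∧ τ.2 < κ.2 - 1) := by
    intro τ hτ κ hκ
    rw [hK, Finset.mem_filter] at hκ
    obtain ⟨hκQ, ρ, hρ, r1, r2⟩ := hκ
    rw [Finset.mem_sdiff] at hτ
    have hρR : ρ ∈ R := (Finset.mem_filter.1 hρ).1
    have hne : τ ≠ ρ := by rintro rfl; exact hτ.2 hρ
    have hc := (hR.1 τ hτ.1 ρ hρR).resolve_left hne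
    have hnv : ∀ s, S.c (j + 1) ≤ s → s ≤ S.b (j + 1) + S.A →
        f s ≤ phi (τ.1 - 1, τ.2 + 1) s := by
      by_contra! hcon
      exact hτ.2 (Finset.mem_filter.2 ⟨hτ.1, hcon⟩)
    have ht := hQ.subset_turns h0 (by omega) h2' hκQ
    rw [mem_turns, ← hf] at ht
    have n1 := hnv (κ.1 + κ.2 - 1) (by omega) (by omega)
    have n2 := hnv (κ.1 + κ.2 + 1) (by omega) (by omega)
    unfold phi at n1 n2
    simp only at n1 n2
    omega
  set R' := (R \ V) ∪ K.image fun κ => (κ.1 + 1, κ.2 - 1) with hR'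
  have hR'c : S.Ch j R' := by
    constructor
    · intro p hp q hq
      rw [hR', Finset.mem_union, Finset.mem_image] at hp hq
      rcases hp with hp | ⟨ρ, hρ, rfl⟩ <;> rcases hq with hq | ⟨σ, hσ, rfl⟩
      · exact hR.1 p (Finset.mem_sdiff.1 hp).1 q (Finset.mem_sdiff.1 hq).1
      · have := hcmp' p hp σ hσ; right; exact this.symm
      · have := hcmp' q hq ρ hρ; right; exact this
      · rw [hK, Finset.mem_filter] at hρ hσ
        rcases hQ.1 ρ hρ.1 σ hσ.1 with h | h | h
        · left; rw [h]
        · right; left; simp only; omega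
        · right; right; simp only; omega
    · intro p hp
      rw [hR', Finset.mem_union, Finset.mem_image] at hp
      rcases hp with hp | ⟨κ, hκ, rfl⟩
      · exact hR.2 p (Finset.mem_sdiff.1 hp).1
      · obtain ⟨t1, t2, t3, t4, t5, t6⟩ := hQ.2 κ (Finset.mem_filter.1 hκ).1
        refine ⟨by simp only; omega, by simp only; omega, by simp only; omega,
          by simp only; omega, fun P hP => ?_, fun d hd => ?_⟩
        · rw [U_succ h2] at hP
          rcases hP with hP | hP | hP
          · have := t5 _ hP; simp only at *; omega
          · simp only [Prod.mk.injEq] at *; omega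
          · simp only [Prod.mk.injEq] at *; omega
        · have := t6 (d.1 - 1, d.2 + 1) (by rw [D_succ]; simpa using hd)
          simp only at *; omega
  refine ⟨R', hR'c, ?_, fun s s1 s2 => ?_⟩
  · rw [hR', Finset.card_union_of_disjoint, Finset.card_image_of_injective _ hsh']
    · have := Finset.card_sdiff_add_card_eq_card (show V ⊆ R from Finset.filter_subset _ _)
      omega
    · rw [Finset.disjoint_left]
      intro p hp hp'
      rw [Finset.mem_image] at hp'
      obtain ⟨κ, hκ, rfl⟩ := hp'
      have := hcmp' _ hp κ hκ
      simp only at this; omega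
  · obtain ⟨q, hq, hq'⟩ := exists_phi_le_lowest (A := S.A) (c := S.c j) (b := S.b j)
      (R' ∪ S.D j) s
    refine lt_of_lt_of_le ?_ hq'
    rcases hq with rfl | rfl | hq
    · have := hfP.le_c s1; unfold phi; simp only; omega
    · have := hfP.le_b s2; unfold phi; simp only; omega
    have : f s ≤ phi (q.1 - 1, q.2 + 1) s := by
      rcases Finset.mem_union.1 hq with hq | hq
      · rw [hR', Finset.mem_union, Finset.mem_image] at hq
        rcases hq with hq | ⟨κ, hκ, rfl⟩
        · rw [Finset.mem_sdiff] at hq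
          by_contra! hcon
          exact hq.2 (Finset.mem_filter.2 ⟨hq.1, s, s1, s2, hcon⟩)
        · simpa using hgen κ (Finset.mem_filter.1 hκ).1 s s1 s2
      · exact hfA.lower _ (by rw [D_succ]; simpa using hq) s s1 s2
    unfold phi at *; simp only at this; omega

/-- Admissible paths stay in the region. -/
theorem Adm.mem {j : ℕ} (h1 : 1 ≤ j) (h2 : j ≤ S.n) {g : ℤ → ℤ} (h : S.Adm j g) {s : ℤ}
    (hs : S.c j ≤ s) (hs' : s ≤ S.b j + S.A) : (g s, s - g s) ∈ S.L := by
  by_contra hcon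
  have hP := h0.path j h1 h2
  have a1 := h.path.nonneg s
  have a2 := h.path.le_right s
  have a3 := h.path.le_b hs'
  have a4 := h.path.le_c hs
  rcases lt_trichotomy (g s) (f0 j s) with hlt | heq | hgt
  · obtain ⟨C, hC, c1, c2⟩ := S.upper_fill hP (h0.mem j h1 h2) (g s, s - g s) a1
      (by simp only; omega) (by simpa using hlt) hcon
    have := h.upper (C.1 + (S.n - j), C.2 - (S.n - j)) (by left; simpa using hC) s hs hs'
    simp only at *; omega
  · rw [heq] at hcon; exact hcon (h0.mem j h1 h2 s hs hs')
  · obtain ⟨C, hC, c1, c2⟩ := S.lower_fill hP (h0.mem j h1 h2) (g s, s - g s) a3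
      (by simp only; omega) (by simpa using hgt) hcon
    have := h.lower (C.1 + 1 - j, C.2 + j - 1) (by rw [mem_D]; simpa using hC) s hs hs'
    unfold phi at this
    simp only at *; omega

/-- The maxima for the individual paths are attained simultaneously. -/
theorem exists_max {N : ℕ → ℕ}
    (hN : ∀ j, 1 ≤ j → j ≤ S.n → (∃ g, S.Adm j g ∧ (S.turns j g).card = N j) ∧
      ∀ g, S.Adm j g → (S.turns j g).card ≤ N j) :
    ∃ f, S.Fam S.n f ∧ (S.allturns S.n f).card = ∑ j ∈ Finset.Icc 1 S.n, N j := by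
  classical
  have hle : ∀ j, 1 ≤ j → j ≤ S.n → ∀ R, S.Ch j R → R.card ≤ N j := fun j h1 h2 R hR =>
    (Finset.card_le_card (hR.subset_turns h0 h1 h2)).trans ((hN j h1 h2).2 _ (hR.adm h0 h1 h2))
  have hmx : ∀ j, 1 ≤ j → j ≤ S.n → ∃ R, S.Ch j R ∧ R.card = N j := fun j h1 h2 => by
    obtain ⟨g, hg, hg'⟩ := (hN j h1 h2).1
    exact ⟨_, hg.turns_ch h0, hg'⟩
  have main : ∀ k ≤ S.n, ∃ R : ℕ → Finset (ℤ × ℤ),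
      ∀ j, S.n < j + k → j ≤ S.n → (S.Ch j (R j) ∧ (R j).card = N j) ∧ (j < S.n →
        ∀ s, S.c (j + 1) ≤ s → s ≤ S.b (j + 1) + S.A →
          S.outer (j + 1) (R (j + 1)) s < S.outer j (R j) s) := by
    intro k
    induction k with
    | zero => exact fun _ => ⟨fun _ => ∅, fun j h1 h2 => by omega⟩
    | succ k ih =>
      intro hk
      obtain ⟨R, hR⟩ := ih (by omega)
      obtain ⟨R1, hR1, hR1'⟩ := hmx (S.n - k) (by omega) (by omega)
      obtain ⟨R2, hR2, hR2', hR2''⟩ : ∃ R2, S.Ch (S.n - k) R2 ∧ R2.card = N (S.n - k) ∧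
          (S.n - k < S.n → ∀ s, S.c (S.n - k + 1) ≤ s → s ≤ S.b (S.n - k + 1) + S.A →
          S.outer (S.n - k + 1) (R (S.n - k + 1)) s < S.outer (S.n - k) R2 s) := by
        by_cases hlt : S.n - k < S.n
        · obtain ⟨⟨q1, q2⟩, -⟩ := hR (S.n - k + 1) (by omega) (by omega)
          obtain ⟨R2, a1, a2, a3⟩ := exchange h0 (by omega) hlt hR1 q1
            (fun Q' hQ' => by rw [q2]; exact hle _ (by omega) (by omega) Q' hQ')
          exact ⟨R2, a1, le_antisymm (hle _ (by omega) (by omega) _ a1) (by omega), fun _ => a3⟩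
        · exact ⟨R1, hR1, hR1', fun h => absurd h hlt⟩
      refine ⟨Function.update R (S.n - k) R2, fun j j1 j2 => ?_⟩
      by_cases hj : j = S.n - k
      · subst hj
        rw [Function.update_self, Function.update_of_ne (by omega)]
        exact ⟨⟨hR2, hR2'⟩, hR2''⟩
      · rw [Function.update_of_ne hj, Function.update_of_ne (by omega)]
        exact hR j (by omega) j2
  obtain ⟨R, hR⟩ := main S.n le_rfl
  let f : ℕ → ℤ → ℤ := fun j => if 1 ≤ j ∧ j ≤ S.n then S.outer j (R j) else 0
  have hfj : ∀ j, 1 ≤ j → j ≤ S.n → f j = S.outer j (R j) := fun j h1 h2 => by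
    simp only [f]; rw [if_pos ⟨h1, h2⟩]
  have hfam : S.Fam S.n f := by
    refine ⟨fun j h1 h2 => ?_, fun j h1 h2 s s1 s2 => ?_, fun j h1 h2 => ?_, fun j hj => ?_⟩
    · rw [hfj j h1 h2]; exact ((hR j (by omega) h2).1.1.adm h0 h1 h2).path
    · rw [hfj j h1 h2]
      exact ((hR j (by omega) h2).1.1.adm h0 h1 h2).mem h0 h1 h2 s1 s2
    · rw [hfj j h1 (by omega), hfj (j + 1) (by omega) (by omega)]
      exact (hR j (by omega) h2.le).2 h2
    · simp only [f]; rw [if_neg hj]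
  refine ⟨f, hfam, ?_⟩
  rw [hfam.card_allturns]
  refine Finset.sum_congr rfl fun j hj => ?_
  rw [Finset.mem_Icc] at hj
  refine le_antisymm ((hN j hj.1 hj.2).2 _ (Fam.adm h0 hfam hj.1 hj.2)) ?_
  have hRj := (hR j (by omega) hj.2).1
  rw [hfj j hj.1 hj.2, ← hRj.2]
  exact Finset.card_le_card (hRj.1.subset_turns h0 hj.1 hj.2)

/-- The number of turns of a family is bounded by the sum of the bounds for the individual paths. -/
theorem allturns_le {N : ℕ → ℕ}
    (hN : ∀ j, 1 ≤ j → j ≤ S.n → ∀ g, S.Adm j g → (S.turns j g).card ≤ N j)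
    {f : ℕ → ℤ → ℤ} (hf : S.Fam S.n f) :
    (S.allturns S.n f).card ≤ ∑ j ∈ Finset.Icc 1 S.n, N j := by
  rw [hf.card_allturns]
  refine Finset.sum_le_sum fun j hj => ?_
  rw [Finset.mem_Icc] at hj
  exact hN j hj.1 hj.2 _ (Fam.adm h0 hf hj.1 hj.2)

end
end Region
end LadderCor

/-! ### Lattice paths as lists -/

namespace LadderCor

/-- The list of points of the path encoded by `g` on the `k + 1` antidiagonals from `x + y = s`
on. -/
def pathList (g : ℤ → ℤ) : ℤ → ℕ → List (ℤ × ℤ)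
  | s, 0 => [(g s, s - g s)]
  | s, k + 1 => (g s, s - g s) :: pathList g (s + 1) k

theorem mem_pathList {g : ℤ → ℤ} {k : ℕ} {s : ℤ} {p : ℤ × ℤ} : p ∈ pathList g s k ↔
    s ≤ p.1 + p.2 ∧ p.1 + p.2 ≤ s + k ∧ g (p.1 + p.2) = p.1 := by
  obtain ⟨x, y⟩ := p
  induction k generalizing s with
  | zero =>
    simp only [pathList, List.mem_singleton, Prod.mk.injEq]
    constructor
    · rintro ⟨rfl, rfl⟩; simp
    · rintro ⟨h1, h2, h3⟩
      have : s = x + y := by push_cast at h2; omega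
      subst this; omega
  | succ k ih =>
    simp only [pathList, List.mem_cons, Prod.mk.injEq, ih]
    constructor
    · rintro (⟨rfl, rfl⟩ | ⟨h1, h2, h3⟩)
      · simp; omega
      · push_cast; exact ⟨by omega, by omega, h3⟩
    · rintro ⟨h1, h2, h3⟩
      push_cast at h2
      by_cases e : s = x + y
      · subst e; left; omega
      · right; exact ⟨by omega, by omega, h3⟩

theorem pathList_congr {g g' : ℤ → ℤ} {k : ℕ} {s : ℤ} (h : ∀ r, s ≤ r → r ≤ s + k → g r = g' r) :
    pathList g s k = pathList g' s k := by
  induction k generalizing s with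
  | zero => simp only [pathList]; rw [h s le_rfl (by simp)]
  | succ k ih =>
    simp only [pathList]
    rw [h s le_rfl (by push_cast; omega), ih]
    intro r h1 h2; exact h r (by omega) (by push_cast; omega)

theorem isLatticePath_pathList {g : ℤ → ℤ} (h1 : ∀ s, g s ≤ g (s + 1))
    (h2 : ∀ s, g (s + 1) ≤ g s + 1) (k : ℕ) (s : ℤ) :
    IsLatticePathFrom (pathList g s k) (g s, s - g s) (g (s + k), s + k - g (s + k)) := by
  unfold IsLatticePathFrom
  induction k generalizing s with
  | zero => simp [pathList]; exact List.isChain_singleton _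
  | succ k ih =>
    obtain ⟨i1, i2, i3⟩ := ih (s + 1)
    simp only [pathList]
    have e : s + ((k + 1 : ℕ) : ℤ) = s + 1 + k := by push_cast; ring
    rw [e]
    cases hp : pathList g (s + 1) k with
    | nil => rw [hp] at i2; simp at i2
    | cons a l =>
      rw [hp] at i1 i2 i3
      simp only [List.head?_cons, Option.some.injEq] at i2
      refine ⟨?_, by simp, by rw [List.getLast?_cons_cons]; exact i3⟩
      refine List.isChain_cons_cons.mpr ⟨?_, i1⟩
      subst i2
      simp only [Prod.mk.injEq]
      have := h1 s; have := h2 s; omega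

/-- Each lattice path arises from a function which is constant before the starting point and of
slope one beyond the end point. -/
theorem exists_pathList (P : List (ℤ × ℤ)) : ∀ (X E : ℤ × ℤ), IsLatticePathFrom P X E →
    ∃ (g : ℤ → ℤ) (k : ℕ), P = pathList g (X.1 + X.2) k ∧ E.1 + E.2 = X.1 + X.2 + k ∧
      (∀ s, g s ≤ g (s + 1)) ∧ (∀ s, g (s + 1) ≤ g s + 1) ∧ (∀ s, s ≤ X.1 + X.2 → g s = X.1) ∧
      (∀ s, E.1 + E.2 ≤ s → g s = s - E.2) := by
  induction P with
  | nil => intro X E h; simp [IsLatticePathFrom] at h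
  | cons p l ih =>
    rintro X E ⟨h1, h2, h3⟩
    simp only [List.head?_cons, Option.some.injEq] at h2
    subst h2
    cases l with
    | nil =>
      simp only [List.getLast?_singleton, Option.some.injEq] at h3
      subst h3
      refine ⟨fun s => max p.1 (s - p.2), 0, ?_, by simp, by intro s; dsimp only; omega,
        by intro s; dsimp only; omega, by intro s hs; dsimp only; omega,
        by intro s hs; dsimp only; omega⟩
      simp [pathList]
    | cons a l =>
      rw [List.getLast?_cons_cons] at h3
      obtain ⟨h4, h5⟩ := List.isChain_cons_cons.mp h1
      obtain ⟨g, k, i1, i2, i3, i4, i5, i6⟩ := ih a E ⟨h5, rfl, h3⟩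
      have ha : a.1 + a.2 = p.1 + p.2 + 1 := by
        rcases h4 with rfl | rfl <;> simp <;> ring
      have hg : g (p.1 + p.2) = a.1 := i5 _ (by omega)
      have hg1 : g (p.1 + p.2 + 1) = a.1 := i5 _ (by omega)
      have ha1 : a.1 = p.1 ∨ a.1 = p.1 + 1 := by rcases h4 with rfl | rfl <;> simp
      refine ⟨fun s => if s ≤ p.1 + p.2 then p.1 else g s, k + 1, ?_, by push_cast; omega,
        ?_, ?_, ?_, ?_⟩
      · simp only [pathList]
        rw [i1, ha]
        congr 1
        · simp
        · exact pathList_congr fun r h _ => by rw [if_neg (by omega)]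
      · intro s
        dsimp only
        split_ifs with c1 c2
        · exact le_rfl
        · obtain rfl : s = p.1 + p.2 := by omega
          omega
        · omega
        · exact i3 s
      · intro s
        dsimp only
        split_ifs with c1 c2
        · omega
        · omega
        · obtain rfl : s = p.1 + p.2 := by omega
          omega
        · exact i4 s
      · intro s hs; dsimp only; rw [if_pos hs]
      · intro s hs; dsimp only; rw [if_neg (by omega)]; exact i6 s hs

/-- The NE-turns of a lattice path in terms of the function that encodes it. -/
theorem countP_NETurns (g : ℤ → ℤ) (P : ℤ × ℤ → Prop) [DecidablePred P] (k : ℕ) (s : ℤ) :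
    (NETurns (pathList g s k)).countP (fun p => decide (P p)) =
      ((Finset.Ioo s (s + k)).filter fun t =>
        g (t - 1) = g t ∧ g (t + 1) = g t + 1 ∧ P (g t, t - g t)).card := by
  induction k generalizing s with
  | zero => simp [pathList, NETurns]
  | succ k ih =>
    have hI : Finset.Ioo s (s + ((k + 1 : ℕ) : ℤ)) = if k = 0 then ∅ else
        insert (s + 1) (Finset.Ioo (s + 1) (s + 1 + k)) := by
      ext r; split_ifs with h <;> simp <;> omega
    have hn : s + 1 ∉ Finset.Ioo (s + 1) (s + 1 + (k : ℤ)) := by simp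
    rw [hI]
    have ih' := ih (s + 1)
    cases k with
    | zero => simp [pathList, NETurns]
    | succ k =>
      rw [if_neg (by omega), Finset.filter_insert]
      have e : ∃ l, pathList g (s + 1 + 1) k = (g (s + 1 + 1), s + 1 + 1 - g (s + 1 + 1)) :: l := by
        cases k <;> exact ⟨_, rfl⟩
      obtain ⟨l, hl⟩ := e
      simp only [pathList, hl] at ih' ⊢
      rw [NETurns, List.countP_append, ih']
      simp only [Prod.mk.injEq]
      have e1 : (g (s + 1) = g s ∧ s + 1 - g (s + 1) = s - g s + 1) ↔ g (s + 1 - 1) = g (s + 1) := by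
        rw [show s + 1 - 1 = s by ring]; omega
      have e2 : (g (s + 1 + 1) = g (s + 1) + 1 ∧ s + 1 + 1 - g (s + 1 + 1) = s + 1 - g (s + 1)) ↔
        g (s + 1 + 1) = g (s + 1) + 1 := by omega
      simp only [e1, e2]
      by_cases c1 : g (s + 1 - 1) = g (s + 1) ∧ g (s + 1 + 1) = g (s + 1) + 1
      · rw [if_pos c1]
        by_cases c2 : P (g (s + 1), s + 1 - g (s + 1))
        · rw [if_pos ⟨c1.1, c1.2, c2⟩, Finset.card_insert_of_notMem (by
            intro hc; exact hn (Finset.mem_of_mem_filter _ hc))]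
          simp [c2]; omega
        · rw [if_neg (by tauto)]; simp [c2]
      · rw [if_neg c1, if_neg (by tauto)]; simp

/-- A lattice path between the prescribed end points is encoded by a function with `IsPath`. -/
theorem lattice_iff {A c b : ℤ} {P : List (ℤ × ℤ)} (h : IsLatticePathFrom P (0, c) (b, A)) :
    ∃ g k, P = pathList g c k ∧ b + A = c + (k : ℕ) ∧ IsPath A c b g := by
  obtain ⟨g, k, h1, h2, h3, h4, h5, h6⟩ := exists_pathList P _ _ h
  simp only [zero_add] at *
  exact ⟨g, k, h1, h2, h3, h4, h5, h6⟩

theorem IsPath.lattice {A c b : ℤ} {g : ℤ → ℤ} (h : IsPath A c b g) {k : ℕ} (hk : b + A = c + k) :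
    IsLatticePathFrom (pathList g c k) (0, c) (b, A) := by
  have := isLatticePath_pathList h.mono h.lip k c
  rw [h.left c le_rfl, ← hk, h.right _ le_rfl] at this
  simpa using this

theorem staysSE_iff {g : ℤ → ℤ} {c : ℤ} {k : ℕ} {p : ℤ × ℤ} : StaysSE (pathList g c k) p ↔
    ∀ s, c ≤ s → s ≤ c + k → min p.1 (s - p.2) ≤ g s := by
  unfold StaysSE WeaklySE
  constructor
  · intro h s h1 h2
    have := h (g s, s - g s) (mem_pathList.mpr (by simp [h1, h2]))
    simp only at this; omega
  · rintro h ⟨x, y⟩ hp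
    obtain ⟨h1, h2, h3⟩ := mem_pathList.mp hp
    have := h _ h1 h2
    simp only at *; omega

theorem staysNW_iff {g : ℤ → ℤ} {c : ℤ} {k : ℕ} {p : ℤ × ℤ} : StaysNW (pathList g c k) p ↔
    ∀ s, c ≤ s → s ≤ c + k → g s ≤ phi p s := by
  unfold StaysNW WeaklyNW phi
  constructor
  · intro h s h1 h2
    have := h (g s, s - g s) (mem_pathList.mpr (by simp [h1, h2]))
    simp only at this; omega
  · rintro h ⟨x, y⟩ hp
    obtain ⟨h1, h2, h3⟩ := mem_pathList.mp hp
    have := h _ h1 h2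
    simp only at *; omega

namespace Region

/-- The region of a ladder, with the end points prescribed by the bivector. -/
theorem exists_region {A B n : ℕ}
    {Λ : Set (Fin (A + 1) × Fin (B + 1))} (hΛ : IsLadder Λ) {u v : ℕ → ℕ}
    (hu_mono : ∀ i j, 1 ≤ i → i < j → j ≤ n → u i < u j)
    (hv_mono : ∀ i j, 1 ≤ i → i < j → j ≤ n → v i < v j)
    (hu_range : ∀ i, 1 ≤ i → i ≤ n → 1 ≤ u i ∧ u i ≤ A + 1)
    (hv_range : ∀ i, 1 ≤ i → i ≤ n → 1 ≤ v i ∧ v i ≤ B + 1) :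
    ∃ S : Region, S.A = A ∧ S.n = n ∧ (∀ p, p ∈ S.L ↔ p ∈ ladderRegion Λ) ∧
      (∀ j, S.c j = (u j : ℤ) - 1) ∧ (∀ j, S.b j = (B : ℤ) - v j + 1) := by
  classical
  have hfin : (ladderRegion Λ).Finite := by
    refine (Set.toFinite (Set.range fun q : Fin (A + 1) × Fin (B + 1) =>
      (((q.2 : ℕ) : ℤ), (A : ℤ) - ((q.1 : ℕ) : ℤ)))).subset ?_
    rintro p ⟨q, hq, rfl⟩
    exact ⟨q, rfl⟩
  refine ⟨⟨A, n, hfin.toFinset, fun j => (u j : ℤ) - 1, fun j => (B : ℤ) - v j + 1, ?_, ?_, ?_, ?_,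
    ?_, ?_⟩, rfl, rfl, by simp, fun _ => rfl, fun _ => rfl⟩
  · intro p hp q hq r h1 h2 h3 h4
    simp only [Set.Finite.mem_toFinset] at *
    obtain ⟨⟨i, j⟩, hp, rfl⟩ := hp
    obtain ⟨⟨i', j'⟩, hq, rfl⟩ := hq
    simp only at h1 h2 h3 h4
    have a1 := i'.2
    have a2 := j'.2
    refine ⟨(⟨(A - r.2).toNat, by omega⟩, ⟨r.1.toNat, by omega⟩), ?_, ?_⟩
    · exact hΛ _ hp _ hq (by rw [Fin.le_def]; simp only; omega) (by rw [Fin.le_def]; simp only; omega)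
        _ _ (by rw [Fin.le_def]; simp only; omega) (by rw [Fin.le_def]; simp only; omega)
        (by rw [Fin.le_def]; simp only; omega) (by rw [Fin.le_def]; simp only; omega)
    · ext <;> simp only <;> omega
  · intro p hp
    simp only [Set.Finite.mem_toFinset] at hp
    obtain ⟨⟨i, j⟩, hp, rfl⟩ := hp
    simp only; omega
  · intro j h1 h2; have := hu_mono j (j + 1) h1 (by omega) h2; omega
  · intro j h1 h2; have := hv_mono j (j + 1) h1 (by omega) h2; omega
  · intro j h1 h2; have := hu_range j h1 h2; omega
  · intro j h1 h2; have := hv_range j h1 h2; omega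

variable {S : Region}

/-- A family of non-intersecting lattice paths yields an encoded family. Consecutive paths are in
the order of their starting points, as they do not cross. -/
theorem exists_fam (F : ℕ → List (ℤ × ℤ))
    (hF : ∀ j, 1 ≤ j → j ≤ S.n → IsLatticePathFrom (F j) (0, S.c j) (S.b j, S.A))
    (hL : ∀ j, 1 ≤ j → j ≤ S.n → ∀ p ∈ F j, p ∈ S.L)
    (hN : ∀ j, 1 ≤ j → j < S.n → ∀ p, p ∈ F j → p ∉ F (j + 1)) :
    ∃ f, S.Fam S.n f := by
  classical
  have H : ∀ j, ∃ g, 1 ≤ j ∧ j ≤ S.n → ∃ k : ℕ, F j = pathList g (S.c j) k ∧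
      S.b j + S.A = S.c j + k ∧ IsPath S.A (S.c j) (S.b j) g := by
    intro j
    by_cases h : 1 ≤ j ∧ j ≤ S.n
    · obtain ⟨g, k, h1⟩ := lattice_iff (hF j h.1 h.2)
      exact ⟨g, fun _ => ⟨k, h1⟩⟩
    · exact ⟨0, fun h' => absurd h' h⟩
  choose g hg using H
  have hm : ∀ j, 1 ≤ j → j ≤ S.n → ∀ s, S.c j ≤ s → s ≤ S.b j + S.A →
      (g j s, s - g j s) ∈ F j := by
    intro j h1 h2 s h3 h4
    obtain ⟨k, e, hk, hp⟩ := hg j ⟨h1, h2⟩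
    rw [e, mem_pathList]
    simp only [add_sub_cancel]
    exact ⟨h3, by omega, trivial⟩
  refine ⟨fun j => if 1 ≤ j ∧ j ≤ S.n then g j else 0, ?_, ?_, ?_, ?_⟩
  · intro j h1 h2
    simp only [h1, h2, and_self, if_true]
    obtain ⟨k, e, hk, hp⟩ := hg j ⟨h1, h2⟩
    exact hp
  · intro j h1 h2 s h3 h4
    simp only [h1, h2, and_self, if_true]
    exact hL j h1 h2 _ (hm j h1 h2 s h3 h4)
  · intro j h1 h2
    have h2' : j + 1 ≤ S.n := h2
    simp only [h1, h2.le, h2', show 1 ≤ j + 1 by omega, and_self, if_true]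
    obtain ⟨k, e, hk, hp⟩ := hg j ⟨h1, h2.le⟩
    obtain ⟨k', e', hk', hp'⟩ := hg (j + 1) ⟨by omega, h2⟩
    have hc := S.c_lt j h1 h2
    have hb := S.b_lt j h1 h2
    have hne : ∀ s, S.c (j + 1) ≤ s → s ≤ S.b (j + 1) + S.A → g (j + 1) s ≠ g j s := by
      intro s h3 h4 he
      refine hN j h1 h2 _ (hm j h1 h2.le s (by omega) (by omega)) ?_
      rw [← he]
      exact hm (j + 1) (by omega) h2 s h3 h4
    intro s hs
    induction s, hs using Int.leInduction with
    | base =>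
      intro h4
      have := hne _ le_rfl h4
      have := hp.nonneg (S.c (j + 1))
      have := hp'.left _ le_rfl
      omega
    | succ s hs ih =>
      intro h4
      have := hne (s + 1) (by omega) h4
      have := ih (by omega)
      have := hp.mono s
      have := hp'.lip s
      omega
  · intro j h; simp only [if_neg h]

/-- Admissibility and the number of counted turns agree with the conditions on lists of points. -/
theorem adm_count {p q : ℕ} {x y : Fin p → ℤ} {z w : Fin q → ℤ}
    (hU : ∀ P : ℤ × ℤ, P ∈ S.CU ↔ ∃ k : Fin p, P = (x k, y k))
    (hD : ∀ P : ℤ × ℤ, P ∈ S.DL ↔ ∃ k : Fin q, P = (z k, w k))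
    {j : ℕ} {g : ℤ → ℤ} (hg : IsPath S.A (S.c j) (S.b j) g)
    {k : ℕ} (hk : S.b j + S.A = S.c j + k) :
    (S.Adm j g ↔ (∀ k', j < k' → k' ≤ S.n →
        StaysSE (pathList g (S.c j) k) ((k' : ℤ) - j, S.c k' - k' + j)) ∧
      (∀ k', j < k' → k' ≤ S.n →
        StaysSE (pathList g (S.c j) k) (S.b k' + k' - j, S.A - k' + j)) ∧
      (∀ k', StaysSE (pathList g (S.c j) k) (x k' + S.n - j, y k' - S.n + j)) ∧
      (∀ k', StaysNW (pathList g (S.c j) k) (z k' - j + 1, w k' + j - 1))) ∧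
    (NETurns (pathList g (S.c j) k)).countP (fun pt => decide (∀ k' : Fin q,
          pt ≠ (z k' - j + 1, w k' + j - 1))) = (S.turns j g).card := by
  have hDj : ∀ P, P ∈ S.D j ↔ ∃ k' : Fin q, P = (z k' - j + 1, w k' + j - 1) := by
    intro P
    rw [mem_D, hD]
    constructor
    · rintro ⟨k', h⟩; refine ⟨k', ?_⟩
      simp only [Prod.mk.injEq] at h
      ext <;> simp only <;> omega
    · rintro ⟨k', rfl⟩; exact ⟨k', by ext <;> simp only <;> ring⟩
  constructor
  · constructor
    · intro h
      refine ⟨fun k' h3 h4 => staysSE_iff.mpr ?_, fun k' h3 h4 => staysSE_iff.mpr ?_,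
        fun k' => staysSE_iff.mpr ?_, fun k' => staysNW_iff.mpr ?_⟩
      · rw [← hk]; exact h.upper _ (Or.inr ⟨k', h3, h4, Or.inl (by ext <;> simp only; ring)⟩)
      · rw [← hk]
        exact h.upper _ (Or.inr ⟨k', h3, h4, Or.inr (by ext <;> simp only <;> ring)⟩)
      · rw [← hk]; exact h.upper _ (Or.inl ((hU _).mpr ⟨k', by ext <;> simp only <;> ring⟩))
      · rw [← hk]; exact h.lower _ ((hDj _).mpr ⟨k', rfl⟩)
    · rintro ⟨a1, a2, a3, a4⟩
      refine ⟨hg, ?_, ?_⟩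
      · rw [hk]
        rintro P (h | ⟨k', h3, h4, h | h⟩)
        · obtain ⟨k', h⟩ := (hU _).mp h
          have := staysSE_iff.mp (a3 k')
          simp only [Prod.mk.injEq] at h
          rw [show P = (x k' + S.n - j, y k' - S.n + j) by ext <;> simp only <;> omega]
          exact this
        · rw [show P = ((k' : ℤ) - j, S.c k' - k' + j) by rw [h]; ext <;> simp only; ring]
          exact staysSE_iff.mp (a1 k' h3 h4)
        · rw [show P = (S.b k' + k' - j, S.A - k' + j) by rw [h]; ext <;> simp only <;> ring]
          exact staysSE_iff.mp (a2 k' h3 h4)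
      · rw [hk]
        intro P hP
        obtain ⟨k', rfl⟩ := (hDj _).mp hP
        exact staysNW_iff.mp (a4 k')
  · rw [countP_NETurns]
    unfold turns
    rw [Finset.card_image_of_injOn]
    · rw [hk]
      congr 1
      ext t
      simp only [Finset.mem_filter]
      rw [hDj]
      push Not
      rfl
    · intro a _ b _ h
      simp only [Prod.mk.injEq] at h; omega

end Region
end LadderCor

/-! ### Burge growth diagrams -/

namespace LadderCor

/-- `ν` is obtained from `κ`, `lam`, `μ` and the entry `m` by the local rule of the Burge
correspondence: from the bottom up, `lam + μ - κ` is truncated at the preceding part of `κ`, the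
excess being carried over to the preceding part; the carry at the bottom is `m`. -/
def Step (N : ℕ) (κ lam μ : ℕ → ℕ) (m : ℕ) (ν : ℕ → ℕ) : Prop :=
  ∃ c : ℕ → ℕ, ν 0 + κ 0 = c 0 + lam 0 + μ 0 ∧
    (∀ k, ν (k + 1) + c k + κ (k + 1) = c (k + 1) + lam (k + 1) + μ (k + 1)) ∧
    (∀ k, ν (k + 1) ≤ κ k) ∧ (∀ k, c k = 0 ∨ ν (k + 1) = κ k) ∧ ∀ k, N ≤ k → c k = m

/-- `lam / κ` is a horizontal strip. -/
def Interl (κ lam : ℕ → ℕ) : Prop := ∀ k, κ k ≤ lam k ∧ lam (k + 1) ≤ κ k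

/-- The sequence of carries, found from the bottom up. -/
theorem exists_carry (m : ℕ) (N : ℕ) : ∀ (κ x : ℕ → ℕ), (∀ k, N ≤ k → κ k = 0 ∧ x k = 0) →
    ∃ c : ℕ → ℕ, (∀ k, c k = c (k + 1) + x (k + 1) - κ k) ∧ ∀ k, N ≤ k → c k = m := by
  induction N with
  | zero => intro κ x h; exact ⟨fun _ => m, fun k => by simp [h], fun _ _ => rfl⟩
  | succ N ih =>
    intro κ x h
    obtain ⟨c, h1, h2⟩ := ih (fun k => κ (k + 1)) (fun k => x (k + 1))
      fun k hk => h (k + 1) (by omega)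
    refine ⟨fun k => Nat.casesOn k (c 0 + x 1 - κ 0) c, ?_, ?_⟩
    · rintro (_ | k)
      · rfl
      · exact h1 k
    · rintro (_ | k) hk
      · omega
      · exact h2 k (by omega)

/-- The local rule can always be applied. -/
theorem exists_step {N : ℕ} {κ lam μ : ℕ → ℕ} (m : ℕ)
    (h : ∀ k, N ≤ k → κ k = 0 ∧ lam k = 0 ∧ μ k = 0) (h1 : Interl κ lam) :
    ∃ ν, Step N κ lam μ m ν := by
  obtain ⟨c, hc, hN⟩ := exists_carry m N κ (fun k => lam k + μ k - κ k) fun k hk => by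
    have := h k hk; omega
  refine ⟨fun k => Nat.casesOn k (c 0 + (lam 0 + μ 0 - κ 0))
    fun k => min (c (k + 1) + (lam (k + 1) + μ (k + 1) - κ (k + 1))) (κ k), c, ?_, ?_, ?_, ?_, hN⟩
  · have := (h1 0).1
    change c 0 + (lam 0 + μ 0 - κ 0) + κ 0 = c 0 + lam 0 + μ 0
    omega
  · intro k
    have := (h1 (k + 1)).1
    have := hc k
    simp only; omega
  · intro k; simp only; omega
  · intro k; have := hc k; simp only; omega

/-- The local rule produces horizontal strips. -/
theorem Step.interl_left {N : ℕ} {κ lam μ ν : ℕ → ℕ} {m : ℕ} (h : Step N κ lam μ m ν)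
    (h1 : Interl κ lam) (h2 : Interl κ μ) : Interl lam ν := by
  obtain ⟨c, e0, e1, e2, e3, -⟩ := h
  intro k
  refine ⟨?_, (e2 k).trans (h1 k).1⟩
  cases k with
  | zero => have := (h2 0).1; omega
  | succ k =>
    have := (h2 (k + 1)).1; have := (h1 k).2; have := e1 k; have := e3 k; omega

/-- The local rule is symmetric in the two middle partitions. -/
theorem Step.symm {N : ℕ} {κ lam μ ν : ℕ → ℕ} {m : ℕ} (h : Step N κ lam μ m ν) :
    Step N κ μ lam m ν := by
  obtain ⟨c, e0, e1, e2, e3, e4⟩ := h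
  exact ⟨c, by omega, fun k => by have := e1 k; omega, e2, e3, e4⟩

/-- The local rule is invertible: `κ` and `m` are determined from the top part downwards. -/
theorem Step.inj {N : ℕ} {κ κ' lam μ ν : ℕ → ℕ} {m m' : ℕ} (h : Step N κ lam μ m ν)
    (h' : Step N κ' lam μ m' ν) : κ = κ' ∧ m = m' := by
  obtain ⟨c, e0, e1, e2, e3, e4⟩ := h
  obtain ⟨c', e0', e1', e2', e3', e4'⟩ := h'
  have key : ∀ k, κ k = κ' k ∧ c k = c' k := by
    intro k
    induction k with
    | zero => have := e2 0; have := e3 0; have := e2' 0; have := e3' 0; omega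
    | succ k ih =>
      have := e1 k; have := e1' k
      have := e2 (k + 1); have := e3 (k + 1); have := e2' (k + 1); have := e3' (k + 1); omega
  exact ⟨funext fun k => (key k).1, by rw [← e4 N le_rfl, ← e4' N le_rfl, (key N).2]⟩

/-- The sizes of the partitions change by the entry `m`. -/
theorem Step.sum {N : ℕ} {κ lam μ ν : ℕ → ℕ} {m : ℕ} (h : Step N κ lam μ m ν) {K : ℕ}
    (hK : N ≤ K) : ∑ k ∈ Finset.range (K + 1), ν k + ∑ k ∈ Finset.range (K + 1), κ k =
      m + ∑ k ∈ Finset.range (K + 1), lam k + ∑ k ∈ Finset.range (K + 1), μ k := by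
  obtain ⟨c, e0, e1, e2, e3, e4⟩ := h
  rw [← e4 K hK]
  clear hK
  induction K with
  | zero => simpa using e0
  | succ K ih =>
    rw [Finset.sum_range_succ ν, Finset.sum_range_succ κ, Finset.sum_range_succ lam,
      Finset.sum_range_succ μ]
    have := e1 K; omega

/-- A nonzero part absent from `lam` and `μ` requires a nonzero entry `m` and a nonzero preceding
part of `κ`. -/
theorem Step.ne_zero {N : ℕ} {κ lam μ ν : ℕ → ℕ} {m : ℕ} (h : Step N κ lam μ m ν)
    (h1 : Interl κ lam) (h2 : Interl κ μ) {k : ℕ} (hk : ν k ≠ 0) :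
    lam k ≠ 0 ∨ μ k ≠ 0 ∨ (m ≠ 0 ∧ (k = 0 ∨ ∃ j, k = j + 1 ∧ κ j ≠ 0)) := by
  by_contra! hc
  obtain ⟨c1, c2, c3⟩ := hc
  obtain ⟨c, e0, e1, e2, e3, e4⟩ := h
  have hz : ∀ r, lam (k + r) = 0 ∧ μ (k + r) = 0 ∧ κ (k + r) = 0 := by
    intro r
    induction r with
    | zero => have := (h1 k).1; simp only [Nat.add_zero]; omega
    | succ r ih =>
      have := (h1 (k + r)).2; have := (h2 (k + r)).2; have := (h1 (k + r + 1)).1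
      rw [show k + (r + 1) = k + r + 1 by ring]; omega
  have hcm : ∀ r, c k ≤ c (k + r) := by
    intro r
    induction r with
    | zero => exact le_rfl
    | succ r ih =>
      have := e1 (k + r)
      have := hz (r + 1)
      rw [show k + (r + 1) = k + r + 1 by ring] at *
      omega
  have hm : c k ≤ m := by rw [← e4 (k + N) (by omega)]; exact hcm N
  have hz0 := hz 0
  simp only [Nat.add_zero] at hz0
  rcases k with _ | j
  · have := (c3 (by omega)).1; simp at this
  · have := e1 j
    have := e2 j
    obtain ⟨-, h⟩ := c3 (by omega)
    have := h j rfl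
    omega

open Classical in
/-- The growth diagram of the matrix `m` under the Burge local rule. -/
noncomputable def G (m : ℕ → ℕ → ℕ) : ℕ → ℕ → ℕ → ℕ
  | 0, _ => 0
  | _ + 1, 0 => 0
  | i + 1, j + 1 =>
    if h : ∃ ν, Step (i + 1) (G m i j) (G m i (j + 1)) (G m (i + 1) j) (m i j) ν then h.choose
    else 0

section
variable (m : ℕ → ℕ → ℕ)

theorem G_zero_left (j : ℕ) : G m 0 j = 0 := by cases j <;> simp [G]

theorem G_zero_right (i : ℕ) : G m i 0 = 0 := by cases i <;> simp [G]

/-- In row `i` the partitions have at most `i` parts. -/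
theorem G_eq_zero {i j k : ℕ} (h : i ≤ k) : G m i j k = 0 := by
  induction i generalizing j k with
  | zero => rw [G_zero_left]; rfl
  | succ i ih =>
    cases j with
    | zero => rw [G_zero_right]; rfl
    | succ j =>
      rw [G]
      split_ifs with hs
      · obtain ⟨c, e0, e1, e2, e3, e4⟩ := hs.choose_spec
        obtain ⟨k, rfl⟩ : ∃ k', k = k' + 1 := ⟨k - 1, by omega⟩
        have := e2 k
        rw [ih (by omega)] at this
        omega
      · rfl

theorem G_step_aux {i j : ℕ} (h1 : Interl (G m i j) (G m i (j + 1))) :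
    Step (i + 1) (G m i j) (G m i (j + 1)) (G m (i + 1) j) (m i j) (G m (i + 1) (j + 1)) := by
  have : ∃ ν, Step (i + 1) (G m i j) (G m i (j + 1)) (G m (i + 1) j) (m i j) ν :=
    exists_step _ (fun k hk => ⟨G_eq_zero m (by omega), G_eq_zero m (by omega),
      G_eq_zero m (by omega)⟩) h1
  rw [G, dif_pos this]
  exact this.choose_spec

/-- Neighbouring partitions of the growth diagram differ by horizontal strips. -/
theorem G_interl (i : ℕ) : (∀ j, Interl (G m i j) (G m i (j + 1))) ∧
    ∀ j, Interl (G m i j) (G m (i + 1) j) := by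
  have zz : Interl (0 : ℕ → ℕ) 0 := fun k => ⟨le_rfl, le_rfl⟩
  have key : ∀ i, (∀ j, Interl (G m i j) (G m i (j + 1))) →
      ∀ j, Interl (G m i j) (G m (i + 1) j) := by
    intro i hi j
    induction j with
    | zero => rw [G_zero_right, G_zero_right]; exact zz
    | succ j ih => exact (G_step_aux m (hi j)).interl_left (hi j) ih
  induction i with
  | zero =>
    have h : ∀ j, Interl (G m 0 j) (G m 0 (j + 1)) := by
      intro j; rw [G_zero_left, G_zero_left]; exact zz
    exact ⟨h, key 0 h⟩
  | succ i ih =>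
    have h : ∀ j, Interl (G m (i + 1) j) (G m (i + 1) (j + 1)) := fun j =>
      (G_step_aux m (ih.1 j)).symm.interl_left (ih.2 j) (ih.1 j)
    exact ⟨h, key _ h⟩

/-- The defining property of the growth diagram, with existence of the local step already ensured.
-/
theorem G_step (i j : ℕ) :
    Step (i + 1) (G m i j) (G m i (j + 1)) (G m (i + 1) j) (m i j) (G m (i + 1) (j + 1)) :=
  G_step_aux m ((G_interl m i).1 j)

/-- The size of a partition is the sum of the entries in the corresponding rectangle. -/
theorem G_sum {i j K : ℕ} (hK : i ≤ K) : ∑ k ∈ Finset.range (K + 1), G m i j k =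
    ∑ i' ∈ Finset.range i, ∑ j' ∈ Finset.range j, m i' j' := by
  induction i with
  | zero => simp [G_zero_left]
  | succ i ih =>
    rw [Finset.sum_range_succ _ i, ← ih (by omega)]
    clear ih
    induction j with
    | zero => simp [G_zero_right]
    | succ j ih =>
      rw [Finset.sum_range_succ _ j]
      have := (G_step m i j).sum hK
      omega

/-- Nonzero parts are witnessed by chains in the support of the matrix. -/
theorem G_chain {i j k : ℕ} (h : G m i j k ≠ 0) : ∃ l : List (ℕ × ℕ), l.length = k + 1 ∧
    l.Pairwise (fun p q => q.1 < p.1 ∧ q.2 < p.2) ∧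
    ∀ p ∈ l, p.1 < i ∧ p.2 < j ∧ m p.1 p.2 ≠ 0 := by
  induction i generalizing j k with
  | zero => rw [G_zero_left] at h; exact absurd rfl h
  | succ i ihi =>
    induction j generalizing k with
    | zero => rw [G_zero_right] at h; exact absurd rfl h
    | succ j ihj =>
      rcases (G_step m i j).ne_zero ((G_interl m i).1 j) ((G_interl m i).2 j) h with
        h | h | ⟨hm, rfl | ⟨k', rfl, h'⟩⟩
      · obtain ⟨l, h1, h2, h3⟩ := ihi h
        exact ⟨l, h1, h2, fun p hp => by obtain ⟨a, b, c⟩ := h3 p hp; exact ⟨by omega, b, c⟩⟩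
      · obtain ⟨l, h1, h2, h3⟩ := ihj h
        exact ⟨l, h1, h2, fun p hp => by obtain ⟨a, b, c⟩ := h3 p hp; exact ⟨a, by omega, c⟩⟩
      · exact ⟨[(i, j)], rfl, by simp, by simpa using hm⟩
      · obtain ⟨l, h1, h2, h3⟩ := ihi h'
        refine ⟨(i, j) :: l, by simp [h1], List.pairwise_cons.mpr ⟨fun p hp => ?_, h2⟩, ?_⟩
        · obtain ⟨a, b, c⟩ := h3 p hp; exact ⟨a, b⟩
        · intro p hp
          rcases List.mem_cons.mp hp with rfl | hp
          · exact ⟨by simp, by simp, hm⟩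
          · obtain ⟨a, b, c⟩ := h3 p hp; exact ⟨by omega, by omega, c⟩

variable {m}

/-- The growth diagram can be run backwards from its outer boundary. -/
theorem G_inj {m' : ℕ → ℕ → ℕ} {I J : ℕ} (h1 : ∀ i ≤ I, G m i J = G m' i J)
    (h2 : ∀ j ≤ J, G m I j = G m' I j) : ∀ i < I, ∀ j < J, m i j = m' i j := by
  have key : ∀ i j, G m (i + 1) (j + 1) = G m' (i + 1) (j + 1) →
      G m i (j + 1) = G m' i (j + 1) → G m (i + 1) j = G m' (i + 1) j →
      G m i j = G m' i j ∧ m i j = m' i j := by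
    intro i j a1 a2 a3
    have s := G_step m i j
    have s' := G_step m' i j
    rw [a1, a2, a3] at s
    exact s.inj s'
  have hrow : ∀ i ≤ I, ∀ j ≤ J, G m i j = G m' i j := by
    intro i hi
    induction hi using Nat.decreasingInduction with
    | self => exact h2
    | of_succ i hi ih =>
      intro j hj
      induction hj using Nat.decreasingInduction with
      | self => exact h1 i hi.le
      | of_succ j hj ihj =>
        exact (key i j (ih _ hj) ihj (ih _ hj.le)).1
  intro i hi j hj
  exact (key i j (hrow _ hi _ hj) (hrow _ hi.le _ hj) (hrow _ hi _ hj.le)).2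

end
end LadderCor

/-! ### Straightening -/

namespace LadderCor
open MvPolynomial

theorem perm_eq_one {t : ℕ} {e : Equiv.Perm (Fin t)} (h : StrictMono e) : e = 1 := by
  have := Subsingleton.elim (h.orderIsoOfSurjective e e.surjective) (OrderIso.refl (Fin t))
  ext k
  exact congrArg (fun f : Fin t ≃o Fin t => ((f k : Fin t) : ℕ)) this

/-- The strict form of the rearrangement inequality. -/
theorem rearrange {t : ℕ} {r c : Fin t → ℕ} (hr : StrictMono r) (hc : StrictMono c)
    {e : Equiv.Perm (Fin t)} (he : e ≠ 1) : ∑ k, r (e k) * c k < ∑ k, r k * c k := by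
  refine (Monovary.sum_comp_perm_mul_lt_sum_mul_iff
    (hr.monotone.monovary hc.monotone)).mpr fun h => he (perm_eq_one ?_)
  have : Monotone e := by
    intro i j hij
    rcases hij.lt_or_eq with hij | rfl
    · exact hr.le_iff_le.mp (h (hc hij))
    · exact le_rfl
  exact this.strictMono_of_injective e.injective

/-- A set of positions is standard if it contains none of the main diagonals of the minors which
generate the ladder determinantal ideal. -/
def Std {A B : ℕ} (n : ℕ) (u v : ℕ → ℕ) (F : Set (Fin (A + 1) × Fin (B + 1))) : Prop :=
  ∀ l : List (Fin (A + 1) × Fin (B + 1)), l.Pairwise (fun p q => p.1 < q.1 ∧ p.2 < q.2) →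
    (∀ p ∈ l, p ∈ F) → 1 ≤ l.length → l.length ≤ n + 1 →
    ¬ (∀ p ∈ l, A + 2 ≤ (p.1 : ℕ) + u l.length) ∧ ¬ (∀ p ∈ l, B + 2 ≤ (p.2 : ℕ) + v l.length)

/-- The positions that occur in a monomial. -/
def supp {A B : ℕ} {Λ : Set (Fin (A + 1) × Fin (B + 1))} (s : {q // q ∈ Λ} →₀ ℕ) :
    Set (Fin (A + 1) × Fin (B + 1)) := {q | ∃ h : q ∈ Λ, s ⟨q, h⟩ ≠ 0}

section
variable (K : Type*) [Field K] {A B : ℕ} {Λ : Set (Fin (A + 1) × Fin (B + 1))} (hΛ : IsLadder Λ)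
  (n : ℕ) (u v : ℕ → ℕ)

include hΛ in
/-- Straightening: modulo the ideal, each monomial is a linear combination of standard ones of the
same degree. Replacing the main diagonal of a minor by the other terms lowers the sum of the
products of row and column indices, by the rearrangement inequality. -/
theorem spanning (s : {q // q ∈ Λ} →₀ ℕ) :
    (monomial s (1 : K)) ∈ (ladderIdeal K Λ n u v).restrictScalars K ⊔
      Submodule.span K ((fun s' => monomial s' (1 : K)) ''
        {s' : {q // q ∈ Λ} →₀ ℕ | Std n u v (supp s') ∧ s'.degree = s.degree}) := by
  classical
  set W : ({q // q ∈ Λ} →₀ ℕ) →+ ℕ := Finsupp.weight fun q => (q.1.1 : ℕ) * (q.1.2 : ℕ) with hW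
  obtain ⟨N, hN⟩ : ∃ N, W s = N := ⟨_, rfl⟩
  induction N using Nat.strong_induction_on generalizing s with
  | _ N ih =>
  by_cases hs : Std n u v (supp s)
  · exact Submodule.mem_sup_right (Submodule.subset_span ⟨s, ⟨hs, rfl⟩, rfl⟩)
  unfold Std at hs
  push Not at hs
  obtain ⟨l, hl, hF, h1, h2, hbad⟩ := hs
  set t := l.length with ht
  set r : Fin t → Fin (A + 1) := fun k => (l.get k).1 with hr
  set c : Fin t → Fin (B + 1) := fun k => (l.get k).2 with hc
  have hrc : ∀ i j : Fin t, i < j → r i < r j ∧ c i < c j := by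
    intro i j hij
    exact List.pairwise_iff_get.mp hl i j hij
  have hrm : StrictMono r := fun i j h => (hrc i j h).1
  have hcm : StrictMono c := fun i j h => (hrc i j h).2
  have hd : ∀ k, ∃ h : (r k, c k) ∈ Λ, s ⟨(r k, c k), h⟩ ≠ 0 := fun k => hF _ (List.get_mem l k)
  have hmem : ∀ k j, (r k, c j) ∈ Λ := by
    intro k j
    rcases le_total k j with h | h
    · exact hΛ _ (hd k).1 _ (hd j).1 (hrm.monotone h) (hcm.monotone h) _ _ le_rfl
        (hrm.monotone h) (hcm.monotone h) le_rfl
    · exact hΛ _ (hd j).1 _ (hd k).1 (hrm.monotone h) (hcm.monotone h) _ _ (hrm.monotone h) le_rfl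
        le_rfl (hcm.monotone h)
  set e : Equiv.Perm (Fin t) → ({q // q ∈ Λ} →₀ ℕ) :=
    fun σ => ∑ k, Finsupp.single ⟨(r (σ k), c k), hmem _ _⟩ 1 with he
  have hdet : ((ladderMatrix K Λ).submatrix r c).det =
      ∑ σ, Equiv.Perm.sign σ • monomial (e σ) (1 : K) := by
    rw [Matrix.det_apply]
    refine Finset.sum_congr rfl fun σ _ => ?_
    rw [he, monomial_sum_one]
    congr 1
    refine Finset.prod_congr rfl fun k _ => ?_
    rw [Matrix.submatrix_apply, ladderMatrix, dif_pos (hmem _ _)]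
    rfl
  have hI : ((ladderMatrix K Λ).submatrix r c).det ∈ ladderIdeal K Λ n u v := by
    refine Ideal.subset_span ⟨t, h1, h2, r, c, hrm, hcm, hmem, ?_, rfl⟩
    by_cases hb : ∀ p ∈ l, A + 2 ≤ (p.1 : ℕ) + u l.length
    · left; intro k; exact hb _ (List.get_mem l k)
    · right; intro k
      have := hbad (by simpa using hb)
      exact this _ (List.get_mem l k)
  have hle : e 1 ≤ s := by
    intro q
    rw [he]
    simp only [Finsupp.coe_finsetSum, Finset.sum_apply, Equiv.Perm.coe_one, id_eq,
      Finsupp.single_apply]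
    by_cases hq : ∃ k, (⟨(r k, c k), hmem k k⟩ : {q // q ∈ Λ}) = q
    · obtain ⟨k, rfl⟩ := hq
      have : ∀ j, ((⟨(r j, c j), hmem j j⟩ : {q // q ∈ Λ}) = ⟨(r k, c k), hmem k k⟩) ↔ j = k := by
        intro j
        simp only [Subtype.mk.injEq, Prod.mk.injEq]
        exact ⟨fun h => hrm.injective h.1, fun h => by rw [h]; simp⟩
      simp only [this, Finset.sum_ite_eq', Finset.mem_univ, if_true]
      exact Nat.one_le_iff_ne_zero.mpr (hd k).2
    · push Not at hq
      simp [hq]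
  obtain ⟨s0, rfl⟩ : ∃ s0, s = s0 + e 1 := ⟨s - e 1, (tsub_add_cancel_of_le hle).symm⟩
  have hWe : ∀ σ, W (e σ) = ∑ k, (r (σ k) : ℕ) * (c k : ℕ) := by
    intro σ
    rw [he, map_sum]
    refine Finset.sum_congr rfl fun k _ => ?_
    rw [hW, Finsupp.weight_single]; simp
  have hde : ∀ σ, (e σ).degree = t := by
    intro σ
    rw [he, map_sum]
    simp
  have hmul : monomial s0 (1 : K) * ((ladderMatrix K Λ).submatrix r c).det =
      monomial (s0 + e 1) 1 + ∑ σ ∈ Finset.univ.erase 1, Equiv.Perm.sign σ •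
        monomial (s0 + e σ) (1 : K) := by
    rw [hdet, Finset.mul_sum, ← Finset.add_sum_erase _ _ (Finset.mem_univ 1)]
    congr 1
    · simp [monomial_mul]
    · refine Finset.sum_congr rfl fun σ _ => ?_
      rw [mul_smul_comm, monomial_mul, mul_one]
  have hmem2 := Submodule.mem_sup_left (T := Submodule.span K ((fun s' => monomial s' (1 : K)) ''
        {s' : {q // q ∈ Λ} →₀ ℕ | Std n u v (supp s') ∧ s'.degree = (s0 + e 1).degree}))
    (show monomial s0 (1 : K) * ((ladderMatrix K Λ).submatrix r c).det ∈
      (ladderIdeal K Λ n u v).restrictScalars K from Ideal.mul_mem_left _ _ hI)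
  rw [hmul] at hmem2
  refine (Submodule.add_mem_iff_left _ (Submodule.sum_mem _ fun σ hσ => ?_)).mp hmem2
  have hlt : W (s0 + e σ) < N := by
    rw [← hN, map_add, map_add, hWe, hWe]
    exact Nat.add_lt_add_left (rearrange (r := fun k => (r k : ℕ)) (c := fun k => (c k : ℕ))
      (fun i j h => hrm h) (fun i j h => hcm h) (Finset.ne_of_mem_erase hσ)) _
  have := ih _ hlt (s0 + e σ) rfl
  rw [map_add, hde, ← hde 1, ← map_add] at this
  rcases Int.units_eq_one_or (Equiv.Perm.sign σ) with h | h <;> rw [h]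
  · simpa using this
  · simpa using this

end
end LadderCor

/-! ### Determinants and leading monomials -/

namespace LadderCor
open MvPolynomial

theorem prod_monomial' {σ ι R : Type*} [CommSemiring R] (s : Finset ι) (e : ι → σ →₀ ℕ)
    (a : ι → R) : ∏ i ∈ s, monomial (e i) (a i) = monomial (∑ i ∈ s, e i) (∏ i ∈ s, a i) := by
  classical
  induction s using Finset.induction_on with
  | empty => simp
  | insert i s hi ih => rw [Finset.prod_insert hi, ih, monomial_mul, Finset.sum_insert hi,
      Finset.prod_insert hi]

/-- Expansion of the determinant of `p qᵀ`, as in the proof of the Cauchy-Binet formula. -/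
theorem det_expand {R : Type*} [CommRing R] {t n : ℕ} (p q : Fin t → Fin n → R) :
    (Matrix.of fun a b => ∑ k, p a k * q b k).det =
      ∑ f : Fin t → Fin n, (∏ a, p a (f a)) * (Matrix.of fun a b => q b (f a)).det := by
  have h := (Matrix.detRowAlternating (n := Fin t) (R := R)).toMultilinearMap.map_sum
    (fun a k => p a k • fun b => q b k)
  have e : (Matrix.of fun a b => ∑ k, p a k * q b k) =
      fun a => ∑ k, p a k • fun b => q b k := by
    ext a b; simp [Finset.sum_apply]
  rw [e]
  refine h.trans (Finset.sum_congr rfl fun f _ => ?_)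
  exact (Matrix.detRowAlternating (n := Fin t) (R := R)).map_smul_univ (fun a => p a (f a))
    (fun a b => q b (f a))

theorem det_eq_zero_of_not_inj {R : Type*} [CommRing R] {t n : ℕ} (q : Fin t → Fin n → R)
    {f : Fin t → Fin n} (hf : ¬ Function.Injective f) :
    (Matrix.of fun a b => q b (f a)).det = 0 := by
  unfold Function.Injective at hf
  push Not at hf
  obtain ⟨a, b, h1, h2⟩ := hf
  exact Matrix.det_zero_of_row_eq h2 (by ext j; simp [h1])

/-- If the functions `p a` are supported on fewer than `t` indices, or the `q b` are, then the
determinant of `p qᵀ` vanishes. -/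
theorem det_vanish {R : Type*} [CommRing R] {t n : ℕ} (ht : 1 ≤ t)
    (p q : Fin t → Fin n → R)
    (h : (∀ a k, p a k ≠ 0 → (k : ℕ) + 1 < t) ∨ (∀ a k, q a k ≠ 0 → (k : ℕ) + 1 < t)) :
    (Matrix.of fun a b => ∑ k, p a k * q b k).det = 0 := by
  rw [det_expand]
  refine Finset.sum_eq_zero fun f _ => ?_
  by_cases hf : Function.Injective f
  · obtain ⟨a, ha⟩ : ∃ a, t ≤ (f a : ℕ) + 1 := by
      by_contra! hc
      have hle := Finset.card_le_card_of_injOn (s := Finset.univ) (t := Finset.range (t - 1))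
        (fun a : Fin t => (f a : ℕ)) (fun a _ => by
          simp only [Finset.coe_range, Set.mem_Iio]; have := hc a; omega)
        (fun a _ b _ hab => hf (Fin.ext hab))
      simp only [Finset.card_univ, Fintype.card_fin, Finset.card_range] at hle
      omega
    rcases h with h | h
    · rw [Finset.prod_eq_zero (Finset.mem_univ a), zero_mul]
      by_contra hc; have := h a _ hc; omega
    · rw [Matrix.det_eq_zero_of_row_eq_zero a, mul_zero]
      intro b
      by_contra hc; have := h b _ hc; omega
  · rw [det_eq_zero_of_not_inj q hf, mul_zero]

section
variable (A B n : ℕ)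

/-- The variables `U i k` and `V j k` of the target of the parametrization. The variables `U`
come before the variables `V`, and those with the same letter are ordered lexicographically. -/
abbrev Var : Type := Lex (Lex (Fin (A + 1) ⊕ Fin (B + 1)) × Fin n)

end
section
variable {A B n : ℕ}

/-- The exponent of a product of variables, one for each element of `Fin t`. -/
noncomputable def expo {t : ℕ} (ρ : Fin t → Lex (Fin (A + 1) ⊕ Fin (B + 1))) (f : Fin t → Fin n) :
    Var A B n →₀ ℕ := ∑ a, Finsupp.single (toLex (ρ a, f a)) 1

/-- Among the injective assignments of second indices, the identity gives the largest monomial. -/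
theorem expo_lt {t : ℕ} {ρ : Fin t → Lex (Fin (A + 1) ⊕ Fin (B + 1))} (hρ : StrictMono ρ)
    (ht : t ≤ n) {f : Fin t → Fin n} (hf : Function.Injective f) (hne : f ≠ Fin.castLE ht) :
    MonomialOrder.lex.toSyn (expo ρ f) < MonomialOrder.lex.toSyn (expo ρ (Fin.castLE ht)) := by
  classical
  rw [MonomialOrder.lex_lt_iff, Finsupp.Lex.lt_iff]
  simp only [ofLex_toLex]
  have hex : ∃ k, ∃ h : k < t, f ⟨k, h⟩ ≠ Fin.castLE ht ⟨k, h⟩ := by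
    by_contra! hc
    exact hne (funext fun a => hc a a.2)
  obtain ⟨hk, hk2⟩ := Nat.find_spec hex
  have hmin := fun m (hm : m < Nat.find hex) => Nat.find_min hex hm
  generalize Nat.find hex = k at *
  have hlow : ∀ a : Fin t, (a : ℕ) < k → f a = Fin.castLE ht a := by
    intro a ha
    have := hmin a ha
    push Not at this
    exact this a.2
  have hfk : k < (f ⟨k, hk⟩ : ℕ) := by
    rcases lt_trichotomy (f ⟨k, hk⟩ : ℕ) k with h | h | h
    · have h2 := hlow ⟨f ⟨k, hk⟩, by omega⟩ h
      have h3 : f ⟨f ⟨k, hk⟩, by omega⟩ = f ⟨k, hk⟩ := by rw [h2]; ext; rfl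
      have := hf h3
      simp only [Fin.mk.injEq] at this; omega
    · exact absurd (Fin.ext h) hk2
    · exact h
  have key : ∀ a : Fin t, ¬ (a : ℕ) < k →
      toLex (ρ ⟨k, hk⟩, Fin.castLE ht ⟨k, hk⟩) < (toLex (ρ a, f a) : Var A B n) ∧
      toLex (ρ ⟨k, hk⟩, Fin.castLE ht ⟨k, hk⟩) ≤ (toLex (ρ a, Fin.castLE ht a) : Var A B n) := by
    intro a ha
    rcases Nat.lt_or_ge k a with h | h
    · have : ρ ⟨k, hk⟩ < ρ a := hρ (by rw [Fin.lt_def]; exact h)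
      exact ⟨Prod.Lex.toLex_lt_toLex.mpr (Or.inl this),
        (Prod.Lex.toLex_lt_toLex.mpr (Or.inl this)).le⟩
    · obtain rfl : a = ⟨k, hk⟩ := Fin.ext (by simp only; omega)
      exact ⟨Prod.Lex.toLex_lt_toLex.mpr (Or.inr ⟨rfl, by rw [Fin.lt_def]; exact hfk⟩), le_rfl⟩
  refine ⟨toLex (ρ ⟨k, hk⟩, Fin.castLE ht ⟨k, hk⟩), ?_, ?_⟩
  · intro d hd
    unfold expo
    simp only [Finsupp.coe_finsetSum, Finset.sum_apply, Finsupp.single_apply]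
    refine Finset.sum_congr rfl fun a _ => ?_
    by_cases ha : (a : ℕ) < k
    · rw [hlow a ha]
    · obtain ⟨h1, h2⟩ := key a ha
      rw [if_neg (hd.trans h1).ne', if_neg (hd.trans_le h2).ne']
  · unfold expo
    simp only [Finsupp.coe_finsetSum, Finset.sum_apply, Finsupp.single_apply]
    rw [Finset.sum_eq_zero]
    · refine Finset.sum_pos' (fun _ _ => Nat.zero_le _) ⟨⟨k, hk⟩, Finset.mem_univ _, ?_⟩
      rw [if_pos rfl]; exact Nat.one_pos
    · intro a _
      by_cases ha : (a : ℕ) < k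
      · rw [if_neg]
        intro h
        have h3 := congrArg (fun x : Var A B n => (ofLex x).1) h
        simp only [ofLex_toLex] at h3
        have := hρ.injective h3
        rw [this] at ha; simp at ha
      · rw [if_neg (key a ha).1.ne']

theorem expo_le {t : ℕ} {ρ : Fin t → Lex (Fin (A + 1) ⊕ Fin (B + 1))} (hρ : StrictMono ρ)
    (ht : t ≤ n) {f : Fin t → Fin n} (hf : Function.Injective f) :
    MonomialOrder.lex.toSyn (expo ρ f) ≤ MonomialOrder.lex.toSyn (expo ρ (Fin.castLE ht)) := by
  by_cases h : f = Fin.castLE ht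
  · rw [h]
  · exact (expo_lt hρ ht hf h).le

/-- A polynomial that differs from a monomial only by smaller terms is monic with this leading
monomial. -/
theorem monic_of_restrict {K σ : Type*} [Field K] (mo : MonomialOrder σ) {P : MvPolynomial σ K}
    {E : σ →₀ ℕ} (h : P - monomial E 1 ∈ restrictSupport K {d | mo.toSyn d < mo.toSyn E}) :
    mo.Monic P ∧ mo.degree P = E := by
  classical
  have h1 : ∀ d, coeff d (P - monomial E 1) ≠ 0 → mo.toSyn d < mo.toSyn E := by
    intro d hd
    exact (mem_restrictSupport_iff K).mp h (by simpa [mem_support_iff] using hd)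
  have h2 : coeff E P = 1 := by
    by_contra hc
    have := h1 E (by rw [coeff_sub, coeff_monomial, if_pos rfl]; exact sub_ne_zero.mpr hc)
    exact lt_irrefl _ this
  have h3 : mo.toSyn (mo.degree P) ≤ mo.toSyn E := by
    rw [MonomialOrder.degree_le_iff]
    intro d hd
    by_cases he : d = E
    · rw [he]
    · refine (h1 d ?_).le
      rw [coeff_sub, coeff_monomial, if_neg (Ne.symm he), sub_zero]
      exact mem_support_iff.mp hd
  have h4 : mo.toSyn E ≤ mo.toSyn (mo.degree P) :=
    mo.le_degree (mem_support_iff.mpr (by rw [h2]; exact one_ne_zero))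
  have h5 : mo.degree P = E := mo.toSyn.injective (le_antisymm h3 h4)
  exact ⟨by rw [MonomialOrder.Monic, MonomialOrder.leadingCoeff, h5, h2], h5⟩

end
end LadderCor

/-! ### The parametrization -/

namespace LadderCor
open MvPolynomial

section
variable (K : Type*) [Field K] (A B n : ℕ) (u v : ℕ → ℕ)

/-- The variable `U i k`, replaced by zero unless `u (k + 1) ≤ i + 1`. Here the row `i` is counted
from the end. -/
noncomputable def pU (i : Fin (A + 1)) (k : Fin n) : MvPolynomial (Var A B n) K :=
  monomial (Finsupp.single (toLex (toLex (Sum.inl i), k)) 1) (if u (k + 1) ≤ i + 1 then 1 else 0)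

/-- The variable `V j k`, replaced by zero unless `v (k + 1) ≤ j + 1`. Here the column `j` is
counted from the end. -/
noncomputable def pV (j : Fin (B + 1)) (k : Fin n) : MvPolynomial (Var A B n) K :=
  monomial (Finsupp.single (toLex (toLex (Sum.inr j), k)) 1) (if v (k + 1) ≤ j + 1 then 1 else 0)

variable {A B}

/-- The parametrization of the ladder determinantal variety: the generic matrix is sent to a
product of two generic matrices with prescribed zeros. -/
noncomputable def Phi (Λ : Set (Fin (A + 1) × Fin (B + 1))) :
    MvPolynomial {q // q ∈ Λ} K →ₐ[K] MvPolynomial (Var A B n) K :=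
  aeval fun q => ∑ k, pU K A B n u (Fin.rev q.1.1) k * pV K A B n v (Fin.rev q.1.2) k

variable {K n u v}

theorem Phi_minor {Λ : Set (Fin (A + 1) × Fin (B + 1))} {t : ℕ} (r : Fin t → Fin (A + 1))
    (c : Fin t → Fin (B + 1)) (h : ∀ k l, (r k, c l) ∈ Λ) :
    Phi K n u v Λ ((ladderMatrix K Λ).submatrix r c).det =
      (Matrix.of fun a b => ∑ k, pU K A B n u (Fin.rev (r a)) k *
        pV K A B n v (Fin.rev (c b)) k).det := by
  rw [AlgHom.map_det]
  congr 1
  ext1 a b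
  simp only [AlgHom.mapMatrix_apply, Matrix.map_apply, Matrix.submatrix_apply, ladderMatrix,
    dif_pos (h a b), Phi, aeval_X, Matrix.of_apply]

/-- The parametrization vanishes on the ideal: in the image of a generating `t`-minor, the rows of
one of the two factors are supported on fewer than `t` indices. -/
theorem Phi_ideal {Λ : Set (Fin (A + 1) × Fin (B + 1))}
    (hu_mono : ∀ i j, 1 ≤ i → i < j → j ≤ n → u i < u j)
    (hv_mono : ∀ i j, 1 ≤ i → i < j → j ≤ n → v i < v j)
    {f : MvPolynomial {q // q ∈ Λ} K} (hf : f ∈ ladderIdeal K Λ n u v) :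
    Phi K n u v Λ f = 0 := by
  suffices h : ladderIdeal K Λ n u v ≤ RingHom.ker (Phi K n u v Λ) from h hf
  unfold ladderIdeal
  rw [Ideal.span_le]
  rintro _ ⟨t, h1, h2, r, c, -, -, hm, hb, rfl⟩
  rw [SetLike.mem_coe, RingHom.mem_ker, Phi_minor r c hm]
  refine det_vanish h1 _ _ ?_
  refine hb.imp (fun hb a k hk => ?_) (fun hb a k hk => ?_)
  · have h3 : u (k + 1) ≤ (Fin.rev (r a) : ℕ) + 1 := by
      by_contra hc; exact hk (by rw [pU, if_neg hc, map_zero])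
    have h4 := hb a
    have h5 := (r a).2
    rw [Fin.val_rev] at h3
    by_contra h6
    have h7 := k.2
    rcases Nat.lt_or_ge t (k + 1) with h | h
    · have := hu_mono t (k + 1) h1 h h7; omega
    · obtain rfl : t = k + 1 := by omega
      omega
  · have h3 : v (k + 1) ≤ (Fin.rev (c a) : ℕ) + 1 := by
      by_contra hc; exact hk (by rw [pV, if_neg hc, map_zero])
    have h4 := hb a
    have h5 := (c a).2
    rw [Fin.val_rev] at h3
    by_contra h6
    have h7 := k.2
    rcases Nat.lt_or_ge t (k + 1) with h | h
    · have := hv_mono t (k + 1) h1 h h7; omega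
    · obtain rfl : t = k + 1 := by omega
      omega

/-- The minor of the generic matrix with given rows and columns, counted from the end. -/
noncomputable def minor (K : Type*) [Field K] {t : ℕ} (r : Fin t → Fin (A + 1))
    (c : Fin t → Fin (B + 1)) :
    MvPolynomial {q : Fin (A + 1) × Fin (B + 1) // q ∈ Set.univ} K :=
  ((ladderMatrix K Set.univ).submatrix (fun a => Fin.rev (r a)) fun b => Fin.rev (c b)).det

theorem minor_homog {t : ℕ} (r : Fin t → Fin (A + 1)) (c : Fin t → Fin (B + 1)) :
    (minor K r c).IsHomogeneous t := by
  unfold minor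
  rw [Matrix.det_apply]
  refine IsHomogeneous.sum _ _ _ fun σ _ => ?_
  have : (∏ i, ((ladderMatrix K Set.univ).submatrix (fun a => Fin.rev (r a))
      fun b => Fin.rev (c b)) (σ i) i).IsHomogeneous (∑ _i : Fin t, 1) := by
    refine IsHomogeneous.prod _ _ _ fun i _ => ?_
    rw [Matrix.submatrix_apply, ladderMatrix, dif_pos (Set.mem_univ _)]
    exact isHomogeneous_X _ _
  simp only [Finset.sum_const, Finset.card_univ, Fintype.card_fin, smul_eq_mul, mul_one] at this
  rcases Int.units_eq_one_or (Equiv.Perm.sign σ) with h | h <;> rw [h]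
  · simpa using this
  · simpa using this.neg

/-- The image of a minor under the parametrization has the expected leading monomial. -/
theorem minor_lead {t : ℕ} (ht : t ≤ n) {r : Fin t → Fin (A + 1)}
    {c : Fin t → Fin (B + 1)} (hr : StrictMono r) (hc : StrictMono c)
    (hu : ∀ k : Fin t, u (k + 1) ≤ r k + 1) (hv : ∀ k : Fin t, v (k + 1) ≤ c k + 1) :
    MonomialOrder.lex.Monic (Phi K n u v Set.univ (minor K r c)) ∧
      MonomialOrder.lex.degree (Phi K n u v Set.univ (minor K r c)) =
        expo (fun a => toLex (Sum.inl (r a))) (Fin.castLE ht) +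
          expo (fun b => toLex (Sum.inr (c b))) (Fin.castLE ht) := by
  classical
  apply monic_of_restrict
  have hr' : StrictMono fun a => (toLex (Sum.inl (r a)) : Lex (Fin (A + 1) ⊕ Fin (B + 1))) :=
    fun a b h => Sum.Lex.inl_lt_inl_iff.mpr (hr h)
  have hc' : StrictMono fun a => (toLex (Sum.inr (c a)) : Lex (Fin (A + 1) ⊕ Fin (B + 1))) :=
    fun a b h => Sum.Lex.inr_lt_inr_iff.mpr (hc h)
  have hinj : Function.Injective (Fin.castLE ht) := Fin.castLE_injective ht
  have hterm : ∀ f g : Fin t → Fin n, (∏ a, pU K A B n u (r a) (f a)) *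
      ∏ b, pV K A B n v (c b) (g b) = monomial (expo (fun a => toLex (Sum.inl (r a))) f +
        expo (fun b => toLex (Sum.inr (c b))) g) ((∏ a, if u (f a + 1) ≤ r a + 1 then 1 else 0) *
          ∏ b, if v (g b + 1) ≤ c b + 1 then 1 else 0) := by
    intro f g
    unfold pU pV
    rw [prod_monomial', prod_monomial', monomial_mul]
    rfl
  have hdet : ∀ f : Fin t → Fin n, (∏ a, pU K A B n u (r a) (f a)) *
      (Matrix.of fun a b => pV K A B n v (c b) (f a)).det = ∑ σ : Equiv.Perm (Fin t),
        Equiv.Perm.sign σ • ((∏ a, pU K A B n u (r a) (f a)) *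
          ∏ b, pV K A B n v (c b) (f (σ b))) := by
    intro f
    rw [Matrix.det_apply, Finset.mul_sum]
    refine Finset.sum_congr rfl fun σ _ => ?_
    rw [mul_smul_comm]; rfl
  have hsub : ∀ (f g : Fin t → Fin n), Function.Injective f → Function.Injective g →
      (f ≠ Fin.castLE ht ∨ g ≠ Fin.castLE ht) → ∀ σ : Equiv.Perm (Fin t),
      Equiv.Perm.sign σ • ((∏ a, pU K A B n u (r a) (f a)) *
          ∏ b, pV K A B n v (c b) (g b)) ∈ restrictSupport K {d | MonomialOrder.lex.toSyn d <
        MonomialOrder.lex.toSyn (expo (fun a => toLex (Sum.inl (r a))) (Fin.castLE ht) +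
          expo (fun b => toLex (Sum.inr (c b))) (Fin.castLE ht))} := by
    intro f g hf hg hne σ
    have : (∏ a, pU K A B n u (r a) (f a)) *
          ∏ b, pV K A B n v (c b) (g b) ∈ restrictSupport K {d | MonomialOrder.lex.toSyn d <
        MonomialOrder.lex.toSyn (expo (fun a => toLex (Sum.inl (r a))) (Fin.castLE ht) +
          expo (fun b => toLex (Sum.inr (c b))) (Fin.castLE ht))} := by
      rw [hterm, mem_restrictSupport_iff]
      intro d hd
      have hd' := support_monomial_subset hd
      rw [Finset.mem_singleton] at hd'
      subst hd'
      rw [Set.mem_ofPred_eq, map_add, map_add]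
      rcases hne with h | h
      · exact add_lt_add_of_lt_of_le (expo_lt hr' ht hf h) (expo_le hc' ht hg)
      · exact add_lt_add_of_le_of_lt (expo_le hr' ht hf) (expo_lt hc' ht hg h)
    rcases Int.units_eq_one_or (Equiv.Perm.sign σ) with h | h <;> rw [h]
    · simpa using this
    · simpa using this
  rw [minor, Phi_minor _ _ (fun _ _ => Set.mem_univ _)]
  simp only [Fin.rev_rev]
  rw [det_expand, ← Finset.add_sum_erase _ _ (Finset.mem_univ (Fin.castLE ht)), hdet,
    ← Finset.add_sum_erase _ _ (Finset.mem_univ 1)]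
  have hlead : (∏ a, pU K A B n u (r a) (Fin.castLE ht a)) *
      ∏ b, pV K A B n v (c b) (Fin.castLE ht ((1 : Equiv.Perm (Fin t)) b)) =
      monomial (expo (fun a => toLex (Sum.inl (r a))) (Fin.castLE ht) +
          expo (fun b => toLex (Sum.inr (c b))) (Fin.castLE ht)) 1 := by
    refine (hterm _ _).trans ?_
    congr 1
    simp only [Fin.val_castLE, Equiv.Perm.coe_one, id_eq, hu, hv, if_true, Finset.prod_const_one, mul_one]
  rw [hlead, Equiv.Perm.sign_one, one_smul, add_assoc, add_sub_cancel_left]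
  refine Submodule.add_mem _ (Submodule.sum_mem _ fun σ hσ => ?_)
    (Submodule.sum_mem _ fun f hf => ?_)
  · refine hsub (Fin.castLE ht) (fun b => Fin.castLE ht (σ b)) hinj (hinj.comp σ.injective)
      (Or.inr fun h => Finset.ne_of_mem_erase hσ ?_) σ
    ext b
    have := congrFun h b
    rw [hinj this]; rfl
  · by_cases hi : Function.Injective f
    · rw [hdet]
      refine Submodule.sum_mem _ fun σ _ => hsub f (fun b => f (σ b)) hi (hi.comp σ.injective)
        (Or.inl (Finset.ne_of_mem_erase hf)) σ
    · rw [det_eq_zero_of_not_inj _ hi, mul_zero]; exact Submodule.zero_mem _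

end
end LadderCor

/-! ### Standard monomials and products of minors -/

namespace LadderCor
open MvPolynomial

section
variable {A B : ℕ}

/-- The exponents of a monomial of the full polynomial ring, as a matrix whose rows and columns
are counted from the end. -/
noncomputable def expMat (s : {q : Fin (A + 1) × Fin (B + 1) // q ∈ Set.univ} →₀ ℕ) :
    ℕ → ℕ → ℕ := fun i j => if i < A + 1 ∧ j < B + 1 then
      s ⟨(Fin.rev (Fin.ofNat (A + 1) i), Fin.rev (Fin.ofNat (B + 1) j)), Set.mem_univ _⟩ else 0

theorem rev_ofNat {N i : ℕ} (h : i < N + 1) : (Fin.rev (Fin.ofNat (N + 1) i) : ℕ) + i = N := by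
  simp only [Fin.val_rev, Fin.val_ofNat]
  rw [Nat.mod_eq_of_lt h]
  omega

theorem rev_ofNat_rev {N : ℕ} (i : Fin (N + 1)) : Fin.rev (Fin.ofNat (N + 1) (Fin.rev i)) = i := by
  ext
  have h1 := rev_ofNat (Fin.rev i).2
  have h2 := i.2
  rw [Fin.val_rev i] at h1 ⊢
  omega

theorem expMat_rev (s : {q : Fin (A + 1) × Fin (B + 1) // q ∈ Set.univ} →₀ ℕ)
    (q : {q : Fin (A + 1) × Fin (B + 1) // q ∈ Set.univ}) :
    expMat s (Fin.rev q.1.1) (Fin.rev q.1.2) = s q := by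
  unfold expMat
  rw [if_pos ⟨Fin.is_lt _, Fin.is_lt _⟩]
  simp only [rev_ofNat_rev]

theorem expMat_sum (s : {q : Fin (A + 1) × Fin (B + 1) // q ∈ Set.univ} →₀ ℕ) :
    ∑ i ∈ Finset.range (A + 1), ∑ j ∈ Finset.range (B + 1), expMat s i j = s.degree := by
  classical
  rw [Finsupp.degree_eq_sum]
  simp only [← expMat_rev s]
  rw [← Finset.sum_product']
  refine (Finset.sum_bij' (fun q _ => ((Fin.rev q.1.1 : ℕ), (Fin.rev q.1.2 : ℕ)))
    (fun p _ => ⟨(Fin.rev (Fin.ofNat (A + 1) p.1), Fin.rev (Fin.ofNat (B + 1) p.2)),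
      Set.mem_univ _⟩) ?_ ?_ ?_ ?_ ?_).symm
  · intro q _
    simp only [Finset.mem_product, Finset.mem_range]
    exact ⟨Fin.is_lt _, Fin.is_lt _⟩
  · intros; exact Finset.mem_univ _
  · intro q _
    simp only [rev_ofNat_rev]
  · rintro ⟨i, j⟩ h
    simp only [Finset.mem_product, Finset.mem_range] at h
    simp only [Fin.rev_rev, Fin.val_ofNat, Prod.mk.injEq]
    exact ⟨Nat.mod_eq_of_lt h.1, Nat.mod_eq_of_lt h.2⟩
  · intros; rfl

/-- Chains in the support of the exponent matrix, whose indices are counted from the end, are chains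
in the support of the monomial. -/
theorem expMat_chain {s : {q : Fin (A + 1) × Fin (B + 1) // q ∈ Set.univ} →₀ ℕ} {l : List (ℕ × ℕ)}
    (hl : l.Pairwise fun p q => q.1 < p.1 ∧ q.2 < p.2)
    (hm : ∀ p ∈ l, expMat s p.1 p.2 ≠ 0) : ∃ l' : List (Fin (A + 1) × Fin (B + 1)),
      l'.length = l.length ∧ l'.Pairwise (fun p q => p.1 < q.1 ∧ p.2 < q.2) ∧
      (∀ p ∈ l', p ∈ supp s) ∧ ∀ p ∈ l', ∃ q ∈ l, (p.1 : ℕ) + q.1 = A ∧ (p.2 : ℕ) + q.2 = B := by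
  have hlt : ∀ p ∈ l, p.1 < A + 1 ∧ p.2 < B + 1 := by
    intro p hp
    have := hm p hp
    unfold expMat at this
    by_contra hc
    exact this (if_neg hc)
  have hval : ∀ p ∈ l, (Fin.rev (Fin.ofNat (A + 1) p.1) : ℕ) + p.1 = A ∧
      (Fin.rev (Fin.ofNat (B + 1) p.2) : ℕ) + p.2 = B := by
    intro p hp
    have := hlt p hp
    exact ⟨rev_ofNat this.1, rev_ofNat this.2⟩
  refine ⟨l.map fun p => (Fin.rev (Fin.ofNat (A + 1) p.1), Fin.rev (Fin.ofNat (B + 1) p.2)),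
    List.length_map _, ?_, ?_, ?_⟩
  · rw [List.pairwise_map]
    refine hl.imp_of_mem fun {p q} hp hq h => ?_
    have h1 := hval p hp
    have h2 := hval q hq
    constructor
    · rw [Fin.lt_def]; simp only; omega
    · rw [Fin.lt_def]; simp only; omega
  · intro p hp
    obtain ⟨q, hq, rfl⟩ := List.mem_map.mp hp
    refine ⟨Set.mem_univ _, ?_⟩
    have := hm q hq
    unfold expMat at this
    rwa [if_pos (hlt q hq)] at this
  · intro p hp
    obtain ⟨q, hq, rfl⟩ := List.mem_map.mp hp
    exact ⟨q, hq, hval q hq⟩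

/-- For a standard monomial, the partitions on the outer boundary of the growth diagram acquire
their `k`-th part only where the corresponding variable is not replaced by zero. -/
theorem Std.vanish {n : ℕ} {u v : ℕ → ℕ}
    {s : {q : Fin (A + 1) × Fin (B + 1) // q ∈ Set.univ} →₀ ℕ} (hs : Std n u v (supp s)) {k : ℕ}
    (hk : k ≤ n) :
    (∀ i, i + 1 ≤ u (k + 1) → G (expMat s) i (B + 1) k = 0) ∧
      ∀ j, j + 1 ≤ v (k + 1) → G (expMat s) (A + 1) j k = 0 := by
  constructor
  · intro i hi
    by_contra hc
    obtain ⟨l, h1, h2, h3⟩ := G_chain _ hc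
    obtain ⟨l', e1, e2, e3, e4⟩ := expMat_chain h2 fun p hp => (h3 p hp).2.2
    refine (hs l' e2 e3 (by omega) (by omega)).1 fun p hp => ?_
    obtain ⟨q, hq, h4, -⟩ := e4 p hp
    have := (h3 q hq).1
    rw [e1, h1]
    omega
  · intro j hj
    by_contra hc
    obtain ⟨l, h1, h2, h3⟩ := G_chain _ hc
    obtain ⟨l', e1, e2, e3, e4⟩ := expMat_chain h2 fun p hp => (h3 p hp).2.2
    refine (hs l' e2 e3 (by omega) (by omega)).2 fun p hp => ?_
    obtain ⟨q, hq, -, h4⟩ := e4 p hp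
    have := (h3 q hq).2.1
    rw [e1, h1]
    omega

/-- A chain of interlacing partitions is a semistandard tableau: the `h`-th column of the tableau
consists of the indices at which the successive rows acquire more than `h` boxes. -/
theorem exists_column {g : ℕ → ℕ → ℕ} {N n : ℕ} {U : ℕ → ℕ} (hg0 : ∀ k, g 0 k = 0)
    (hg : ∀ i, Interl (g i) (g (i + 1)))
    (hU : ∀ i k, k ≤ n → i + 1 ≤ U (k + 1) → g i k = 0) {h t : ℕ} (ht : t ≤ n)
    (hh : ∀ k, k < t → h < g (N + 1) k) : ∃ r : Fin t → Fin (N + 1), StrictMono r ∧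
      (∀ k : Fin t, U (k + 1) ≤ r k + 1) ∧ ∀ (k : Fin t) i, (r k : ℕ) < i ↔ h < g i k := by
  have hmono : ∀ k, Monotone fun i => g i k := fun k => monotone_nat_of_le_succ fun i => (hg i k).1
  have hex : ∀ k : Fin t, ∃ i, h < g (i + 1) k := fun k => ⟨N, hh k k.2⟩
  classical
  have hN : ∀ k : Fin t, Nat.find (hex k) < N + 1 := fun k =>
    Nat.lt_succ_of_le (Nat.find_le (hh k k.2))
  have hiff : ∀ (k : Fin t) i, Nat.find (hex k) < i ↔ h < g i k := by
    intro k i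
    constructor
    · intro hi
      exact (Nat.find_spec (hex k)).trans_le (hmono k hi)
    · intro hi
      cases i with
      | zero => rw [hg0] at hi; omega
      | succ i => exact Nat.lt_succ_of_le (Nat.find_le hi)
  refine ⟨fun k => ⟨Nat.find (hex k), hN k⟩, ?_, ?_, hiff⟩
  · cases t with
    | zero => exact fun a => a.elim0
    | succ t =>
      refine Fin.strictMono_iff_lt_succ.mpr fun k => ?_
      rw [Fin.lt_def]
      simp only
      rw [hiff]
      have h1 := Nat.find_spec (hex k.succ)
      exact h1.trans_le (hg _ _).2
  · intro k
    simp only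
    by_contra hc
    have h1 := hU (Nat.find (hex k) + 1) k (by omega) (by omega)
    have h2 := Nat.find_spec (hex k)
    omega

theorem G_antitone (m : ℕ → ℕ → ℕ) (i j : ℕ) : Antitone (G m i j) := by
  refine antitone_nat_of_succ_le fun k => ?_
  cases j with
  | zero => rw [G_zero_right]; exact Nat.zero_le _
  | succ j =>
    have := (G_interl m i).1 j k
    exact this.2.trans this.1

theorem sum_indicator {x H : ℕ} (hx : x ≤ H) :
    ∑ h ∈ Finset.range H, (if h < x then 1 else 0) = x := by
  rw [Finset.sum_boole]
  have : (Finset.range H).filter (fun h => h < x) = Finset.range x := by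
    ext h; simp only [Finset.mem_filter, Finset.mem_range]; omega
  rw [this]; simp

/-- Each column of the tableau contributes one box to the part `k` exactly when this part is larger
than the index `h` of the column. -/
theorem expo_column {n t N : ℕ} (ht : t ≤ n) {r : Fin t → Fin (N + 1)}
    (ι : Fin (N + 1) → Lex (Fin (A + 1) ⊕ Fin (B + 1))) (hι : Function.Injective ι)
    {g : ℕ → ℕ → ℕ} {h : ℕ} (hr : ∀ (k : Fin t) i, (r k : ℕ) < i ↔ h < g i k)
    (hg : ∀ k i, i ≤ N + 1 → h < g i k → k < t) (k : Fin n) {i : ℕ} (hi : i ≤ N + 1) :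
    ∑ i' : Fin (N + 1), (if (i' : ℕ) < i then
      expo (fun a => ι (r a)) (Fin.castLE ht) (toLex (ι i', k)) else 0) =
      if h < g i k then 1 else 0 := by
  classical
  have e : ∀ i' : Fin (N + 1), (if (i' : ℕ) < i then
      expo (fun a => ι (r a)) (Fin.castLE ht) (toLex (ι i', k)) else 0) =
      ∑ a, if r a = i' then (if (a : ℕ) = k ∧ (r a : ℕ) < i then 1 else 0) else 0 := by
    intro i'
    unfold expo
    simp only [Finsupp.coe_finsetSum, Finset.sum_apply, Finsupp.single_apply]
    split_ifs with h1
    · refine Finset.sum_congr rfl fun a _ => ?_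
      simp only [EmbeddingLike.apply_eq_iff_eq, Prod.mk.injEq, hι.eq_iff, Fin.ext_iff,
        Fin.val_castLE]
      by_cases h2 : (r a : ℕ) = i'
      · simp [h2, h1]
      · simp [h2]
    · symm
      refine Finset.sum_eq_zero fun a _ => ?_
      split_ifs with h2 h3
      · rw [h2] at h3; omega
      · rfl
      · rfl
  rw [Finset.sum_congr rfl fun i' _ => e i', Finset.sum_comm]
  simp only [Finset.sum_ite_eq, Finset.mem_univ, if_true]
  split_ifs with h1
  · have hkt := hg _ _ hi h1
    rw [Finset.sum_eq_single ⟨k, hkt⟩]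
    · rw [if_pos ⟨rfl, (hr _ _).mpr h1⟩]
    · intro b _ hb
      rw [if_neg]
      rintro ⟨h2, -⟩
      exact hb (Fin.ext h2)
    · intro h; exact absurd (Finset.mem_univ _) h
  · refine Finset.sum_eq_zero fun a _ => if_neg ?_
    rintro ⟨h2, h3⟩
    rw [hr, h2] at h3
    exact h1 h3

variable {n : ℕ} {u v : ℕ → ℕ} (K : Type*) [Field K]

/-- Each standard monomial has the same degree as a product of minors whose image under the
parametrization is monic with a leading monomial that records the boundary of the growth diagram
of the standard monomial. -/
theorem exists_bitableau (hu_top : u (n + 1) = A + 2)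
    {s : {q : Fin (A + 1) × Fin (B + 1) // q ∈ Set.univ} →₀ ℕ} (hs : Std n u v (supp s)) :
    ∃ P : MvPolynomial {q : Fin (A + 1) × Fin (B + 1) // q ∈ Set.univ} K,
      P.IsHomogeneous s.degree ∧ MonomialOrder.lex.Monic (Phi K n u v Set.univ P) ∧
      (∀ k : Fin n, ∀ i ≤ A + 1, ∑ i' : Fin (A + 1), (if (i' : ℕ) < i then
        MonomialOrder.lex.degree (Phi K n u v Set.univ P) (toLex (toLex (Sum.inl i'), k)) else 0) =
          G (expMat s) i (B + 1) k) ∧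
      (∀ k : Fin n, ∀ j ≤ B + 1, ∑ j' : Fin (B + 1), (if (j' : ℕ) < j then
        MonomialOrder.lex.degree (Phi K n u v Set.univ P) (toLex (toLex (Sum.inr j'), k)) else 0) =
          G (expMat s) (A + 1) j k) := by
  classical
  set m := expMat s with hm
  set lam := G m (A + 1) (B + 1) with hlam
  have hmonoI : ∀ k, Monotone fun i => G m i (B + 1) k := fun k =>
    monotone_nat_of_le_succ fun i => ((G_interl m i).2 (B + 1) k).1
  have hmonoJ : ∀ k, Monotone fun j => G m (A + 1) j k := fun k =>
    monotone_nat_of_le_succ fun j => ((G_interl m (A + 1)).1 j k).1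
  have hn : ∀ k, n ≤ k → lam k = 0 := by
    intro k hk
    have h1 : lam n = 0 := (hs.vanish le_rfl).1 (A + 1) (by omega)
    have := G_antitone m (A + 1) (B + 1) hk
    rw [← hlam] at this
    omega
  have hex : ∀ h : ℕ, ∃ t, t ≤ n ∧ ∀ k, k < t ↔ h < lam k := by
    intro h
    have h1 : ∃ k, ¬ h < lam k := ⟨n, by rw [hn n le_rfl]; omega⟩
    refine ⟨Nat.find h1, Nat.find_le (by rw [hn n le_rfl]; omega), fun k => ?_⟩
    constructor
    · intro hk; exact not_not.mp (Nat.find_min h1 hk)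
    · intro hk
      by_contra hc
      have := G_antitone m (A + 1) (B + 1) (not_lt.mp hc)
      exact Nat.find_spec h1 (hk.trans_le this)
  choose t htn ht using hex
  have hfac : ∀ h : ℕ, ∃ P : MvPolynomial {q : Fin (A + 1) × Fin (B + 1) // q ∈ Set.univ} K,
      P.IsHomogeneous (t h) ∧ MonomialOrder.lex.Monic (Phi K n u v Set.univ P) ∧
      (∀ k : Fin n, ∀ i ≤ A + 1, ∑ i' : Fin (A + 1), (if (i' : ℕ) < i then
        MonomialOrder.lex.degree (Phi K n u v Set.univ P) (toLex (toLex (Sum.inl i'), k)) else 0) =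
          if h < G m i (B + 1) k then 1 else 0) ∧
      (∀ k : Fin n, ∀ j ≤ B + 1, ∑ j' : Fin (B + 1), (if (j' : ℕ) < j then
        MonomialOrder.lex.degree (Phi K n u v Set.univ P) (toLex (toLex (Sum.inr j'), k)) else 0) =
          if h < G m (A + 1) j k then 1 else 0) := by
    intro h
    obtain ⟨r, hr1, hr2, hr3⟩ := exists_column (g := fun i => G m i (B + 1)) (N := A) (U := u)
      (h := h) (fun k => by simp [G_zero_left]) (fun i => (G_interl m i).2 (B + 1))
      (fun i k hk => (hs.vanish hk).1 i) (htn h) (fun k => (ht h k).mp)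
    obtain ⟨c, hc1, hc2, hc3⟩ := exists_column (g := fun j => G m (A + 1) j) (N := B) (U := v)
      (h := h) (fun k => by simp [G_zero_right]) (fun i => (G_interl m (A + 1)).1 i)
      (fun i k hk => (hs.vanish hk).2 i) (htn h) (fun k => (ht h k).mp)
    obtain ⟨l1, l2⟩ := minor_lead (K := K) (htn h) hr1 hc1 hr2 hc2
    refine ⟨minor K r c, minor_homog r c, l1, ?_, ?_⟩
    · intro k i hi
      rw [l2, ← expo_column (A := A) (B := B) (htn h) (fun i => toLex (Sum.inl i))
        (fun a b hab => by simpa using hab) hr3 (fun k i hi hk =>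
          (ht h k).mpr (hk.trans_le (hmonoI k hi))) k hi]
      refine Finset.sum_congr rfl fun i' _ => ?_
      congr 1
      rw [Finsupp.add_apply, add_eq_left]
      unfold expo
      simp only [Finsupp.coe_finsetSum, Finset.sum_apply, Finsupp.single_apply]
      refine Finset.sum_eq_zero fun a _ => if_neg ?_
      simp
    · intro k i hi
      rw [l2, ← expo_column (A := A) (B := B) (htn h) (fun i => toLex (Sum.inr i))
        (fun a b hab => by simpa using hab) hc3 (fun k i hi hk =>
          (ht h k).mpr (hk.trans_le (hmonoJ k hi))) k hi]
      refine Finset.sum_congr rfl fun i' _ => ?_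
      congr 1
      rw [Finsupp.add_apply, add_eq_right]
      unfold expo
      simp only [Finsupp.coe_finsetSum, Finset.sum_apply, Finsupp.single_apply]
      refine Finset.sum_eq_zero fun a _ => if_neg ?_
      simp
  choose P hP1 hP2 hP3 hP4 using hfac
  have hdeg : MonomialOrder.lex.degree (Phi K n u v Set.univ (∏ h ∈ Finset.range (lam 0), P h)) =
      ∑ h ∈ Finset.range (lam 0), MonomialOrder.lex.degree (Phi K n u v Set.univ (P h)) := by
    rw [map_prod]
    exact MonomialOrder.degree_prod fun h _ => (hP2 h).ne_zero
  refine ⟨∏ h ∈ Finset.range (lam 0), P h, ?_, ?_, ?_, ?_⟩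
  · have h1 := IsHomogeneous.prod (Finset.range (lam 0)) P t fun h _ => hP1 h
    have h2 : ∑ h ∈ Finset.range (lam 0), t h = s.degree := by
      have h3 : ∀ h, t h = ∑ k ∈ Finset.range (A + 1 + n + 1), if h < lam k then 1 else 0 := by
        intro h
        simp only [← ht h]
        rw [sum_indicator]
        have := htn h
        omega
      simp only [h3]
      rw [Finset.sum_comm, ← expMat_sum s, ← G_sum m (K := A + 1 + n) (by omega)]
      refine Finset.sum_congr rfl fun k _ => ?_
      exact sum_indicator (G_antitone m _ _ (Nat.zero_le k))
    rwa [h2] at h1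
  · rw [map_prod]
    exact MonomialOrder.Monic.prod fun h _ => hP2 h
  · intro k i hi
    rw [hdeg]
    have : ∀ i' : Fin (A + 1), (if (i' : ℕ) < i then (∑ h ∈ Finset.range (lam 0),
        MonomialOrder.lex.degree (Phi K n u v Set.univ (P h))) (toLex (toLex (Sum.inl i'), k))
          else 0) = ∑ h ∈ Finset.range (lam 0), if (i' : ℕ) < i then
        MonomialOrder.lex.degree (Phi K n u v Set.univ (P h)) (toLex (toLex (Sum.inl i'), k))
          else 0 := by
      intro i'
      split_ifs
      · simp only [Finsupp.coe_finsetSum, Finset.sum_apply]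
      · simp
    simp only [this]
    rw [Finset.sum_comm]
    simp only [hP3 _ k i hi]
    exact sum_indicator ((hmonoI k hi).trans (G_antitone m _ _ (Nat.zero_le _)))
  · intro k i hi
    rw [hdeg]
    have : ∀ i' : Fin (B + 1), (if (i' : ℕ) < i then (∑ h ∈ Finset.range (lam 0),
        MonomialOrder.lex.degree (Phi K n u v Set.univ (P h))) (toLex (toLex (Sum.inr i'), k))
          else 0) = ∑ h ∈ Finset.range (lam 0), if (i' : ℕ) < i then
        MonomialOrder.lex.degree (Phi K n u v Set.univ (P h)) (toLex (toLex (Sum.inr i'), k))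
          else 0 := by
      intro i'
      split_ifs
      · simp only [Finsupp.coe_finsetSum, Finset.sum_apply]
      · simp
    simp only [this]
    rw [Finset.sum_comm]
    simp only [hP4 _ k i hi]
    exact sum_indicator ((hmonoJ k hi).trans (G_antitone m _ _ (Nat.zero_le _)))

end
end LadderCor

/-! ### The standard monomial basis -/

namespace LadderCor
open MvPolynomial

/-- Monic polynomials with distinct leading monomials are linearly independent. -/
theorem indep_of_degree_inj {K σ ι : Type*} [Field K] (mo : MonomialOrder σ)
    {P : ι → MvPolynomial σ K} (h1 : ∀ i, mo.Monic (P i))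
    (h2 : Function.Injective fun i => mo.degree (P i)) : LinearIndependent K P := by
  classical
  rw [linearIndependent_iff']
  intro s g hg
  by_contra! hc
  obtain ⟨i0, hi0, hgi0⟩ := hc
  obtain ⟨i, hi, hmax⟩ := Finset.exists_max_image (s.filter fun i => g i ≠ 0)
    (fun i => mo.toSyn (mo.degree (P i))) ⟨i0, Finset.mem_filter.mpr ⟨hi0, hgi0⟩⟩
  rw [Finset.mem_filter] at hi
  have h3 := congrArg (coeff (mo.degree (P i))) hg
  rw [coeff_sum, Finset.sum_eq_single i, coeff_smul, coeff_zero] at h3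
  · have h4 : coeff (mo.degree (P i)) (P i) = 1 := h1 i
    rw [h4, smul_eq_mul, mul_one] at h3
    exact hi.2 h3
  · intro j hj hji
    rw [coeff_smul]
    by_cases hgj : g j = 0
    · rw [hgj, zero_smul]
    · have h4 := hmax j (Finset.mem_filter.mpr ⟨hj, hgj⟩)
      have h5 : mo.toSyn (mo.degree (P j)) < mo.toSyn (mo.degree (P i)) :=
        lt_of_le_of_ne h4 fun h => hji (h2 (mo.toSyn.injective h))
      rw [mo.coeff_eq_zero_of_lt h5, smul_zero]
  · intro h; exact absurd hi.1 h

/-- A finite family whose span contains an independent family with the same index set is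
independent. -/
theorem indep_of_mem_span {K V ι : Type*} [Field K] [AddCommGroup V] [Module K V] [Finite ι]
    {f g : ι → V} (hg : LinearIndependent K g) (h : ∀ i, g i ∈ Submodule.span K (Set.range f)) :
    LinearIndependent K f := by
  cases nonempty_fintype ι
  rw [linearIndependent_iff_card_le_finrank_span, ← finrank_span_eq_card hg]
  have : FiniteDimensional K (Submodule.span K (Set.range f)) :=
    FiniteDimensional.span_of_finite K (Set.finite_range f)
  refine Submodule.finrank_mono (Submodule.span_le.mpr ?_)
  rintro _ ⟨i, rfl⟩
  exact h i

section
variable {A B n : ℕ} {u v : ℕ → ℕ} (K : Type*) [Field K]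

theorem finite_degree {σ : Type*} [Finite σ] (ℓ : ℕ) (p : (σ →₀ ℕ) → Prop) :
    Finite {s : σ →₀ ℕ // p s ∧ s.degree = ℓ} := by
  classical
  cases nonempty_fintype σ
  have : Set.Finite {s : σ →₀ ℕ | p s ∧ s.degree = ℓ} := by
    refine (Finset.finite_toSet (Finset.finsuppAntidiag Finset.univ ℓ)).subset ?_
    rintro s ⟨-, hs⟩
    rw [Finset.mem_coe, Finset.mem_finsuppAntidiag]
    exact ⟨by rw [← hs, Finsupp.degree_eq_sum], Finset.subset_univ _⟩
  exact this

/-- The standard monomials of degree `ℓ` span the homogeneous component modulo the ideal. -/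
theorem map_homogeneous {Λ : Set (Fin (A + 1) × Fin (B + 1))} (hΛ : IsLadder Λ) {V : Type*}
    [AddCommGroup V] [Module K V] (φ : MvPolynomial {q // q ∈ Λ} K →ₗ[K] V)
    (hφ : ∀ f ∈ ladderIdeal K Λ n u v, φ f = 0) (ℓ : ℕ) :
    Submodule.map φ (homogeneousSubmodule {q // q ∈ Λ} K ℓ) = Submodule.span K (Set.range
      fun s : {s : {q // q ∈ Λ} →₀ ℕ // Std n u v (supp s) ∧ s.degree = ℓ} =>
        φ (monomial s.1 1)) := by
  refine le_antisymm ?_ (Submodule.span_le.mpr ?_)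
  · rintro _ ⟨f, hf, rfl⟩
    rw [f.as_sum, map_sum]
    refine Submodule.sum_mem _ fun d hd => ?_
    have hd' : d.degree = ℓ := by
      have := (mem_homogeneousSubmodule ℓ f).mp hf (mem_support_iff.mp hd)
      exact (DFunLike.congr_fun (Finsupp.degree_eq_weight_one (R := ℕ)) d).trans this
    rw [← mul_one (coeff d f), ← smul_eq_mul, ← smul_monomial, map_smul]
    refine Submodule.smul_mem _ _ ?_
    obtain ⟨a, ha, b, hb, hab⟩ := Submodule.mem_sup.mp (spanning K hΛ n u v d)
    rw [← hab, map_add, hφ a ha, zero_add]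
    have hb2 := Submodule.mem_map_of_mem (f := φ) hb
    rw [Submodule.map_span] at hb2
    refine Submodule.span_mono ?_ hb2
    rintro _ ⟨_, ⟨s, ⟨hs1, hs2⟩, rfl⟩, rfl⟩
    exact ⟨⟨s, hs1, hs2.trans hd'⟩, rfl⟩
  · rintro _ ⟨s, rfl⟩
    refine Submodule.mem_map_of_mem ((mem_homogeneousSubmodule _ _).mpr ?_)
    exact isHomogeneous_monomial _ s.2.2

/-- For the full matrix, the images of the standard monomials are independent: they span the images
of equally many products of minors, which have distinct leading monomials by `G_inj`. -/
theorem indep_univ (hu_mono : ∀ i j, 1 ≤ i → i < j → j ≤ n → u i < u j)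
    (hv_mono : ∀ i j, 1 ≤ i → i < j → j ≤ n → v i < v j) (hu_top : u (n + 1) = A + 2) (ℓ : ℕ) :
    LinearIndependent K
      fun s : {s : {q : Fin (A + 1) × Fin (B + 1) // q ∈ Set.univ} →₀ ℕ //
        Std n u v (supp s) ∧ s.degree = ℓ} => Phi K n u v Set.univ (monomial s.1 1) := by
  have := finite_degree ℓ fun s : {q : Fin (A + 1) × Fin (B + 1) // q ∈ Set.univ} →₀ ℕ =>
    Std n u v (supp s)
  have hex := fun s : {s : {q : Fin (A + 1) × Fin (B + 1) // q ∈ Set.univ} →₀ ℕ //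
        Std n u v (supp s) ∧ s.degree = ℓ} => exists_bitableau K hu_top s.2.1
  choose P h1 h2 h3 h4 using hex
  refine indep_of_mem_span (g := fun s => Phi K n u v Set.univ (P s)) ?_ fun s => ?_
  · refine indep_of_degree_inj MonomialOrder.lex h2 fun s s' hss => ?_
    have hss' : MonomialOrder.lex.degree (Phi K n u v Set.univ (P s)) =
      MonomialOrder.lex.degree (Phi K n u v Set.univ (P s')) := hss
    have hG1 : ∀ i ≤ A + 1, G (expMat s.1) i (B + 1) = G (expMat s'.1) i (B + 1) := by
      intro i hi
      funext k
      rcases Nat.lt_or_ge k n with hk | hk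
      · rw [← h3 s ⟨k, hk⟩ i hi, ← h3 s' ⟨k, hk⟩ i hi, hss']
      · have e1 := (s.2.1.vanish le_rfl).1 i (by omega)
        have e2 := (s'.2.1.vanish le_rfl).1 i (by omega)
        have e3 := G_antitone (expMat s.1) i (B + 1) hk
        have e4 := G_antitone (expMat s'.1) i (B + 1) hk
        omega
    have hG2 : ∀ j ≤ B + 1, G (expMat s.1) (A + 1) j = G (expMat s'.1) (A + 1) j := by
      intro j hj
      funext k
      rcases Nat.lt_or_ge k n with hk | hk
      · rw [← h4 s ⟨k, hk⟩ j hj, ← h4 s' ⟨k, hk⟩ j hj, hss']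
      · have hz : ∀ s : {s : {q : Fin (A + 1) × Fin (B + 1) // q ∈ Set.univ} →₀ ℕ //
            Std n u v (supp s) ∧ s.degree = ℓ}, G (expMat s.1) (A + 1) j k = 0 := by
          intro s
          have e1 := (s.2.1.vanish le_rfl).1 (A + 1) (by omega)
          have e3 := G_antitone (expMat s.1) (A + 1) (B + 1) hk
          have e5 := monotone_nat_of_le_succ
            (f := fun j => G (expMat s.1) (A + 1) j k)
            (fun j => ((G_interl (expMat s.1) (A + 1)).1 j k).1) hj
          have e6 : G (expMat s.1) (A + 1) j k ≤ G (expMat s.1) (A + 1) (B + 1) k := e5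
          omega
        rw [hz, hz]
    have hm := G_inj hG1 hG2
    apply Subtype.ext
    ext q
    rw [← expMat_rev, ← expMat_rev]
    exact hm _ (Fin.is_lt _) _ (Fin.is_lt _)
  · have hmh := map_homogeneous (A := A) (B := B) K (Λ := Set.univ) (fun _ _ _ _ _ _ _ _ _ _ _ _ => Set.mem_univ _)
      (Phi K n u v Set.univ).toLinearMap (fun f hf => Phi_ideal hu_mono hv_mono hf) ℓ
    refine hmh.le (Submodule.mem_map_of_mem ((mem_homogeneousSubmodule _ _).mpr ?_))
    have := h1 s
    rwa [s.2.2] at this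

/-- The inclusion of the positions of a ladder into the positions of the full matrix. -/
def incl (Λ : Set (Fin (A + 1) × Fin (B + 1))) (q : {q // q ∈ Λ}) :
    {q : Fin (A + 1) × Fin (B + 1) // q ∈ Set.univ} := ⟨q.1, Set.mem_univ _⟩

theorem incl_inj (Λ : Set (Fin (A + 1) × Fin (B + 1))) : Function.Injective (incl Λ) :=
  fun _ _ h => Subtype.ext (congrArg (fun x => x.1) h)

theorem supp_incl {Λ : Set (Fin (A + 1) × Fin (B + 1))} (s : {q // q ∈ Λ} →₀ ℕ) :
    supp (s.mapDomain (incl Λ)) = supp s := by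
  have key : ∀ q, ∀ hq : q ∈ Λ, s.mapDomain (incl Λ) ⟨q, Set.mem_univ _⟩ = s ⟨q, hq⟩ := fun q hq =>
    Finsupp.mapDomain_apply (incl_inj Λ) s ⟨q, hq⟩
  ext q
  constructor
  · rintro ⟨_, h⟩
    by_cases hq : q ∈ Λ
    · exact ⟨hq, by rwa [← key q hq]⟩
    · refine absurd (Finsupp.mapDomain_of_notMem_range _ _ ?_) h
      rintro ⟨a, ha⟩
      have : a.1 = q := congrArg (fun x => x.1) ha
      exact hq (this ▸ a.2)
  · rintro ⟨hq, h⟩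
    exact ⟨Set.mem_univ _, by rwa [← key q hq] at h⟩

theorem degree_mapDomain' {σ τ : Type*} (f : σ → τ) (s : σ →₀ ℕ) :
    (s.mapDomain f).degree = s.degree := by
  rw [Finsupp.mapDomain, Finsupp.sum, map_sum, Finsupp.degree_apply]
  simp

/-- The standard monomials form a basis of the ladder determinantal ring. -/
theorem quotDim_eq {Λ : Set (Fin (A + 1) × Fin (B + 1))} (hΛ : IsLadder Λ)
    (hu_mono : ∀ i j, 1 ≤ i → i < j → j ≤ n → u i < u j)
    (hv_mono : ∀ i j, 1 ≤ i → i < j → j ≤ n → v i < v j) (hu_top : u (n + 1) = A + 2) (ℓ : ℕ) :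
    quotDim K (ladderIdeal K Λ n u v) ℓ =
      Nat.card {s : {q // q ∈ Λ} →₀ ℕ // Std n u v (supp s) ∧ s.degree = ℓ} := by
  have hfin := finite_degree ℓ fun s : {q // q ∈ Λ} →₀ ℕ => Std n u v (supp s)
  cases nonempty_fintype {s : {q // q ∈ Λ} →₀ ℕ // Std n u v (supp s) ∧ s.degree = ℓ}
  have hcomp : ∀ f, Phi K n u v Λ f = Phi K n u v Set.univ (rename (incl Λ) f) := by
    intro f
    rw [← AlgHom.comp_apply]
    congr 1
    ext q : 1
    simp [Phi, incl]
  have hind : LinearIndependent K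
      fun s : {s : {q // q ∈ Λ} →₀ ℕ // Std n u v (supp s) ∧ s.degree = ℓ} =>
        Phi K n u v Λ (monomial s.1 1) := by
    have h := (indep_univ (B := B) K hu_mono hv_mono hu_top ℓ).comp
      (fun s : {s : {q // q ∈ Λ} →₀ ℕ // Std n u v (supp s) ∧ s.degree = ℓ} =>
        (⟨s.1.mapDomain (incl Λ), by rw [supp_incl]; exact s.2.1, by
          rw [degree_mapDomain']; exact s.2.2⟩ :
          {s : {q : Fin (A + 1) × Fin (B + 1) // q ∈ Set.univ} →₀ ℕ //
            Std n u v (supp s) ∧ s.degree = ℓ}))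
      (fun a b hab => Subtype.ext (Finsupp.mapDomain_injective (incl_inj Λ)
        (congrArg (fun x => x.1) hab)))
    convert h using 2 with s
    rw [Function.comp_apply, hcomp, rename_monomial]
  unfold quotDim
  rw [map_homogeneous K hΛ (Ideal.Quotient.mkₐ K (ladderIdeal K Λ n u v)).toLinearMap
    (fun f hf => Ideal.Quotient.eq_zero_iff_mem.mpr hf) ℓ, Nat.card_eq_fintype_card]
  refine finrank_span_eq_card ?_
  refine LinearIndependent.of_comp (Ideal.Quotient.liftₐ (ladderIdeal K Λ n u v)
    (Phi K n u v Λ) fun f hf => Phi_ideal hu_mono hv_mono hf).toLinearMap ?_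
  exact hind

end
end LadderCor

/-! ### The Hilbert series -/

namespace LadderCor
open PowerSeries

section
variable {σ : Type*} [Fintype σ] [DecidableEq σ]

theorem coeff_X_mul_mk_one (k : ℕ) : coeff k (X * mk 1 : PowerSeries ℤ) = if k ≠ 0 then 1 else 0 := by
  cases k with
  | zero => simp
  | succ k => rw [coeff_succ_X_mul, coeff_mk]; simp

/-- The power series counting the monomials with given support by their degree. -/
theorem coeff_supp_series (F : Finset σ) (ℓ : ℕ) :
    coeff ℓ ((X * mk 1 : PowerSeries ℤ) ^ F.card) =
      (((Finset.finsuppAntidiag Finset.univ ℓ).filter fun s : σ →₀ ℕ => s.support = F).card : ℤ) := by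
  rw [← Finset.prod_const, coeff_prod]
  simp only [coeff_X_mul_mk_one, Finset.prod_boole]
  trans (((F.finsuppAntidiag ℓ).filter fun x : σ →₀ ℕ => ∀ i ∈ F, x i ≠ 0).card : ℤ)
  · rw [Finset.card_filter]
    push_cast
    exact Finset.sum_congr rfl fun _ _ => by congr
  congr 2
  ext s
  simp only [Finset.mem_filter, Finset.mem_finsuppAntidiag, Finset.subset_univ, and_true]
  constructor
  · rintro ⟨⟨h1, h2⟩, h3⟩
    have hF : s.support = F :=
      subset_antisymm h2 fun i hi => Finsupp.mem_support_iff.mpr (h3 i hi)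
    refine ⟨?_, hF⟩
    rw [← h1]
    symm
    refine Finset.sum_subset (Finset.subset_univ _) fun i _ hi => ?_
    rw [← hF] at hi
    exact Finsupp.notMem_support_iff.mp hi
  · rintro ⟨h1, h2⟩
    refine ⟨⟨?_, h2.le⟩, fun i hi => by rw [← h2] at hi; exact Finsupp.mem_support_iff.mp hi⟩
    rw [← h1]
    refine Finset.sum_subset (Finset.subset_univ _) fun i _ hi => ?_
    rw [← h2] at hi
    exact Finsupp.notMem_support_iff.mp hi

/-- The Hilbert series of a face ring. -/
theorem stanley_reisner (𝒮 : Finset (Finset σ)) {d : ℕ} (hd : ∀ F ∈ 𝒮, F.card ≤ d) :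
    (mk fun ℓ => (Nat.card {s : σ →₀ ℕ // s.support ∈ 𝒮 ∧ s.degree = ℓ} : ℤ)) * (1 - X) ^ d =
      ∑ F ∈ 𝒮, X ^ F.card * (1 - X) ^ (d - F.card) := by
  have h : (mk fun ℓ => (Nat.card {s : σ →₀ ℕ // s.support ∈ 𝒮 ∧ s.degree = ℓ} : ℤ)) =
      ∑ F ∈ 𝒮, (X * mk 1 : PowerSeries ℤ) ^ F.card := by
    ext ℓ
    rw [coeff_mk, map_sum]
    simp only [coeff_supp_series]
    rw [← Nat.cast_sum]
    congr 1
    have e1 : Nat.card {s : σ →₀ ℕ // s.support ∈ 𝒮 ∧ s.degree = ℓ} =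
        ((Finset.finsuppAntidiag Finset.univ ℓ).filter fun s : σ →₀ ℕ => s.support ∈ 𝒮).card := by
      refine Nat.subtype_card _ fun s => ?_
      simp [Finset.mem_filter, Finset.mem_finsuppAntidiag, Finsupp.degree_eq_sum, and_comm]
    rw [e1, Finset.card_eq_sum_card_fiberwise (f := fun s => s.support) (t := 𝒮)]
    · refine Finset.sum_congr rfl fun F hF => ?_
      congr 1
      ext s
      simp only [Finset.mem_filter]
      exact ⟨fun h => ⟨h.1.1, h.2⟩, fun h => ⟨⟨h.1, by rw [h.2]; exact hF⟩, h.2⟩⟩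
    · intro s hs
      exact (Finset.mem_filter.mp hs).2
  rw [h, Finset.sum_mul]
  refine Finset.sum_congr rfl fun F hF => ?_
  have h1 := hd F hF
  calc (X * mk 1 : PowerSeries ℤ) ^ F.card * (1 - X) ^ d
      = X ^ F.card * ((mk 1 * (1 - X)) ^ F.card) * (1 - X) ^ (d - F.card) := by
        conv_lhs => rw [← Nat.add_sub_cancel' h1, pow_add, mul_pow]
        rw [mul_pow]; ring
    _ = _ := by rw [mk_one_mul_one_sub_eq_one, one_pow, mul_one]

end

section
variable {A B n : ℕ} {u v : ℕ → ℕ} {Λ : Set (Fin (A + 1) × Fin (B + 1))}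

/-- The point of the plane that corresponds to a position of the matrix. -/
def toPt (q : Fin (A + 1) × Fin (B + 1)) : ℤ × ℤ := ((q.2 : ℕ), (A : ℤ) - (q.1 : ℕ))

theorem toPt_inj : Function.Injective (toPt (A := A) (B := B)) := by
  rintro ⟨a, b⟩ ⟨a', b'⟩ h
  simp only [toPt, Prod.mk.injEq] at h
  ext <;> simp only <;> omega

theorem toPt_SEs {p q : Fin (A + 1) × Fin (B + 1)} :
    SEs (toPt p) (toPt q) ↔ p.1 < q.1 ∧ p.2 < q.2 := by
  unfold SEs toPt
  rw [Fin.lt_def, Fin.lt_def]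
  simp only
  omega

open Classical in
/-- Standard monomials are those whose support is a face. -/
theorem std_iff_face {S : Region} (hn : S.n = n) (hL : ∀ p, p ∈ S.L ↔ p ∈ ladderRegion Λ)
    (hc : ∀ j, S.c j = (u j : ℤ) - 1) (hb : ∀ j, S.b j = (B : ℤ) - v j + 1)
    (hu_top : u (n + 1) = A + 2) (s : {q // q ∈ Λ} →₀ ℕ) :
    Std n u v (supp s) ↔ s.support.image (fun q => toPt q.1) ∈ S.faces := by
  have hmem : ∀ q, toPt q ∈ s.support.image (fun q => toPt q.1) ↔ q ∈ supp s := by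
    intro q
    rw [Finset.mem_image]
    constructor
    · rintro ⟨a, ha, h⟩
      have := toPt_inj h
      subst this
      exact ⟨a.2, Finsupp.mem_support_iff.mp ha⟩
    · rintro ⟨h1, h2⟩
      exact ⟨⟨q, h1⟩, Finsupp.mem_support_iff.mpr h2, rfl⟩
  have hcc : ∀ (l : List (Fin (A + 1) × Fin (B + 1))) t,
      ¬ (∀ p ∈ l, A + 2 ≤ (p.1 : ℕ) + u t) ↔ ∃ p ∈ l.map toPt, S.c t ≤ p.2 := by
    intro l t
    push Not
    simp only [List.mem_map, exists_exists_and_eq_and]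
    refine exists_congr fun p => and_congr_right fun _ => ?_
    rw [hc, toPt]
    simp only
    have := p.1.2
    omega
  have hbb : ∀ (l : List (Fin (A + 1) × Fin (B + 1))) t,
      ¬ (∀ p ∈ l, B + 2 ≤ (p.2 : ℕ) + v t) ↔ ∃ p ∈ l.map toPt, p.1 ≤ S.b t := by
    intro l t
    push Not
    simp only [List.mem_map, exists_exists_and_eq_and]
    refine exists_congr fun p => and_congr_right fun _ => ?_
    rw [hb, toPt]
    simp only
    omega
  rw [Region.mem_faces, hn]
  constructor
  · intro h
    refine ⟨?_, ?_⟩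
    · intro p hp
      obtain ⟨q, -, rfl⟩ := Finset.mem_image.mp hp
      exact (hL _).mpr ⟨q.1, q.2, rfl⟩
    · intro l hl hF
      obtain ⟨l, rfl⟩ : ∃ l', List.map toPt l' = l := by
        have : l ∈ Set.range (List.map (toPt (A := A) (B := B))) := by
          rw [Set.range_list_map]
          intro p hp
          obtain ⟨q, -, rfl⟩ := Finset.mem_image.mp (hF p hp)
          exact ⟨q.1, rfl⟩
        exact this
      rw [List.pairwise_map] at hl
      have hl' := hl.imp fun h => toPt_SEs.mp h
      have hF' : ∀ p ∈ l, p ∈ supp s := fun p hp =>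
        (hmem p).mp (hF _ (List.mem_map_of_mem hp))
      rw [List.length_map]
      refine ⟨fun hlen => ?_, fun h1 h2 => ?_⟩
      · refine (h l hl' hF' (by omega) (by omega)).1 fun p _ => ?_
        rw [hlen, hu_top]; omega
      · have := h l hl' hF' h1 (by omega)
        exact ⟨(hcc _ _).mp this.1, (hbb _ _).mp this.2⟩
  · rintro ⟨-, h⟩ l hl hF h1 h2
    have h3 := h (l.map toPt) (by
      rw [List.pairwise_map]; exact hl.imp fun h => toPt_SEs.mpr h) (by
      intro p hp
      obtain ⟨q, hq, rfl⟩ := List.mem_map.mp hp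
      exact (hmem q).mpr (hF q hq))
    rw [List.length_map] at h3
    have h4 := h3.2 h1 (by have := h3.1; omega)
    exact ⟨(hcc _ _).mpr h4.1, (hbb _ _).mpr h4.2⟩

/-- The Hilbert series of the ladder determinantal ring is that of the complex of faces. -/
theorem hilbert_faces {S : Region} (hn : S.n = n) (hL : ∀ p, p ∈ S.L ↔ p ∈ ladderRegion Λ)
    (hc : ∀ j, S.c j = (u j : ℤ) - 1) (hb : ∀ j, S.b j = (B : ℤ) - v j + 1)
    (hu_top : u (n + 1) = A + 2)
    (K : Type*) [Field K] (hΛ : IsLadder Λ)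
    (hu_mono : ∀ i j, 1 ≤ i → i < j → j ≤ n → u i < u j)
    (hv_mono : ∀ i j, 1 ≤ i → i < j → j ≤ n → v i < v j)
    {f0 : ℕ → ℤ → ℤ} (h0 : S.Fam S.n f0) :
    hilbertSeries K (ladderIdeal K Λ n u v) * (1 - X) ^ S.dim =
      ∑ F ∈ S.faces, X ^ F.card * (1 - X) ^ (S.dim - F.card) := by
  classical
  have hinj : Function.Injective fun q : {q // q ∈ Λ} => toPt q.1 :=
    toPt_inj.comp Subtype.val_injective
  have h1 := stanley_reisner (σ := {q // q ∈ Λ})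
    (Finset.univ.filter fun F : Finset {q // q ∈ Λ} => F.image (fun q => toPt q.1) ∈ S.faces)
    (d := S.dim) (fun F hF => by
      rw [← Finset.card_image_of_injective F hinj]
      exact Region.card_le_dim h0 (Finset.mem_filter.mp hF).2)
  unfold hilbertSeries
  simp only [quotDim_eq K hΛ hu_mono hv_mono hu_top,
    std_iff_face hn hL hc hb hu_top]
  simp only [Finset.mem_filter, Finset.mem_univ, true_and] at h1
  rw [h1]
  refine Finset.sum_bij (fun F _ => F.image fun q => toPt q.1)
    (fun F hF => (Finset.mem_filter.mp hF).2)
    (fun F _ F' _ h => Finset.image_injective hinj h) (fun F hF => ?_) (fun F hF => ?_)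
  · have hFL := (Region.mem_faces.mp hF).1
    have hsub : (F : Set (ℤ × ℤ)) ⊆ Set.range fun q : {q // q ∈ Λ} => toPt q.1 := by
      intro p hp
      obtain ⟨q, hq, rfl⟩ := (hL p).mp (hFL hp)
      exact ⟨⟨q, hq⟩, rfl⟩
    rw [← Set.image_univ] at hsub
    obtain ⟨F', -, rfl⟩ := Finset.subset_set_image_iff.mp hsub
    exact ⟨F', Finset.mem_filter.mpr ⟨Finset.mem_univ _, hF⟩, rfl⟩
  · rw [Finset.card_image_of_injective F hinj]

end
end LadderCor

/-! ### The a-invariant -/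

namespace LadderCor
namespace Region
variable {S : Region}

/-- The maximal number of turns of the admissible `j`-th paths, in terms of lists of points; the
paths are counted from the south-east, so that `j` stands for the index `n - j + 1`. -/
theorem isGreatest_adm {A B n p q : ℕ} {u v : ℕ → ℕ} {x y : Fin p → ℤ} {z w : Fin q → ℤ}
    (hSA : S.A = A) (hn : S.n = n)
    (hc : ∀ j, S.c j = (u j : ℤ) - 1) (hb : ∀ j, S.b j = (B : ℤ) - v j + 1)
    (hU : ∀ P : ℤ × ℤ, P ∈ S.CU ↔ ∃ k : Fin p, P = (x k, y k))
    (hD : ∀ P : ℤ × ℤ, P ∈ S.DL ↔ ∃ k : Fin q, P = (z k, w k))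
    {i : ℕ} (h1 : 1 ≤ i) (h2 : i ≤ n) :
    {k : ℤ | ∃ Q : List (ℤ × ℤ),
        IsLatticePathFrom Q ((0 : ℤ), (u (n - i + 1) : ℤ) - 1)
          ((B : ℤ) - (v (n - i + 1) : ℤ) + 1, (A : ℤ)) ∧
        (∀ j, 1 ≤ j → j < i → StaysSE Q
          ((i : ℤ) - (j : ℤ), (u (n - j + 1) : ℤ) - 1 - (i : ℤ) + (j : ℤ))) ∧
        (∀ j, 1 ≤ j → j < i → StaysSE Q
          ((B : ℤ) - (v (n - j + 1) : ℤ) + 1 + (i : ℤ) - (j : ℤ),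
            (A : ℤ) - (i : ℤ) + (j : ℤ))) ∧
        (∀ k' : Fin p, StaysSE Q (x k' + (i : ℤ) - 1, y k' - (i : ℤ) + 1)) ∧
        (∀ k' : Fin q, StaysNW Q
          (z k' - (n : ℤ) + (i : ℤ), w k' + (n : ℤ) - (i : ℤ))) ∧
        k = (((NETurns Q).countP fun pt => decide (∀ k' : Fin q,
          pt ≠ (z k' - (n : ℤ) + (i : ℤ), w k' + (n : ℤ) - (i : ℤ)))) : ℤ)} =
      {k : ℤ | ∃ g, S.Adm (n - i + 1) g ∧ k = ((S.turns (n - i + 1) g).card : ℤ)} := by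
  obtain ⟨j, hj⟩ : ∃ j, j = n - i + 1 := ⟨_, rfl⟩
  have hji : (j : ℤ) = n - i + 1 := by omega
  rw [← hj]
  have e1 : ∀ k' : Fin q, ((z k' - (n : ℤ) + (i : ℤ), w k' + (n : ℤ) - (i : ℤ)) : ℤ × ℤ) =
      (z k' - j + 1, w k' + j - 1) := fun k' => by ext <;> simp only <;> omega
  have e2 : ∀ k' : Fin p, ((x k' + (i : ℤ) - 1, y k' - (i : ℤ) + 1) : ℤ × ℤ) =
      (x k' + S.n - j, y k' - S.n + j) := fun k' => by ext <;> simp only [hn] <;> omega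
  simp only [e1, e2]
  have hU' : ∀ Q : List (ℤ × ℤ), (∀ k, 1 ≤ k → k < i → StaysSE Q
      ((i : ℤ) - (k : ℤ), (u (n - k + 1) : ℤ) - 1 - (i : ℤ) + (k : ℤ))) ↔
      ∀ k', j < k' → k' ≤ S.n → StaysSE Q ((k' : ℤ) - j, S.c k' - k' + j) := by
    intro Q
    constructor
    · intro h k' hk hk'
      have := h (n - k' + 1) (by omega) (by omega)
      rw [show n - (n - k' + 1) + 1 = k' by omega] at this
      convert this using 2
      · omega
      · rw [hc]; omega
    · intro h k hk hk'
      have := h (n - k + 1) (by omega) (by omega)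
      convert this using 2
      · omega
      · rw [hc]; omega
  have hV' : ∀ Q : List (ℤ × ℤ), (∀ k, 1 ≤ k → k < i → StaysSE Q
      ((B : ℤ) - (v (n - k + 1) : ℤ) + 1 + (i : ℤ) - (k : ℤ),
            (A : ℤ) - (i : ℤ) + (k : ℤ))) ↔
      ∀ k', j < k' → k' ≤ S.n → StaysSE Q (S.b k' + k' - j, S.A - k' + j) := by
    intro Q
    constructor
    · intro h k' hk hk'
      have := h (n - k' + 1) (by omega) (by omega)
      rw [show n - (n - k' + 1) + 1 = k' by omega] at this
      convert this using 2
      · rw [hb]; omega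
      · rw [hSA]; omega
    · intro h k hk hk'
      have := h (n - k + 1) (by omega) (by omega)
      convert this using 2
      · rw [hb]; omega
      · rw [hSA]; omega
  simp only [hU', hV']
  simp only [← hc, ← hb, ← hSA]
  ext m
  constructor
  · rintro ⟨Q, hQ, r1, r2, r3, r4, rfl⟩
    obtain ⟨g, k, rfl, hk, hg⟩ := lattice_iff hQ
    obtain ⟨a1, a2⟩ := adm_count hU hD hg hk
    refine ⟨g, a1.mpr ⟨r1, r2, r3, r4⟩, ?_⟩
    rw [← a2]
  · rintro ⟨g, hg, rfl⟩
    have hk : S.b j + S.A = S.c j + ((S.b j + S.A - S.c j).toNat : ℕ) := by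
      have := S.c_le j (by omega) (by omega)
      have := S.b_nonneg j (by omega) (by omega)
      omega
    obtain ⟨a1, a2⟩ := adm_count hU hD hg.path hk
    obtain ⟨r1, r2, r3, r4⟩ := a1.mp hg
    refine ⟨_, hg.path.lattice hk, r1, r2, r3, r4, ?_⟩
    rw [← a2]

/-- The numerator of the Hilbert series: the generating polynomial of the families of
non-intersecting paths by their number of turns. -/
noncomputable def numer (S : Region) : Polynomial ℤ :=
  ∑ f ∈ S.fams, Polynomial.X ^ (S.allturns S.n f).card

/-- The numerator has nonnegative coefficients, so that its degree is the maximal number of turns.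
-/
theorem natDegree_numer {f0 : ℕ → ℤ → ℤ} (h0 : S.Fam S.n f0) {N : ℕ → ℕ}
    (hN : ∀ j, 1 ≤ j → j ≤ S.n → (∃ g, S.Adm j g ∧ (S.turns j g).card = N j) ∧
      ∀ g, S.Adm j g → (S.turns j g).card ≤ N j) :
    S.numer.natDegree = ∑ j ∈ Finset.Icc 1 S.n, N j := by
  obtain ⟨f, hf, hft⟩ := exists_max h0 hN
  refine Polynomial.natDegree_eq_of_le_of_coeff_ne_zero ?_ ?_
  · refine Polynomial.natDegree_sum_le_of_forall_le _ _ fun f hf => ?_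
    rw [Polynomial.natDegree_X_pow]
    exact allturns_le h0 (fun j h1 h2 => (hN j h1 h2).2) ((mem_fams h0).mp hf)
  · rw [numer, Polynomial.finsetSum_coeff]
    refine (Finset.sum_pos' (fun f _ => ?_) ⟨f, (mem_fams h0).mpr hf, ?_⟩).ne'
    · rw [Polynomial.coeff_X_pow]; split_ifs <;> simp
    · rw [Polynomial.coeff_X_pow, if_pos hft.symm]; exact one_pos

/-- The value at `1` is the number of families. -/
theorem eval_numer {f0 : ℕ → ℤ → ℤ} (h0 : S.Fam S.n f0) : S.numer.eval 1 ≠ 0 := by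
  rw [numer, Polynomial.eval_finsetSum]
  simp only [Polynomial.eval_pow, Polynomial.eval_X, one_pow, Finset.sum_const, nsmul_one]
  exact_mod_cast (Finset.card_pos.mpr ⟨f0, (mem_fams h0).mpr h0⟩).ne'

end Region
end LadderCor

theorem cor4_two_sided_a_invariant (K : Type*) [Field K] (A B n : ℕ) (hn : 1 ≤ n)
    (Λ : Set (Fin (A + 1) × Fin (B + 1))) (hΛ : IsLadder Λ)
    (u v : ℕ → ℕ)
    (hu_mono : ∀ i j, 1 ≤ i → i < j → j ≤ n → u i < u j)
    (hv_mono : ∀ i j, 1 ≤ i → i < j → j ≤ n → v i < v j)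
    (hu_range : ∀ i, 1 ≤ i → i ≤ n → 1 ≤ u i ∧ u i ≤ A + 1)
    (hv_range : ∀ i, 1 ≤ i → i ≤ n → 1 ≤ v i ∧ v i ≤ B + 1)
    (hu_top : u (n + 1) = A + 2) (hv_top : v (n + 1) = B + 2)
    (hAE : ∀ j, 1 ≤ j → j ≤ n →
      ((0 : ℤ), (u j : ℤ) - 1) ∈ ladderRegion Λ ∧
      ((B : ℤ) - (v j : ℤ) + 1, (A : ℤ)) ∈ ladderRegion Λ)
    -- there exists at least one family of non-intersecting lattice paths joining the
    -- prescribed starting and end points which is entirely contained in `L`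
    (hex : ∃ F : Fin n → List (ℤ × ℤ), NonIntersecting F ∧
      (∀ i : Fin n, IsLatticePathFrom (F i)
        ((0 : ℤ), (u (n - (i : ℕ)) : ℤ) - 1)
        ((B : ℤ) - (v (n - (i : ℕ)) : ℤ) + 1, (A : ℤ))) ∧
      (∀ i : Fin n, ∀ pt ∈ F i, pt ∈ ladderRegion Λ))
    -- the inwards corners of the upper boundary of `L`
    (p : ℕ) (x y : Fin p → ℤ)
    (hcornersU : ∀ P : ℤ × ℤ,
      (P ∈ ladderRegion Λ ∧ (P.1 - 1, P.2) ∈ ladderRegion Λ ∧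
        (P.1, P.2 + 1) ∈ ladderRegion Λ ∧ (P.1 - 1, P.2 + 1) ∉ ladderRegion Λ) ↔
      ∃ k : Fin p, P = (x k, y k))
    -- the inwards corners of the lower boundary of `L`
    (q : ℕ) (z w : Fin q → ℤ)
    (hcornersL : ∀ P : ℤ × ℤ,
      (P ∈ ladderRegion Λ ∧ (P.1 + 1, P.2) ∈ ladderRegion Λ ∧
        (P.1, P.2 - 1) ∈ ladderRegion Λ ∧ (P.1 + 1, P.2 - 1) ∉ ladderRegion Λ) ↔
      ∃ k : Fin q, P = (z k, w k))
    -- `t i` is the maximal number of valid NE-turns of a single path as in the statement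
    (t : ℕ → ℤ)
    (ht : ∀ i, 1 ≤ i → i ≤ n → IsGreatest
      {k : ℤ | ∃ Q : List (ℤ × ℤ),
        IsLatticePathFrom Q ((0 : ℤ), (u (n - i + 1) : ℤ) - 1)
          ((B : ℤ) - (v (n - i + 1) : ℤ) + 1, (A : ℤ)) ∧
        (∀ j, 1 ≤ j → j < i → StaysSE Q
          ((i : ℤ) - (j : ℤ), (u (n - j + 1) : ℤ) - 1 - (i : ℤ) + (j : ℤ))) ∧
        (∀ j, 1 ≤ j → j < i → StaysSE Q
          ((B : ℤ) - (v (n - j + 1) : ℤ) + 1 + (i : ℤ) - (j : ℤ),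
            (A : ℤ) - (i : ℤ) + (j : ℤ))) ∧
        (∀ k' : Fin p, StaysSE Q (x k' + (i : ℤ) - 1, y k' - (i : ℤ) + 1)) ∧
        (∀ k' : Fin q, StaysNW Q
          (z k' - (n : ℤ) + (i : ℤ), w k' + (n : ℤ) - (i : ℤ))) ∧
        k = (((NETurns Q).countP fun pt => decide (∀ k' : Fin q,
          pt ≠ (z k' - (n : ℤ) + (i : ℤ), w k' + (n : ℤ) - (i : ℤ)))) : ℤ)}
      (t i))
    (d : ℕ)
    (hd : (d : ℤ) = ((A : ℤ) + (B : ℤ) + 3) * n -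
      ∑ i ∈ Finset.Icc 1 n, ((u i : ℤ) + (v i : ℤ))) :
    ∃ H : Polynomial ℤ, H.eval 1 ≠ 0 ∧
      hilbertSeries K (ladderIdeal K Λ n u v) * (1 - PowerSeries.X) ^ d =
        (↑H : PowerSeries ℤ) ∧
      (H.natDegree : ℤ) - (d : ℤ) =
        (∑ i ∈ Finset.Icc 1 n, (t i + (u i : ℤ) + (v i : ℤ))) -
          ((A : ℤ) + (B : ℤ) + 3) * n := by
  obtain ⟨S, hSA, hSn, hSL, hSc, hSb⟩ := LadderCor.Region.exists_region hΛ hu_mono hv_mono hu_range hv_range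
  have hU : ∀ P : ℤ × ℤ, P ∈ S.CU ↔ ∃ k : Fin p, P = (x k, y k) := fun P => by
    rw [← hcornersU]
    simp only [LadderCor.Region.CU, Finset.mem_filter, hSL]
  have hD : ∀ P : ℤ × ℤ, P ∈ S.DL ↔ ∃ k : Fin q, P = (z k, w k) := fun P => by
    rw [← hcornersL]
    simp only [LadderCor.Region.DL, Finset.mem_filter, hSL]
  obtain ⟨f0, h0⟩ : ∃ f, S.Fam S.n f := by
    obtain ⟨F, hF1, hF2, hF3⟩ := hex
    have key : ∀ j, 1 ≤ j → j ≤ S.n → ∃ i : Fin n, n - (i : ℕ) = j ∧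
        (if h : n - j < n then F ⟨n - j, h⟩ else []) = F i := fun j h1 h2 =>
      ⟨⟨n - j, by omega⟩, by simp only; omega, by rw [dif_pos]⟩
    refine LadderCor.Region.exists_fam (fun j => if h : n - j < n then F ⟨n - j, h⟩ else []) ?_ ?_ ?_
    · intro j h1 h2
      obtain ⟨i, hi, he⟩ := key j h1 h2
      have := hF2 i
      rw [hi] at this
      simp only [he, hSc, hSb, hSA]
      exact this
    · intro j h1 h2 P hP
      obtain ⟨i, hi, he⟩ := key j h1 h2
      simp only [he] at hP
      exact (hSL P).mpr (hF3 i P hP)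
    · intro j h1 h2 P hP
      obtain ⟨i, hi, he⟩ := key j h1 h2.le
      obtain ⟨i', hi', he'⟩ := key (j + 1) (by omega) h2
      simp only [he, he'] at hP ⊢
      exact hF1 i i' (by rintro rfl; omega) P hP
  have hdim : S.dim = d := by
    zify
    rw [hd, LadderCor.Region.dim, hSn]
    push_cast
    rw [Finset.sum_congr rfl (g := fun j => ((A : ℤ) + B + 3) - ((u j : ℤ) + v j))]
    · rw [Finset.sum_sub_distrib, Finset.sum_const, Nat.card_Icc, nsmul_eq_mul]
      push_cast
      ring
    · intro j hj
      rw [Finset.mem_Icc] at hj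
      have := hu_range j hj.1 hj.2
      have := hv_range j hj.1 hj.2
      rw [hSc, hSb, hSA]
      omega
  have ht' : ∀ j, 1 ≤ j → j ≤ S.n →
      (∃ g, S.Adm j g ∧ (S.turns j g).card = (t (n - j + 1)).toNat) ∧
      (∀ g, S.Adm j g → (S.turns j g).card ≤ (t (n - j + 1)).toNat) ∧
      0 ≤ t (n - j + 1) := by
    intro j h1 h2
    rw [hSn] at h2
    have h := ht (n - j + 1) (by omega) (by omega)
    rw [LadderCor.Region.isGreatest_adm hSA hSn hSc hSb hU hD (by omega) (by omega),
      show n - (n - j + 1) + 1 = j by omega] at h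
    obtain ⟨⟨g, hg, hgt⟩, hub⟩ := h
    refine ⟨⟨g, hg, by omega⟩, fun g' hg' => ?_, by omega⟩
    have := hub ⟨g', hg', rfl⟩
    omega
  refine ⟨S.numer, LadderCor.Region.eval_numer h0, ?_, ?_⟩
  · rw [← hdim, LadderCor.hilbert_faces hSn hSL hSc hSb hu_top K hΛ hu_mono hv_mono h0,
      LadderCor.Region.sum_faces h0, LadderCor.Region.numer, ← Polynomial.coeToPowerSeries.ringHom_apply, map_sum]
    simp
  · rw [LadderCor.Region.natDegree_numer h0 fun j h1 h2 => ⟨(ht' j h1 h2).1, (ht' j h1 h2).2.1⟩]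
    have hsum : ((∑ j ∈ Finset.Icc 1 S.n, (t (n - j + 1)).toNat : ℕ) : ℤ) =
        ∑ i ∈ Finset.Icc 1 n, t i := by
      push_cast
      rw [hSn]
      refine Finset.sum_nbij' (fun j => n - j + 1) (fun j => n - j + 1) ?_ ?_ ?_ ?_ ?_
      · intro j hj; rw [Finset.mem_Icc] at hj ⊢; omega
      · intro j hj; rw [Finset.mem_Icc] at hj ⊢; omega
      · intro j hj; rw [Finset.mem_Icc] at hj; omega
      · intro j hj; rw [Finset.mem_Icc] at hj; omega
      · intro j hj
        rw [Finset.mem_Icc] at hj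
        have := (ht' j hj.1 (by omega)).2.2
        omega
    rw [hsum, hd]
    simp only [Finset.sum_add_distrib]
    ring
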